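/- arXiv:2002.11087 — 3 statements merged into one kernel-verified Lean document; each statement's English description precedes it below -/
import Mathlib

section
/- Let q be a primitive third root of unity and B = k⟨x_1,x_2⟩/⟨(ad_c x_1)^4 x_2, (ad_c x_2)^2 x_1⟩ with braiding matrix q_11 = q, q_22 = 1, q_12 q_21 = 1. Then B is linearly spanned by the monomials x_2^{n_1} x_{12}^{n_2} x_{11122}^{n_3} x_{112}^{n_4} x_{1112}^{n_5} x_1^{n_6} with n_i ≥ 0, where x_{12} = (ad_c x_1)x_2, x_{112} = (ad_c x_1)^2 x_2, x_{1112} = (ad_c x_1)^3 x_2, and x_{11122} = [x_{112}, x_{12}]_c. -/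
noncomputable section

namespace Stmt6

variable {k : Type*} [Field k]

/-- The bicharacter on `ℤ²` extending a braiding matrix `Q`. -/
def qb (Q : Fin 2 → Fin 2 → k) (α β : Fin 2 → ℤ) : k :=
  ∏ a, ∏ b, Q a b ^ (α a * β b)

/-- Degree of the generator `x_a`. -/
def ee (a : Fin 2) : Fin 2 → ℤ := Pi.single a 1

/-- Braided commutator of two homogeneous elements carried with their degrees. -/
def brk (Q : Fin 2 → Fin 2 → k) (p r : FreeAlgebra k (Fin 2) × (Fin 2 → ℤ)) :
    FreeAlgebra k (Fin 2) × (Fin 2 → ℤ) :=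
  (p.1 * r.1 - qb Q p.2 r.2 • (r.1 * p.1), p.2 + r.2)

/-- The generator `x_a` together with its degree. -/
def gen (a : Fin 2) : FreeAlgebra k (Fin 2) × (Fin 2 → ℤ) :=
  (FreeAlgebra.ι k a, ee a)

end Stmt6

open Stmt6

/-- If every element of `C` can be moved past `g` modulo `adjoin C`, then `adjoin (insert g C)`
is spanned by the products of a power of `g` with an element of `adjoin C`. -/
theorem adjoin_insert_le_mul {k A : Type*} [CommRing k] [Ring A] [Algebra k A] (g : A) (C : Set A)
    (h : ∀ c ∈ C, ∃ d ∈ Algebra.adjoin k C, ∃ e ∈ Algebra.adjoin k C, c * g = g * d + e) :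
    Subalgebra.toSubmodule (Algebra.adjoin k (insert g C)) ≤
      Submodule.span k (Set.range fun n : ℕ => g ^ n) *
        Subalgebra.toSubmodule (Algebra.adjoin k C) := by
  set D := Algebra.adjoin k C with hD
  set P := Submodule.span k (Set.range fun n : ℕ => g ^ n)
  have pow_mem (n : ℕ) : g ^ n ∈ P := Submodule.subset_span ⟨n, rfl⟩
  have move : ∀ c ∈ D, ∃ d ∈ D, ∃ e ∈ D, c * g = g * d + e := by
    intro c hc
    induction hc using Algebra.adjoin_induction with
    | mem c hc => exact h c hc
    | algebraMap r =>
      exact ⟨algebraMap k A r, D.algebraMap_mem r, 0, D.zero_mem, by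
        rw [add_zero, Algebra.commutes]⟩
    | add a b _ _ iha ihb =>
      obtain ⟨d, hd, e, he, h1⟩ := iha
      obtain ⟨d', hd', e', he', h2⟩ := ihb
      exact ⟨d + d', D.add_mem hd hd', e + e', D.add_mem he he', by
        rw [add_mul, h1, h2, mul_add]; abel⟩
    | mul a b ha _ iha ihb =>
      obtain ⟨d, hd, e, he, h1⟩ := iha
      obtain ⟨d', hd', e', he', h2⟩ := ihb
      exact ⟨d * d', D.mul_mem hd hd', e * d' + a * e',
        D.add_mem (D.mul_mem he hd') (D.mul_mem ha he'), by
        rw [mul_assoc, h2, mul_add, ← mul_assoc, h1]; noncomm_ring⟩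
  have gP : ∀ m ∈ P * Subalgebra.toSubmodule D, g * m ∈ P * Subalgebra.toSubmodule D := by
    intro m hm
    induction hm using Submodule.mul_induction_on' with
    | mem_mul_mem p hp d hd =>
      rw [← mul_assoc]
      refine Submodule.mul_mem_mul ?_ hd
      induction hp using Submodule.span_induction with
      | mem p hp =>
        obtain ⟨n, rfl⟩ := hp
        simpa only [pow_succ'] using pow_mem (n + 1)
      | zero => simp
      | add a b _ _ ha hb => rw [mul_add]; exact P.add_mem ha hb
      | smul r a _ ha => rw [mul_smul_comm]; exact P.smul_mem r ha
    | add a _ b _ ha hb => rw [mul_add]; exact Submodule.add_mem _ ha hb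
  have powD (n : ℕ) : ∀ c ∈ D, c * g ^ n ∈ P * Subalgebra.toSubmodule D := by
    have key (c : A) (hc : c ∈ D) (n : ℕ) :
        ∀ d ∈ D, c * g ^ n * d ∈ P * Subalgebra.toSubmodule D := by
      induction n generalizing c with
      | zero =>
        intro d hd
        rw [pow_zero, mul_one]
        simpa using Submodule.mul_mem_mul (pow_mem 0)
          (show c * d ∈ Subalgebra.toSubmodule D from D.mul_mem hc hd)
      | succ n ih =>
        intro d hd
        obtain ⟨c', hc', e, he, hce⟩ := move c hc
        have : c * g ^ (n + 1) * d = g * (c' * g ^ n * d) + e * g ^ n * d := by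
          rw [pow_succ', ← mul_assoc c, hce]; noncomm_ring
        rw [this]
        exact Submodule.add_mem _ (gP _ (ih c' hc' d hd)) (ih e he d hd)
    intro c hc
    simpa using key c hc n 1 D.one_mem
  have DP : ∀ c ∈ D, ∀ m ∈ P * Subalgebra.toSubmodule D, c * m ∈ P * Subalgebra.toSubmodule D := by
    intro c hc m hm
    induction hm using Submodule.mul_induction_on' with
    | mem_mul_mem p hp d hd =>
      rw [← mul_assoc]
      have hcp : c * p ∈ P * Subalgebra.toSubmodule D := by
        induction hp using Submodule.span_induction with
        | mem p hp => obtain ⟨n, rfl⟩ := hp; exact powD n c hc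
        | zero => simp
        | add a b _ _ ha hb => rw [mul_add]; exact Submodule.add_mem _ ha hb
        | smul r a _ ha => rw [mul_smul_comm]; exact Submodule.smul_mem _ r ha
      have := Submodule.mul_mem_mul hcp hd
      rwa [mul_assoc P, (Subalgebra.isIdempotentElem_toSubmodule D).eq] at this
    | add a _ b _ ha hb => rw [mul_add]; exact Submodule.add_mem _ ha hb
  have one_mem : (1 : A) ∈ P * Subalgebra.toSubmodule D := by
    simpa using Submodule.mul_mem_mul (pow_mem 0) D.one_mem
  have all : ∀ b ∈ Algebra.adjoin k (insert g C),
      ∀ m ∈ P * Subalgebra.toSubmodule D, b * m ∈ P * Subalgebra.toSubmodule D := by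
    intro b hb
    induction hb using Algebra.adjoin_induction with
    | mem b hb =>
      rcases hb with rfl | hb
      · exact gP
      · exact DP b (Algebra.subset_adjoin hb)
    | algebraMap r =>
      intro m hm
      rw [← Algebra.smul_def]
      exact Submodule.smul_mem _ r hm
    | add a b _ _ ha hb =>
      intro m hm
      rw [add_mul]
      exact Submodule.add_mem _ (ha m hm) (hb m hm)
    | mul a b _ _ ha hb =>
      intro m hm
      rw [mul_assoc]
      exact ha _ (hb m hm)
  intro b hb
  simpa using all b hb 1 one_mem

/-- The commutation relations between the root vectors that follow from the two quantum Serre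
relations, for elements `x, y` of an arbitrary algebra. -/
theorem rootVector_relations {k A : Type*} [Field k] [CharZero k] [Ring A] [Algebra k A]
    (q a : k) (hq : q ^ 2 + q + 1 = 0) (ha : a ≠ 0) (x y z1 z2 z3 w : A)
    (hxy : x * y = z1 + a • (y * x)) (hx1 : x * z1 = z2 + (q * a) • (z1 * x))
    (hx2 : x * z2 = z3 + (q ^ 2 * a) • (z2 * x)) (hx3 : x * z3 = a • (z3 * x))
    (h21 : z2 * z1 = w + (q ^ 2 * a) • (z1 * z2)) (h1y : z1 * y = a • (y * z1)) :
    x * w = a ^ 2 • (w * x) ∧ z2 * y = a ^ 2 • (y * z2) + (a * (1 - q)) • (z1 * z1) ∧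
      z3 * y = a ^ 3 • (y * z3) + (2 * a) • w ∧
      w * y = a ^ 3 • (y * w) + (3 * a ^ 2) • (z1 * (z1 * z1)) ∧
      z3 * z1 = a ^ 2 • (z1 * z3) ∧ w * z1 = a • (z1 * w) ∧ z2 * w = a • (w * z2) ∧
      z3 * w = a ^ 3 • (w * z3) ∧ z3 * z2 = a • (z2 * z3) := by
  have assoc {r s v : A} (h : r * s = v) (t : A) : r * (s * t) = v * t := by rw [← mul_assoc, h]
  have rxy := assoc hxy
  have rx1 := assoc hx1
  have rx2 := assoc hx2
  have rx3 := assoc hx3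
  have r21 := assoc h21
  have r1y := assoc h1y
  have h2y : z2 * y = a ^ 2 • (y * z2) + (a * (1 - q)) • (z1 * z1) := by
    have h := congrArg (x * ·) h1y
    simp only [mul_add, add_mul, mul_smul_comm, smul_mul_assoc, smul_add, mul_assoc,
      rxy, rx1, hx1, hxy] at h
    simp only [smul_mul_assoc, mul_assoc, r1y] at h
    linear_combination (norm := (match_scalars <;> clear * - hq ha <;> grind)) (1 : k) • h
  have h3y : z3 * y = a ^ 3 • (y * z3) + (2 * a) • w := by
    have h := congrArg (x * ·) h2y
    simp only [mul_add, add_mul, mul_smul_comm, smul_mul_assoc, smul_add, mul_assoc,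
      rxy, rx1, rx2, hx1, hx2, hxy] at h
    simp only [smul_mul_assoc, add_mul, smul_add, mul_assoc, assoc h2y, h21] at h
    linear_combination (norm := (match_scalars <;> clear * - hq ha <;> grind)) (1 : k) • h
  have hw : w = z2 * z1 - (q ^ 2 * a) • (z1 * z2) := by rw [h21]; abel
  have hxw' : x * w = z3 * z1 - a ^ 2 • (z1 * z3) + a ^ 2 • (w * x) := by
    rw [hw]
    simp only [mul_sub, sub_mul, mul_add, add_mul, mul_smul_comm, smul_mul_assoc, smul_add,
      mul_assoc, rx1, rx2, hx1, hx2]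
    match_scalars <;> clear * - hq ha <;> grind
  have h31 : z3 * z1 = a ^ 2 • (z1 * z3) := by
    have h := congrArg (x * ·) h3y
    simp only [mul_add, add_mul, mul_smul_comm, smul_mul_assoc, smul_add, smul_sub, mul_assoc,
      rxy, rx3, hx3, hxy, hxw'] at h
    simp only [smul_mul_assoc, add_mul, smul_add, mul_assoc, assoc h3y] at h
    linear_combination (norm := (match_scalars <;> clear * - hq ha <;> grind)) (-a⁻¹) • h
  have hxw : x * w = a ^ 2 • (w * x) := by rw [hxw', h31, sub_self, zero_add]
  have rxw := assoc hxw
  have h32 : z3 * z2 = a • (z2 * z3) := by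
    have h := congrArg (x * ·) h31
    simp only [mul_add, add_mul, mul_smul_comm, smul_mul_assoc, smul_add, mul_assoc,
      rx1, rx3, hx1, hx3] at h
    simp only [smul_mul_assoc, mul_assoc, assoc h31] at h
    linear_combination (norm := (match_scalars <;> clear * - hq ha <;> grind)) a⁻¹ • h
  have h3w : z3 * w = a ^ 3 • (w * z3) := by
    rw [hw]
    simp only [mul_sub, sub_mul, mul_smul_comm, smul_mul_assoc, smul_sub, mul_assoc,
      assoc h31, assoc h32, h31, h32]
    match_scalars <;> clear * - hq ha <;> grind
  have hwy : w * y = a ^ 3 • (y * w) + (3 * a ^ 2) • (z1 * (z1 * z1)) := by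
    rw [hw]
    simp only [mul_sub, sub_mul, mul_add, add_mul, mul_smul_comm, smul_mul_assoc, smul_sub,
      smul_add, mul_assoc, r1y, assoc h2y, h1y, h2y]
    match_scalars <;> clear * - hq ha <;> grind
  have hw1 : w * z1 = a • (z1 * w) := by
    have h := congrArg (x * ·) hwy
    simp only [mul_add, add_mul, mul_smul_comm, smul_mul_assoc, smul_add, mul_assoc,
      rxy, rxw, rx1, hx1, hxy, hxw, r21, h21] at h
    simp only [smul_mul_assoc, add_mul, smul_add, mul_assoc, assoc hwy] at h
    linear_combination (norm := (match_scalars <;> clear * - hq ha <;> grind)) (-(2 * a ^ 2)⁻¹) • h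
  have h2w : z2 * w = a • (w * z2) := by
    have h := congrArg (x * ·) hw1
    simp only [mul_add, add_mul, mul_smul_comm, smul_mul_assoc, smul_add, mul_assoc,
      rx1, rxw, hx1, hxw, assoc hw1] at h
    linear_combination (norm := (match_scalars <;> clear * - hq ha <;> grind)) (-a⁻¹) • h
  exact ⟨hxw, h2y, h3y, hwy, h31, hw1, h2w, h3w, h32⟩

/-- The ordered monomials in the root vectors span the subalgebra they generate. -/
theorem adjoin_le_span_ordered {k A : Type*} [Field k] [CharZero k] [Ring A] [Algebra k A]
    (q a : k) (hq : q ^ 2 + q + 1 = 0) (ha : a ≠ 0) (x y z1 z2 z3 w : A)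
    (hxy : x * y = z1 + a • (y * x)) (hx1 : x * z1 = z2 + (q * a) • (z1 * x))
    (hx2 : x * z2 = z3 + (q ^ 2 * a) • (z2 * x)) (hx3 : x * z3 = a • (z3 * x))
    (h21 : z2 * z1 = w + (q ^ 2 * a) • (z1 * z2)) (h1y : z1 * y = a • (y * z1)) :
    Subalgebra.toSubmodule (Algebra.adjoin k {y, z1, w, z2, z3, x}) ≤
      Submodule.span k (Set.range fun n : Fin 6 → ℕ =>
        y ^ n 0 * z1 ^ n 1 * w ^ n 2 * z2 ^ n 3 * z3 ^ n 4 * x ^ n 5) := by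
  obtain ⟨hxw, h2y, h3y, hwy, h31, hw1, h2w, h3w, h32⟩ :=
    rootVector_relations q a hq ha x y z1 z2 z3 w hxy hx1 hx2 hx3 h21 h1y
  have straighten {C : Set A} {c d e g : A} {r : k} (h : c * g = r • (g * d) + e)
      (hd : d ∈ Algebra.adjoin k C) (he : e ∈ Algebra.adjoin k C) :
      ∃ d ∈ Algebra.adjoin k C, ∃ e ∈ Algebra.adjoin k C, c * g = g * d + e :=
    ⟨r • d, Subalgebra.smul_mem _ hd r, e, he, by rw [h, mul_smul_comm]⟩
  have straighten' {C : Set A} {c g : A} {r : k} (h : c * g = r • (g * c)) (hc : c ∈ C) :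
      ∃ d ∈ Algebra.adjoin k C, ∃ e ∈ Algebra.adjoin k C, c * g = g * d + e :=
    straighten (h.trans (add_zero _).symm) (Algebra.subset_adjoin hc) (Subalgebra.zero_mem _)
  have mem {C : Set A} {c : A} (hc : c ∈ C) : c ∈ Algebra.adjoin k C := Algebra.subset_adjoin hc
  have sx : Subalgebra.toSubmodule (Algebra.adjoin k {x}) ≤
      Submodule.span k (Set.range fun n : ℕ => x ^ n) := by
    rw [Algebra.adjoin_eq_span, ← Submonoid.powers_eq_closure]
    rfl
  have s3 := adjoin_insert_le_mul (k := k) z3 {x} (by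
    rintro c rfl
    exact straighten' hx3 rfl)
  have s2 := adjoin_insert_le_mul (k := k) z2 {z3, x} (by
    rintro c (rfl | rfl)
    · exact straighten' h32 (by simp)
    · exact straighten (hx2.trans (add_comm _ _)) (mem (by simp)) (mem (by simp)))
  have sw := adjoin_insert_le_mul (k := k) w {z2, z3, x} (by
    rintro c (rfl | rfl | rfl)
    · exact straighten' h2w (by simp)
    · exact straighten' h3w (by simp)
    · exact straighten' hxw (by simp))
  have s1 := adjoin_insert_le_mul (k := k) z1 {w, z2, z3, x} (by
    rintro c (rfl | rfl | rfl | rfl)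
    · exact straighten' hw1 (by simp)
    · exact straighten (h21.trans (add_comm _ _)) (mem (by simp)) (mem (by simp))
    · exact straighten' h31 (by simp)
    · exact straighten (hx1.trans (add_comm _ _)) (mem (by simp)) (mem (by simp)))
  have sy := adjoin_insert_le_mul (k := k) y {z1, w, z2, z3, x} (by
    have m1 : z1 ∈ Algebra.adjoin k {z1, w, z2, z3, x} := mem (by simp)
    rintro c (rfl | rfl | rfl | rfl | rfl)
    · exact straighten' h1y (by simp)
    · exact straighten hwy (mem (by simp))
        (Subalgebra.smul_mem _ (mul_mem m1 (mul_mem m1 m1)) _)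
    · exact straighten h2y (mem (by simp)) (Subalgebra.smul_mem _ (mul_mem m1 m1) _)
    · exact straighten h3y (mem (by simp)) (Subalgebra.smul_mem _ (mem (by simp)) _)
    · exact straighten (hxy.trans (add_comm _ _)) (mem (by simp)) (mem (by simp)))
  refine (sy.trans (mul_le_mul_right (s1.trans (mul_le_mul_right (sw.trans (mul_le_mul_right
    (s2.trans (mul_le_mul_right (s3.trans (mul_le_mul_right sx _)) _)) _)) _)) _)).trans ?_
  simp only [Submodule.span_mul_span]
  refine Submodule.span_mono ?_
  rintro _ ⟨_, ⟨n0, rfl⟩, _, ⟨_, ⟨n1, rfl⟩, _, ⟨_, ⟨n2, rfl⟩, _, ⟨_, ⟨n3, rfl⟩, _,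
    ⟨_, ⟨n4, rfl⟩, _, ⟨n5, rfl⟩, rfl⟩, rfl⟩, rfl⟩, rfl⟩, rfl⟩
  exact ⟨![n0, n1, n2, n3, n4, n5], by simp [mul_assoc]⟩

/-- Let `q` be a primitive third root of unity and
`B = k⟨x_1,x_2⟩/⟨(ad_c x_1)^4 x_2, (ad_c x_2)^2 x_1⟩` with braiding matrix
`q_11 = q, q_22 = 1, q_12 q_21 = 1` (`q_21 = q_12⁻¹`).  Then `B` is linearly spanned
by the monomials `x_2^{n_1} x_12^{n_2} x_11122^{n_3} x_112^{n_4} x_1112^{n_5} x_1^{n_6}`,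
where `x_12 = (ad_c x_1)x_2`, `x_112 = (ad_c x_1)^2 x_2`, `x_1112 = (ad_c x_1)^3 x_2`
and `x_11122 = [x_112, x_12]_c`. -/
theorem stmt6 {k : Type*} [Field k] [CharZero k]
    (q q12 : k) (hq3 : q ^ 3 = 1) (hq1 : q ≠ 1) (hq12 : q12 ≠ 0)
    (Q : Fin 2 → Fin 2 → k) (hQ : Q = ![![q, q12], ![q12⁻¹, 1]])
    (rel : FreeAlgebra k (Fin 2) → FreeAlgebra k (Fin 2) → Prop)
    (hrel : rel = fun a b => b = 0 ∧
      (a = (brk Q (gen 0) (brk Q (gen 0) (brk Q (gen 0) (brk Q (gen 0) (gen 1))))).1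
        ∨ a = (brk Q (gen 1) (brk Q (gen 1) (gen 0))).1))
    (π : FreeAlgebra k (Fin 2) →ₐ[k] RingQuot rel) (hπ : π = RingQuot.mkAlgHom k rel) :
    ∀ b : RingQuot rel,
      b ∈ Submodule.span k (Set.range (fun n : Fin 6 → ℕ =>
        π (FreeAlgebra.ι k 1) ^ n 0
          * π (brk Q (gen 0) (gen 1)).1 ^ n 1
          * π (brk Q (brk Q (gen 0) (brk Q (gen 0) (gen 1))) (brk Q (gen 0) (gen 1))).1 ^ n 2
          * π (brk Q (gen 0) (brk Q (gen 0) (gen 1))).1 ^ n 3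
          * π (brk Q (gen 0) (brk Q (gen 0) (brk Q (gen 0) (gen 1)))).1 ^ n 4
          * π (FreeAlgebra.ι k 0) ^ n 5)) := by
  have hq : q ^ 2 + q + 1 = 0 := by
    have h : (q - 1) * (q ^ 2 + q + 1) = 0 := by linear_combination hq3
    exact (mul_eq_zero.1 h).resolve_left (sub_ne_zero.2 hq1)
  have serre0 :
      π (brk Q (gen 0) (brk Q (gen 0) (brk Q (gen 0) (brk Q (gen 0) (gen 1))))).1 = 0 := by
    rw [hπ, RingQuot.mkAlgHom_rel k (s := rel) (y := 0) (by rw [hrel]; exact ⟨rfl, Or.inl rfl⟩),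
      map_zero]
  have serre1 : π (brk Q (gen 1) (brk Q (gen 1) (gen 0))).1 = 0 := by
    rw [hπ, RingQuot.mkAlgHom_rel k (s := rel) (y := 0) (by rw [hrel]; exact ⟨rfl, Or.inr rfl⟩),
      map_zero]
  have fst_brk (p r) : π (brk Q p r).1 = π p.1 * π r.1 - qb Q p.2 r.2 • (π r.1 * π p.1) := by
    simp [brk]
  have snd_brk (p r) : (brk Q p r).2 = p.2 + r.2 := rfl
  have gen_fst (a : Fin 2) : (gen a : FreeAlgebra k (Fin 2) × _).1 = FreeAlgebra.ι k a := rfl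
  have gen_snd (a : Fin 2) : (gen a : FreeAlgebra k (Fin 2) × _).2 = ee a := rfl
  have c1 : qb Q (ee 0) (ee 1) = q12 := by simp [hQ, qb, ee, Fin.prod_univ_two]
  have c2 : qb Q (ee 0) (ee 0 + ee 1) = q * q12 := by simp [hQ, qb, ee, Fin.prod_univ_two]
  have c3 : qb Q (ee 0) (ee 0 + (ee 0 + ee 1)) = q ^ 2 * q12 := by
    simp [hQ, qb, ee, Fin.prod_univ_two, pow_two]
  have c4 : qb Q (ee 0) (ee 0 + (ee 0 + (ee 0 + ee 1))) = q12 := by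
    simp [hQ, qb, ee, Fin.prod_univ_two]
    linear_combination hq3 * q12
  have c5 : qb Q (ee 0 + (ee 0 + ee 1)) (ee 0 + ee 1) = q ^ 2 * q12 := by
    simp [hQ, qb, ee, Fin.prod_univ_two, pow_two]
    field_simp
  have c6 : qb Q (ee 1) (ee 0) = q12⁻¹ := by simp [hQ, qb, ee, Fin.prod_univ_two]
  have c7 : qb Q (ee 1) (ee 1 + ee 0) = q12⁻¹ := by simp [hQ, qb, ee, Fin.prod_univ_two]
  have e1 := fst_brk (gen 0) (gen 1)
  have e2 := fst_brk (gen 0) (brk Q (gen 0) (gen 1))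
  have e3 := fst_brk (gen 0) (brk Q (gen 0) (brk Q (gen 0) (gen 1)))
  have e4 := fst_brk (gen 0) (brk Q (gen 0) (brk Q (gen 0) (brk Q (gen 0) (gen 1))))
  have e5 := fst_brk (brk Q (gen 0) (brk Q (gen 0) (gen 1))) (brk Q (gen 0) (gen 1))
  have e6 := fst_brk (gen 1) (brk Q (gen 1) (gen 0))
  rw [serre0] at e4
  rw [serre1, fst_brk] at e6
  simp only [snd_brk, gen_fst, gen_snd, c1, c2, c3, c4, c5, c6, c7] at e1 e2 e3 e4 e5 e6
  have hxy := eq_add_of_sub_eq e1.symm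
  have h1y : π (brk Q (gen 0) (gen 1)).1 * π (FreeAlgebra.ι k 1) =
      q12 • (π (FreeAlgebra.ι k 1) * π (brk Q (gen 0) (gen 1)).1) := by
    rw [e1]
    simp only [mul_sub, sub_mul, mul_smul_comm, smul_mul_assoc, smul_sub, mul_assoc] at e6 ⊢
    linear_combination (norm := (match_scalars <;> field_simp <;> ring)) (-q12 ^ 2) • e6
  have key := adjoin_le_span_ordered q q12 hq hq12 _ _ _ _ _ _ hxy (eq_add_of_sub_eq e2.symm)
    (eq_add_of_sub_eq e3.symm) (sub_eq_zero.1 e4.symm) (eq_add_of_sub_eq e5.symm) h1y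
  intro b
  refine key ?_
  obtain ⟨p, rfl⟩ : ∃ p, π p = b := by
    rw [hπ]
    exact RingQuot.mkAlgHom_surjective k rel b
  rw [Subalgebra.mem_toSubmodule]
  induction p using FreeAlgebra.induction with
  | grade0 r => rw [AlgHom.commutes]; exact Subalgebra.algebraMap_mem _ r
  | grade1 i => fin_cases i <;> exact Algebra.subset_adjoin (by simp)
  | mul a b ha hb => rw [map_mul]; exact mul_mem ha hb
  | add a b ha hb => rw [map_add]; exact add_mem ha hb

end
end

section
/- Let q be a primitive third root of unity and B as above (type G_2 q-Serre relations with q of order 3). Then GK-dim B = 6. -/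
noncomputable section

namespace Stmt7

open scoped ENNReal

/-- The Gelfand–Kirillov dimension of a `k`-algebra `A`:
`GKdim = sup_S limsup_n log_n dim_k ((k + span S)^n)`, the supremum running over all
finite subsets `S` of `A`. -/
def GKdim (k A : Type*) [Field k] [Ring A] [Algebra k A] : ℝ≥0∞ :=
  ⨆ S : Finset A,
    Filter.limsup
      (fun n : ℕ => ENNReal.ofReal (Real.logb n
        (Module.finrank k ((Submodule.span k (insert (1 : A) (S : Set A))) ^ n : Submodule k A))))
      Filter.atTop

variable {k : Type*} [Field k]

/-- The bicharacter on `ℤ²` extending a braiding matrix `Q`. -/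
def qb (Q : Fin 2 → Fin 2 → k) (α β : Fin 2 → ℤ) : k :=
  ∏ a, ∏ b, Q a b ^ (α a * β b)

/-- Degree of the generator `x_a`. -/
def ee (a : Fin 2) : Fin 2 → ℤ := Pi.single a 1

/-- Braided commutator of two homogeneous elements carried with their degrees. -/
def brk (Q : Fin 2 → Fin 2 → k) (p r : FreeAlgebra k (Fin 2) × (Fin 2 → ℤ)) :
    FreeAlgebra k (Fin 2) × (Fin 2 → ℤ) :=
  (p.1 * r.1 - qb Q p.2 r.2 • (r.1 * p.1), p.2 + r.2)

/-- The generator `x_a` together with its degree. -/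
def gen (a : Fin 2) : FreeAlgebra k (Fin 2) × (Fin 2 → ℤ) :=
  (FreeAlgebra.ι k a, ee a)

end Stmt7

open Stmt7

namespace Stmt7

open scoped ENNReal

variable {k : Type*} [Field k]

/-- The relations between the generators `a = x_1`, `b0 = x_2`, the iterated braided commutators
`b1, b2, b3` of `x_1` with `x_2`, and the root vector `b4` of degree `(3, 2)`. -/
structure RootRel {A : Type*} [Ring A] [Algebra k A] (q p : k) (a b0 b1 b2 b3 b4 : A) : Prop where
  a_b0 : a * b0 = b1 + p • (b0 * a)
  a_b1 : a * b1 = b2 + (q * p) • (b1 * a)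
  a_b2 : a * b2 = b3 + (q ^ 2 * p) • (b2 * a)
  a_b3 : a * b3 = p • (b3 * a)
  b1_b0 : b1 * b0 = p • (b0 * b1)
  b3_b0 : b3 * b0 = p ^ 3 • (b0 * b3) + (2 * p) • b4

namespace RootRel

variable {A : Type*} [Ring A] [Algebra k A] {q p : k} {a b0 b1 b2 b3 b4 : A}

theorem skew_leibniz {x x' y y' : A} {c d : k}
    (hx : a * x = x' + c • (x * a)) (hy : a * y = y' + d • (y * a)) :
    a * (x * y) = x' * y + c • (x * y') + (c * d) • (x * y * a) := by
  rw [← mul_assoc, hx, add_mul, smul_mul_assoc, mul_assoc x, hy]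
  simp only [mul_add, smul_add, mul_smul_comm, smul_smul, mul_assoc, add_assoc]

theorem a_b3' (h : RootRel q p a b0 b1 b2 b3 b4) : a * b3 = 0 + p • (b3 * a) := by
  rw [h.a_b3, zero_add]

theorem b2_b0 (h : RootRel q p a b0 b1 b2 b3 b4) :
    b2 * b0 = p ^ 2 • (b0 * b2) + ((1 - q) * p) • (b1 * b1) := by
  have e : a * (b1 * b0) = p • (a * (b0 * b1)) := by rw [h.b1_b0, mul_smul_comm]
  rw [skew_leibniz h.a_b0 h.a_b1, skew_leibniz h.a_b1 h.a_b0, h.b1_b0, smul_mul_assoc] at e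
  linear_combination (norm := module) e

variable (hq : q ^ 2 + q + 1 = 0)
include hq

theorem b2_b1 [CharZero k] (hp : p ≠ 0) (h : RootRel q p a b0 b1 b2 b3 b4) :
    b2 * b1 = (q ^ 2 * p) • (b1 * b2) + b4 := by
  have e : a * (b2 * b0) = p ^ 2 • (a * (b0 * b2)) + ((1 - q) * p) • (a * (b1 * b1)) := by
    rw [h.b2_b0, mul_add, mul_smul_comm, mul_smul_comm]
  rw [skew_leibniz h.a_b2 h.a_b0, skew_leibniz h.a_b0 h.a_b2, skew_leibniz h.a_b1 h.a_b1,
    h.b2_b0, h.b3_b0, add_mul, smul_mul_assoc, smul_mul_assoc] at e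
  apply smul_right_injective A (mul_ne_zero two_ne_zero hp : 2 * p ≠ 0)
  simp only
  linear_combination (norm := skip) - e
  match_scalars <;> grind

theorem b3_b1 [CharZero k] (hp : p ≠ 0) (h : RootRel q p a b0 b1 b2 b3 b4) :
    b3 * b1 = p ^ 2 • (b1 * b3) := by
  have e0 : b3 * b0 = p ^ 3 • (b0 * b3) + (2 * p) • (b2 * b1)
      - (2 * q ^ 2 * p ^ 2) • (b1 * b2) := by
    rw [h.b3_b0, h.b2_b1 hq hp]; module
  have e : a * (b3 * b0) = p ^ 3 • (a * (b0 * b3)) + (2 * p) • (a * (b2 * b1))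
      - (2 * q ^ 2 * p ^ 2) • (a * (b1 * b2)) := by
    rw [e0, mul_sub, mul_add, mul_smul_comm, mul_smul_comm, mul_smul_comm]
  rw [skew_leibniz h.a_b3' h.a_b0, skew_leibniz h.a_b0 h.a_b3', skew_leibniz h.a_b2 h.a_b1,
    skew_leibniz h.a_b1 h.a_b2, e0, sub_mul, add_mul, smul_mul_assoc, smul_mul_assoc,
    smul_mul_assoc] at e
  apply smul_right_injective A hp
  simp only
  linear_combination (norm := skip) - e
  simp only [zero_mul, mul_zero]
  match_scalars <;> grind

theorem b3_b2 [CharZero k] (hp : p ≠ 0) (h : RootRel q p a b0 b1 b2 b3 b4) :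
    b3 * b2 = p • (b2 * b3) := by
  have e : a * (b3 * b1) = p ^ 2 • (a * (b1 * b3)) := by
    rw [h.b3_b1 hq hp, mul_smul_comm]
  rw [skew_leibniz h.a_b3' h.a_b1, skew_leibniz h.a_b1 h.a_b3', h.b3_b1 hq hp,
    smul_mul_assoc] at e
  apply smul_right_injective A hp
  simp only
  linear_combination (norm := skip) e
  simp only [zero_mul, mul_zero]
  match_scalars <;> grind

theorem a_b4 [CharZero k] (hp : p ≠ 0) (h : RootRel q p a b0 b1 b2 b3 b4) :
    a * b4 = p ^ 2 • (b4 * a) := by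
  have e : a * (b3 * b0) = p ^ 3 • (a * (b0 * b3)) + (2 * p) • (a * b4) := by
    rw [h.b3_b0, mul_add, mul_smul_comm, mul_smul_comm]
  rw [skew_leibniz h.a_b3' h.a_b0, skew_leibniz h.a_b0 h.a_b3', h.b3_b0, h.b3_b1 hq hp, add_mul,
    smul_mul_assoc, smul_mul_assoc] at e
  apply smul_right_injective A (mul_ne_zero two_ne_zero hp : 2 * p ≠ 0)
  simp only
  linear_combination (norm := skip) - e
  simp only [zero_mul, mul_zero]
  match_scalars <;> grind

theorem b4_b1 [CharZero k] (hp : p ≠ 0) (h : RootRel q p a b0 b1 b2 b3 b4) :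
    b4 * b1 = p • (b1 * b4) := by
  have e1 := congrArg (· * b1) h.b3_b0
  have e2 := congrArg (b1 * ·) h.b3_b0
  have e3 := congrArg (b3 * ·) h.b1_b0
  have e4 := congrArg (· * b0) (h.b3_b1 hq hp)
  have e5 := congrArg (· * b3) h.b1_b0
  have e6 := congrArg (b0 * ·) (h.b3_b1 hq hp)
  simp only [mul_add, add_mul, smul_mul_assoc, mul_smul_comm, mul_assoc] at e1 e2 e3 e4 e5 e6
  apply smul_right_injective A (mul_ne_zero two_ne_zero (pow_ne_zero 2 hp) : 2 * p ^ 2 ≠ 0)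
  simp only
  linear_combination (norm := module)
    - p • e1 + p ^ 2 • e2 - e3 + e4 + p ^ 5 • e5 - p ^ 4 • e6

theorem b4_b2 [CharZero k] (hp : p ≠ 0) (h : RootRel q p a b0 b1 b2 b3 b4) :
    b2 * b4 = p • (b4 * b2) := by
  have e : a * (b4 * b1) = p • (a * (b1 * b4)) := by
    rw [h.b4_b1 hq hp, mul_smul_comm]
  have ha : a * b4 = 0 + p ^ 2 • (b4 * a) := by rw [h.a_b4 hq hp, zero_add]
  rw [skew_leibniz ha h.a_b1, skew_leibniz h.a_b1 ha, h.b4_b1 hq hp, smul_mul_assoc] at e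
  apply smul_right_injective A hp
  simp only
  linear_combination (norm := skip) -e
  simp only [zero_mul, mul_zero]
  match_scalars <;> grind

end RootRel

section Spanning

variable {A : Type*} [Ring A] [Algebra k A] {q p : k} {a b0 b1 b2 b3 b4 : A}

/-- The PBW monomial with exponents `i, j, l, m, n, r`. -/
def pbw (a b0 b1 b2 b3 b4 : A) (i j l m n r : ℕ) : A :=
  b0 ^ i * (b1 ^ j * (b4 ^ l * (b2 ^ m * (b3 ^ n * a ^ r))))

variable (k) in
/-- The span of the PBW monomials of degree at most `N`. -/
def pbwSpan (a b0 b1 b2 b3 b4 : A) (N : ℕ) : Submodule k A :=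
  Submodule.span k {x | ∃ i j l m n r : ℕ, i + 2 * j + 5 * l + 3 * m + 4 * n + r ≤ N ∧
    x = pbw a b0 b1 b2 b3 b4 i j l m n r}

theorem pbw_mem_pbwSpan {i j l m n r N : ℕ} (h : i + 2 * j + 5 * l + 3 * m + 4 * n + r ≤ N) :
    pbw a b0 b1 b2 b3 b4 i j l m n r ∈ pbwSpan k a b0 b1 b2 b3 b4 N :=
  Submodule.subset_span ⟨i, j, l, m, n, r, h, rfl⟩

theorem mul_pow_of_skew {x y : A} {c : k} (h : x * y = c • (y * x)) (n : ℕ) :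
    x * y ^ n = c ^ n • (y ^ n * x) := by
  induction n with
  | zero => simp
  | succ n ih =>
    rw [pow_succ, ← mul_assoc, ih, smul_mul_assoc, mul_assoc, h, mul_smul_comm, smul_smul,
      ← pow_succ, mul_assoc]

/-- If `x y = z + c y x` and `z` skew-commutes with `y`, then `x` moves past powers of `y` at the
cost of a multiple of `y ^ (n - 1) z`. -/
theorem exists_mul_pow {x y z : A} {c d : k} (h : x * y = z + c • (y * x))
    (hz : z * y = d • (y * z)) (n : ℕ) :
    ∃ e f : k, (n = 0 → f = 0) ∧ x * y ^ n = e • (y ^ n * x) + f • (y ^ (n - 1) * z) := by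
  induction n with
  | zero => exact ⟨1, 0, by simp⟩
  | succ n ih =>
    obtain ⟨e, f, hf, ih⟩ := ih
    refine ⟨c * e, d ^ n + c * f, by simp, ?_⟩
    rw [pow_succ', ← mul_assoc, h, add_mul, mul_pow_of_skew hz, smul_mul_assoc, mul_assoc, ih]
    rcases n with _ | n
    · simp only [hf rfl, mul_smul_comm, mul_zero, zero_add, pow_zero, mul_one, zero_smul,
        add_zero, one_mul, Nat.sub_self]
      module
    · simp only [mul_add, mul_smul_comm, ← mul_assoc, ← pow_succ', Nat.add_sub_cancel]
      module

namespace RootRel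

variable (hq : q ^ 2 + q + 1 = 0) (hp : p ≠ 0) (h : RootRel q p a b0 b1 b2 b3 b4)
include hq hp h

theorem exists_a_mul_b1_pow [CharZero k] (j : ℕ) :
    ∃ c d e : k, (j = 0 → d = 0) ∧ (j < 2 → e = 0) ∧ a * b1 ^ j =
      c • (b1 ^ j * a) + d • (b1 ^ (j - 1) * b2) + e • (b1 ^ (j - 2) * b4) := by
  induction j with
  | zero => exact ⟨1, 0, 0, by simp⟩
  | succ j ih =>
    obtain ⟨c, d, e, hd, he, ih⟩ := ih
    have h21 : b2 * b1 = b4 + (q ^ 2 * p) • (b1 * b2) := by rw [h.b2_b1 hq hp, add_comm]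
    obtain ⟨s, t, ht, h2⟩ := exists_mul_pow h21 (h.b4_b1 hq hp) j
    refine ⟨q * p * c, s + q * p * d, t + q * p * e, by simp, fun hj => ?_, ?_⟩
    · rw [ht (by omega), he (by omega)]; simp
    rw [pow_succ', ← mul_assoc, h.a_b1, add_mul, h2, smul_mul_assoc, mul_assoc, ih]
    rcases j with _ | _ | j
    · simp only [ht rfl, hd rfl, he (by norm_num)]
      simp only [mul_smul_comm, mul_zero, zero_add, pow_zero, mul_one, zero_smul,
        add_zero, one_mul, Nat.sub_self]
      module
    · simp only [he (by norm_num)]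
      simp only [mul_add, mul_smul_comm, mul_zero, zero_add, pow_zero, zero_smul,
        add_zero, one_mul, pow_one, Nat.sub_self, ← mul_assoc, Nat.add_sub_cancel]
      module
    · simp only [mul_add, mul_smul_comm, ← mul_assoc, ← pow_succ', Nat.add_sub_cancel,
        show j + 1 + 1 - 2 = j by omega, show j + 1 + 1 + 1 - 2 = j + 1 by omega]
      module

theorem a_mul_pbw [CharZero k] (i j l m n r : ℕ) :
    a * pbw a b0 b1 b2 b3 b4 i j l m n r ∈
      pbwSpan k a b0 b1 b2 b3 b4 (i + 2 * j + 5 * l + 3 * m + 4 * n + r + 1) := by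
  obtain ⟨c1, d1, hd1, e1⟩ := exists_mul_pow h.a_b0 h.b1_b0 i
  obtain ⟨c2, d2, f2, hd2, hf2, e2⟩ := h.exists_a_mul_b1_pow hq hp j
  obtain ⟨c3, d3, hd3, e3⟩ := exists_mul_pow h.a_b2 (h.b3_b2 hq hp) m
  have e4 := mul_pow_of_skew (h.a_b4 hq hp) l
  have e5 := mul_pow_of_skew (h.b4_b2 hq hp) l
  have e6 := mul_pow_of_skew h.a_b3 n
  set P := pbw a b0 b1 b2 b3 b4 with hP
  have key : a * P i j l m n r =
      d1 • P (i - 1) (j + 1) l m n r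
      + (c1 * d2 * (p : k) ^ l) • P i (j - 1) l (m + 1) n r
      + (c1 * f2) • P i (j - 2) (l + 1) m n r
      + (c1 * c2 * (p ^ 2) ^ l * d3) • P i j l (m - 1) (n + 1) r
      + (c1 * c2 * (p ^ 2) ^ l * c3 * p ^ n) • P i j l m n (r + 1) := by
    simp only [hP, pbw]
    have E6 : a * (b3 ^ n * a ^ r) = p ^ n • (b3 ^ n * a ^ (r + 1)) := by
      rw [← mul_assoc, e6, smul_mul_assoc, mul_assoc, ← pow_succ']
    have E3 : a * (b2 ^ m * (b3 ^ n * a ^ r)) = (c3 * p ^ n) • (b2 ^ m * (b3 ^ n * a ^ (r + 1)))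
        + d3 • (b2 ^ (m - 1) * (b3 ^ (n + 1) * a ^ r)) := by
      rw [← mul_assoc, e3, add_mul, smul_mul_assoc, mul_assoc, E6, mul_smul_comm, smul_smul,
        smul_mul_assoc, mul_assoc, pow_succ' b3 n, mul_assoc]
    rw [← mul_assoc, e1, add_mul, smul_mul_assoc, mul_assoc (b0 ^ i), ← mul_assoc a (b1 ^ j), e2,
      add_mul, add_mul, smul_mul_assoc, smul_mul_assoc, smul_mul_assoc, mul_assoc _ a,
      ← mul_assoc a, e4, smul_mul_assoc, mul_assoc _ a, E3, mul_assoc _ b2, ← mul_assoc b2, e5]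
    simp only [mul_add, mul_smul_comm, smul_mul_assoc, mul_assoc, pow_succ' b1 j,
      pow_succ' b4 l, pow_succ' b2 m]
    module
  rw [key]
  have aux : ∀ {c : k} {i' j' l' m' n' r' : ℕ}, (c = 0 ∨ i' + 2 * j' + 5 * l' + 3 * m' + 4 * n' + r'
      ≤ i + 2 * j + 5 * l + 3 * m + 4 * n + r + 1) → c • P i' j' l' m' n' r' ∈
      pbwSpan k a b0 b1 b2 b3 b4 (i + 2 * j + 5 * l + 3 * m + 4 * n + r + 1) := by
    rintro c i' j' l' m' n' r' (rfl | hle)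
    · simp
    · exact Submodule.smul_mem _ _ (pbw_mem_pbwSpan hle)
  refine add_mem (add_mem (add_mem (add_mem (aux ?_) (aux ?_)) (aux ?_)) (aux ?_)) (aux ?_)
  · rcases Nat.eq_zero_or_pos i with hi | hi
    · exact .inl (hd1 hi)
    · right; omega
  · rcases Nat.eq_zero_or_pos j with hi | hi
    · left; simp [hd2 hi]
    · right; omega
  · rcases Nat.lt_or_ge j 2 with hi | hi
    · left; simp [hf2 hi]
    · right; omega
  · rcases Nat.eq_zero_or_pos m with hi | hi
    · left; simp [hd3 hi]
    · right; omega
  · right; omega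

theorem span_pow_le [CharZero k] (N : ℕ) :
    Submodule.span k {1, a, b0} ^ N ≤ pbwSpan k a b0 b1 b2 b3 b4 N := by
  induction N with
  | zero =>
    rw [pow_zero, Submodule.one_le]
    have := pbw_mem_pbwSpan (k := k) (a := a) (b0 := b0) (b1 := b1) (b2 := b2) (b3 := b3)
      (b4 := b4) (i := 0) (j := 0) (l := 0) (m := 0) (n := 0) (r := 0) (N := 0) (by norm_num)
    simpa [pbw] using this
  | succ N ih =>
    have mono : ∀ {M M' : ℕ}, M ≤ M' →
        pbwSpan k a b0 b1 b2 b3 b4 M ≤ pbwSpan k a b0 b1 b2 b3 b4 M' := by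
      intro M M' hM
      refine Submodule.span_mono ?_
      rintro x ⟨i, j, l, m, n, r, hle, rfl⟩
      exact ⟨i, j, l, m, n, r, hle.trans hM, rfl⟩
    rw [pow_succ']
    refine (mul_le_mul_right ih _).trans ?_
    rw [pbwSpan, Submodule.span_mul_span, Submodule.span_le]
    rintro _ ⟨x, hx, _, ⟨i, j, l, m, n, r, hle, rfl⟩, rfl⟩
    rcases hx with rfl | rfl | rfl
    · simpa using pbw_mem_pbwSpan (by omega)
    · exact mono (by omega) (h.a_mul_pbw hq hp i j l m n r)
    · have : x * pbw a x b1 b2 b3 b4 i j l m n r = pbw a x b1 b2 b3 b4 (i + 1) j l m n r := by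
        simp only [pbw, pow_succ', mul_assoc]
      simp only [this]
      exact pbw_mem_pbwSpan (by omega)

end RootRel

theorem finrank_pbwSpan_le (N : ℕ) :
    Module.Finite k (pbwSpan k a b0 b1 b2 b3 b4 N) ∧
    Module.finrank k (pbwSpan k a b0 b1 b2 b3 b4 N) ≤ (N + 1) ^ 6 := by
  classical
  let F : (Fin 6 → Fin (N + 1)) → A := fun v =>
    pbw a b0 b1 b2 b3 b4 (v 0) (v 1) (v 2) (v 3) (v 4) (v 5)
  have hle : pbwSpan k a b0 b1 b2 b3 b4 N ≤ Submodule.span k (Set.range F) := by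
    refine Submodule.span_mono ?_
    rintro x ⟨i, j, l, m, n, r, hle, rfl⟩
    refine ⟨![⟨i, by omega⟩, ⟨j, by omega⟩, ⟨l, by omega⟩, ⟨m, by omega⟩, ⟨n, by omega⟩,
      ⟨r, by omega⟩], rfl⟩
  have : Module.Finite k (Submodule.span k (Set.range F)) :=
    Module.Finite.span_of_finite k (Set.finite_range F)
  refine ⟨Submodule.finiteDimensional_of_le hle, (Submodule.finrank_mono hle).trans ?_⟩
  refine (finrank_range_le_card (R := k) F).trans ?_
  simp

end Spanning

/-- The free module on the lattice `ℤ⁶`, whose octant `ℕ⁶` indexes the PBW monomials. -/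
abbrev PBWModule (k : Type*) [Field k] : Type _ := (ℤ × ℤ × ℤ × ℤ × ℤ × ℤ) →₀ k

namespace PBWModule

/-- The basis vector of `PBWModule k` at a lattice point. -/
def vec (k : Type*) [Field k] (i j l m n r : ℤ) : PBWModule k :=
  Finsupp.single (i, j, l, m, n, r) 1

/-- The endomorphism of `PBWModule k` with prescribed values on the basis. -/
def endo (F : ℤ → ℤ → ℤ → ℤ → ℤ → ℤ → PBWModule k) : Module.End k (PBWModule k) :=
  Finsupp.linearCombination k fun v => F v.1 v.2.1 v.2.2.1 v.2.2.2.1 v.2.2.2.2.1 v.2.2.2.2.2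

@[simp]
theorem endo_vec (F : ℤ → ℤ → ℤ → ℤ → ℤ → ℤ → PBWModule k) (i j l m n r : ℤ) :
    endo F (vec k i j l m n r) = F i j l m n r := by
  simp [endo, vec]

theorem endo_ext {f g : Module.End k (PBWModule k)}
    (h : ∀ i j l m n r, f (vec k i j l m n r) = g (vec k i j l m n r)) : f = g := by
  refine Finsupp.lhom_ext' fun ⟨i, j, l, m, n, r⟩ => LinearMap.ext_ring ?_
  exact h i j l m n r

/-- The action of `x_1` on the PBW basis. -/
def opA (q : k) : Module.End k (PBWModule k) := endo fun i j l m n r =>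
  (i : k) • vec k (i - 1) (j + 1) l m n r
  + (q * (1 - q) * ((q ^ j) ^ 2 - q ^ j) / 3) • vec k i (j - 1) l (m + 1) n r
  + ((1 + q * q ^ j + (q * q ^ j) ^ 2) / 3) • vec k i (j - 1 - 1) (l + 1) m n r
  + (q ^ j * ((1 - q) * (1 - (q ^ m) ^ 2) / 3)) • vec k i j l (m - 1) (n + 1) r
  + (q ^ j * (q ^ m) ^ 2) • vec k i j l m n (r + 1)

/-- The action of `x_2` on the PBW basis, in the untwisted case. -/
def op0 : Module.End k (PBWModule k) := endo fun i j l m n r => vec k (i + 1) j l m n r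

/-- The action of the root vector of degree `(1, 1)`, in the untwisted case. -/
def op1 : Module.End k (PBWModule k) := endo fun i j l m n r => vec k i (j + 1) l m n r

/-- The action of the root vector of degree `(2, 1)`, in the untwisted case. -/
def op2 (q : k) : Module.End k (PBWModule k) := endo fun i j l m n r =>
  (i * (1 - q) : k) • vec k (i - 1) (j + 1 + 1) l m n r
  + ((q ^ j) ^ 2) • vec k i j l (m + 1) n r
  + ((1 - q) * (1 - (q ^ j) ^ 2) / 3) • vec k i (j - 1) (l + 1) m n r

/-- The action of the root vector of degree `(3, 1)`, in the untwisted case. -/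
def op3 : Module.End k (PBWModule k) := endo fun i j l m n r =>
  vec k i j l m (n + 1) r + (2 * i : k) • vec k (i - 1) j (l + 1) m n r
  + (3 * i * (i - 1) : k) • vec k (i - 1 - 1) (j + 1 + 1 + 1) l m n r

/-- The action of the root vector of degree `(3, 2)`, in the untwisted case. -/
def op4 : Module.End k (PBWModule k) := endo fun i j l m n r =>
  vec k i j (l + 1) m n r + (3 * i : k) • vec k (i - 1) (j + 1 + 1 + 1) l m n r

/-- The diagonal operator which implements the twist by the braiding parameter. -/
def opT (p : k) : Module.End k (PBWModule k) := endo fun i j l m n r =>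
  (p ^ j * (p ^ l) ^ 3 * (p ^ m) ^ 2 * (p ^ n) ^ 3 * p ^ r)⁻¹ • vec k i j l m n r

section
variable {q : k} (hq : q ^ 2 + q + 1 = 0)

theorem op1_mul_op0 : (op1 * op0 : Module.End k (PBWModule k)) = op0 * op1 := by
  refine endo_ext fun i j l m n r => ?_
  simp [op0, op1]

theorem op3_mul_op0 : (op3 * op0 : Module.End k (PBWModule k)) = op0 * op3 + (2 : k) • op4 := by
  refine endo_ext fun i j l m n r => ?_
  simp only [op0, op3, op4, Module.End.mul_apply, LinearMap.add_apply, LinearMap.smul_apply,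
    endo_vec, map_add, map_smul, sub_add_cancel, add_sub_cancel_right, Int.cast_add, Int.cast_one]
  module

theorem opA_mul_op0 : opA q * op0 = op1 + op0 * opA q := by
  refine endo_ext fun i j l m n r => ?_
  simp only [op0, op1, opA, Module.End.mul_apply, LinearMap.add_apply,
    endo_vec, map_add, map_smul, sub_add_cancel, add_sub_cancel_right, Int.cast_add, Int.cast_one]
  module

include hq

theorem inv_eq_sq : q⁻¹ = q ^ 2 := by
  have : q ≠ 0 := by rintro rfl; simp at hq
  field_simp
  grind

theorem zpow_cube (j : ℤ) : (q ^ j) ^ 3 = 1 := by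
  have : q ^ 3 = 1 := by grind
  rw [← zpow_natCast, ← zpow_mul, mul_comm, zpow_mul]
  norm_cast
  simp [this]

theorem opA_mul_op1 [CharZero k] : opA q * op1 = op2 q + q • (op1 * opA q) := by
  have hq0 : q ≠ 0 := by rintro rfl; simp at hq
  refine endo_ext fun i j l m n r => ?_
  simp only [op2, op1, opA, Module.End.mul_apply, LinearMap.add_apply, LinearMap.smul_apply,
    endo_vec, map_add, map_smul, sub_add_cancel, add_sub_cancel_right,
    zpow_add_one₀ hq0]
  have := zpow_cube hq j
  match_scalars <;> grind

theorem opA_mul_op2 [CharZero k] : opA q * op2 q = op3 + q ^ 2 • (op2 q * opA q) := by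
  have hq0 : q ≠ 0 := by rintro rfl; simp at hq
  refine endo_ext fun i j l m n r => ?_
  simp only [op2, op3, opA, Module.End.mul_apply, LinearMap.add_apply, LinearMap.smul_apply,
    endo_vec, map_add, map_smul, sub_add_cancel, add_sub_cancel_right, Int.cast_one,
    Int.cast_sub, zpow_add_one₀ hq0, zpow_sub_one₀ hq0, inv_eq_sq hq]
  have := zpow_cube hq j
  have := zpow_cube hq m
  match_scalars <;> grind

theorem opA_mul_op3 [CharZero k] : opA q * op3 = op3 * opA q := by
  have hq0 : q ≠ 0 := by rintro rfl; simp at hq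
  refine endo_ext fun i j l m n r => ?_
  simp only [op3, opA, Module.End.mul_apply,
    endo_vec, map_add, map_smul, sub_add_cancel, add_sub_cancel_right, Int.cast_one,
    Int.cast_sub, zpow_add_one₀ hq0]
  have := zpow_cube hq j
  have := zpow_cube hq m
  match_scalars <;> grind

end

theorem exists_pow_apply {f : Module.End k (PBWModule k)} {v : ℕ → PBWModule k}
    (h : ∀ n, ∃ c : k, c ≠ 0 ∧ f (v n) = c • v (n + 1)) (n : ℕ) :
    ∃ c : k, c ≠ 0 ∧ (f ^ n) (v 0) = c • v n := by
  induction n with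
  | zero => exact ⟨1, one_ne_zero, by simp⟩
  | succ n ih =>
    obtain ⟨c, hc, e⟩ := ih
    obtain ⟨d, hd, e'⟩ := h n
    exact ⟨c * d, mul_ne_zero hc hd, by rw [pow_succ', Module.End.mul_apply, e, map_smul, e',
      smul_smul]⟩

theorem natCast_prod_injective : Function.Injective fun v : Fin 6 → ℕ =>
    ((v 0 : ℤ), (v 1 : ℤ), (v 2 : ℤ), (v 3 : ℤ), (v 4 : ℤ), (v 5 : ℤ)) := by
  intro v w h
  simp only [Prod.mk.injEq, Nat.cast_inj] at h
  ext x
  fin_cases x <;> simp [h]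

theorem linearIndependent_vec : LinearIndependent k fun v : Fin 6 → ℕ =>
    vec k (v 0) (v 1) (v 2) (v 3) (v 4) (v 5) := by
  have := (Finsupp.basisSingleOne (R := k)).linearIndependent.comp _ natCast_prod_injective
  simpa [Function.comp_def, vec] using this

theorem opT_mul_op0 (p : k) : opT p * op0 = op0 * opT p := by
  refine endo_ext fun i j l m n r => ?_
  simp only [op0, opT, Module.End.mul_apply, endo_vec, map_smul]

section
variable {q p : k} (hp : p ≠ 0)
include hp

theorem opT_mul_op1 : opT p * op1 = p⁻¹ • (op1 * opT p) := by
  refine endo_ext fun i j l m n r => ?_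
  simp only [op1, opT, Module.End.mul_apply, LinearMap.smul_apply, endo_vec, map_smul,
    zpow_add_one₀ hp]
  match_scalars
  field_simp

theorem opT_mul_op3 : opT p * op3 = p⁻¹ ^ 3 • (op3 * opT p) := by
  refine endo_ext fun i j l m n r => ?_
  simp only [op3, opT, Module.End.mul_apply, LinearMap.smul_apply, endo_vec, map_smul, map_add,
    zpow_add_one₀ hp]
  match_scalars <;> field_simp

theorem opT_mul_opA : opT p * opA q = p⁻¹ • (opA q * opT p) := by
  refine endo_ext fun i j l m n r => ?_
  simp only [opA, opT, Module.End.mul_apply, LinearMap.smul_apply, endo_vec, map_smul, map_add,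
    zpow_add_one₀ hp, zpow_sub_one₀ hp]
  match_scalars <;> field_simp

theorem rootRel [CharZero k] (hq : q ^ 2 + q + 1 = 0) :
    RootRel q p (opA q) (op0 * opT p) (op1 * opT p) (op2 q * opT p) (op3 * opT p)
      (p⁻¹ • (op4 * (opT p * opT p))) where
  a_b0 := by
    rw [← mul_assoc, opA_mul_op0, mul_assoc op0 (opT p), opT_mul_opA hp, add_mul, mul_smul_comm,
      smul_smul, mul_inv_cancel₀ hp, one_smul, mul_assoc]
  a_b1 := by
    rw [← mul_assoc, opA_mul_op1 hq, mul_assoc op1 (opT p), opT_mul_opA hp, add_mul, mul_smul_comm,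
      smul_smul, mul_assoc q, mul_inv_cancel₀ hp, mul_one, smul_mul_assoc, mul_assoc]
  a_b2 := by
    rw [← mul_assoc, opA_mul_op2 hq, mul_assoc (op2 q) (opT p), opT_mul_opA hp, add_mul,
      mul_smul_comm, smul_smul, mul_assoc (q ^ 2), mul_inv_cancel₀ hp, mul_one, smul_mul_assoc,
      mul_assoc]
  a_b3 := by
    rw [← mul_assoc, opA_mul_op3 hq, mul_assoc op3 (opT p), opT_mul_opA hp, mul_smul_comm,
      smul_smul, mul_inv_cancel₀ hp, one_smul, mul_assoc]
  b1_b0 := by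
    rw [mul_assoc, ← mul_assoc (opT p), opT_mul_op0, mul_assoc op0 (opT p) (op1 * _),
      ← mul_assoc (opT p) op1, opT_mul_op1 hp, smul_mul_assoc, mul_smul_comm, smul_smul,
      mul_inv_cancel₀ hp, one_smul, mul_assoc op0, ← mul_assoc op1, op1_mul_op0]
    simp only [mul_assoc]
  b3_b0 := by
    rw [mul_assoc, ← mul_assoc (opT p), opT_mul_op0, mul_assoc op0 (opT p) (op3 * _),
      ← mul_assoc (opT p) op3, opT_mul_op3 hp, smul_mul_assoc, mul_smul_comm, smul_smul, ← mul_pow,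
      mul_inv_cancel₀ hp, one_pow, one_smul, mul_assoc op0, ← mul_assoc op3, op3_mul_op0, smul_smul,
      mul_assoc 2, mul_inv_cancel₀ hp, mul_one, add_mul, smul_mul_assoc]
    simp only [mul_assoc]

/-- Up to nonzero scalars, the PBW monomials send the origin to the corresponding basis vectors. -/
theorem exists_pbw_apply [CharZero k] (hq : q ^ 2 + q + 1 = 0) (i j l m n r : ℕ) :
    ∃ c : k, c ≠ 0 ∧ pbw (opA q) (op0 * opT p) (op1 * opT p) (op2 q * opT p) (op3 * opT p)
      (p⁻¹ • (op4 * (opT p * opT p))) i j l m n r (vec k 0 0 0 0 0 0) = c • vec k i j l m n r := by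
  have hT : ∀ i j l m n r : ℤ, ∃ c : k, c ≠ 0 ∧ opT p (vec k i j l m n r) = c • vec k i j l m n r :=
    fun i j l m n r => ⟨(p ^ j * (p ^ l) ^ 3 * (p ^ m) ^ 2 * (p ^ n) ^ 3 * p ^ r)⁻¹, by positivity,
      by rw [opT, endo_vec]⟩
  have hq0 : q ≠ 0 := by rintro rfl; simp at hq
  obtain ⟨c1, h1, e1⟩ := exists_pow_apply (f := opA q) (v := fun r => vec k 0 0 0 0 0 r)
    (fun r => ⟨1, one_ne_zero, by simp [opA, show 1 + q + q ^ 2 = 0 by rw [← hq]; ring]⟩) r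
  obtain ⟨c2, h2, e2⟩ := exists_pow_apply (f := op3 * opT p) (v := fun n => vec k 0 0 0 0 n r)
    (fun n => by
      obtain ⟨c, hc, e⟩ := hT 0 0 0 0 n r
      exact ⟨c, hc, by simp [e, op3]⟩) n
  obtain ⟨c3, h3, e3⟩ := exists_pow_apply (f := op2 q * opT p) (v := fun m => vec k 0 0 0 m n r)
    (fun m => by
      obtain ⟨c, hc, e⟩ := hT 0 0 0 m n r
      exact ⟨c, hc, by simp [e, op2]⟩) m
  obtain ⟨c4, h4, e4⟩ := exists_pow_apply (f := p⁻¹ • (op4 * (opT p * opT p)))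
    (v := fun l => vec k 0 0 l m n r)
    (fun l => by
      obtain ⟨c, hc, e⟩ := hT 0 0 l m n r
      exact ⟨p⁻¹ * (c * c), by simp [hp, hc], by simp [e, op4, smul_smul]⟩) l
  obtain ⟨c5, h5, e5⟩ := exists_pow_apply (f := op1 * opT p) (v := fun j => vec k 0 j l m n r)
    (fun j => by
      obtain ⟨c, hc, e⟩ := hT 0 j l m n r
      exact ⟨c, hc, by simp [e, op1]⟩) j
  obtain ⟨c6, h6, e6⟩ := exists_pow_apply (f := op0 * opT p) (v := fun i => vec k i j l m n r)
    (fun i => by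
      obtain ⟨c, hc, e⟩ := hT i j l m n r
      exact ⟨c, hc, by simp [e, op0]⟩) i
  simp only [Nat.cast_zero] at e1 e2 e3 e4 e5 e6
  refine ⟨c1 * c2 * c3 * c4 * c5 * c6, by positivity, ?_⟩
  simp only [pbw, Module.End.mul_apply, e1, e2, e3, e4, e5, e6, map_smul, smul_smul]

theorem linearIndependent_pbw [CharZero k] (hq : q ^ 2 + q + 1 = 0) :
    LinearIndependent k fun v : Fin 6 → ℕ => pbw (opA q) (op0 * opT p) (op1 * opT p)
      (op2 q * opT p) (op3 * opT p) (p⁻¹ • (op4 * (opT p * opT p)))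
      (v 0) (v 1) (v 2) (v 3) (v 4) (v 5) := by
  choose c hc e using fun v : Fin 6 → ℕ =>
    exists_pbw_apply hp hq (v 0) (v 1) (v 2) (v 3) (v 4) (v 5)
  refine LinearIndependent.of_comp (LinearMap.applyₗ (vec k 0 0 0 0 0 0)) ?_
  have := linearIndependent_vec.units_smul fun v => Units.mk0 (c v) (hc v)
  convert this using 1
  ext1 v
  exact e v

end
end PBWModule

section Growth

open Filter Topology

theorem tendsto_logb_mul_pow {C : ℝ} (hC : 0 < C) (d : ℕ) :
    Tendsto (fun n : ℕ => ENNReal.ofReal (Real.logb n ((C * n) ^ d))) atTop (𝓝 (d : ℝ≥0∞)) := by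
  have h1 : Tendsto (fun n : ℕ => (d : ℝ) * (Real.log C / Real.log n + 1)) atTop (𝓝 d) := by
    have h := (tendsto_const_nhds (x := Real.log C)).div_atTop
      (Real.tendsto_log_atTop.comp tendsto_natCast_atTop_atTop)
    simpa using (h.add_const 1).const_mul (d : ℝ)
  have h2 := ENNReal.tendsto_ofReal h1
  rw [ENNReal.ofReal_natCast] at h2
  refine h2.congr' ?_
  filter_upwards [eventually_ge_atTop 2] with n hn
  have hn' : (1 : ℝ) < n := by exact_mod_cast hn
  have : Real.log n ≠ 0 := (Real.log_pos hn').ne'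
  rw [Real.logb, Real.log_pow, Real.log_mul hC.ne' (by positivity)]
  congr 1
  field_simp

theorem limsup_logb_le {f : ℕ → ℕ} {C d : ℕ} (hC : 0 < C)
    (h : ∀ᶠ n in atTop, f n ≤ (C * n) ^ d) :
    limsup (fun n : ℕ => ENNReal.ofReal (Real.logb n (f n))) atTop ≤ d := by
  rw [← (tendsto_logb_mul_pow (Nat.cast_pos.2 hC) d).limsup_eq]
  refine limsup_le_limsup ?_
  filter_upwards [h, eventually_ge_atTop 2] with n hn hn2
  have hn' : (1 : ℝ) < n := by exact_mod_cast hn2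
  refine ENNReal.ofReal_le_ofReal ?_
  rcases Nat.eq_zero_or_pos (f n) with h0 | h0
  · rw [h0, Nat.cast_zero, Real.logb_zero]
    refine Real.logb_nonneg hn' ?_
    have : 1 ≤ (C * n) ^ d := Nat.one_le_pow _ _ (by positivity)
    exact_mod_cast this
  · exact Real.logb_le_logb_of_le hn' (by exact_mod_cast h0) (by exact_mod_cast hn)

theorem le_limsup_logb {f : ℕ → ℕ} {C d : ℕ} (hC : 0 < C)
    (h : ∀ᶠ n in atTop, n ^ d ≤ C ^ d * f n) :
    d ≤ limsup (fun n : ℕ => ENNReal.ofReal (Real.logb n (f n))) atTop := by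
  have hC' : (0 : ℝ) < C := Nat.cast_pos.2 hC
  rw [← (tendsto_logb_mul_pow (inv_pos.2 hC') d).limsup_eq]
  refine limsup_le_limsup ?_
  filter_upwards [h, eventually_ge_atTop 2] with n hn hn2
  have hn' : (1 : ℝ) < n := by exact_mod_cast hn2
  refine ENNReal.ofReal_le_ofReal (Real.logb_le_logb_of_le hn' (by positivity) ?_)
  rw [inv_mul_eq_div, div_pow, div_le_iff₀' (by positivity)]
  exact_mod_cast hn

variable {A : Type*} [Ring A] [Algebra k A]

theorem exists_subset_pow {V : Submodule k A} (h1 : 1 ≤ V) (hV : ∀ x : A, ∃ m, x ∈ V ^ m)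
    (S : Finset A) : ∃ m, 0 < m ∧ Submodule.span k (insert 1 (S : Set A)) ≤ V ^ m := by
  choose f hf using hV
  refine ⟨S.sup f + 1, by omega, ?_⟩
  rw [Submodule.span_le]
  rintro x (rfl | hx)
  · exact Submodule.one_le.1 (one_le_pow_of_one_le' h1 _)
  · exact pow_le_pow_right' h1 (Nat.le_succ_of_le (Finset.le_sup hx)) (hf x)

theorem RootRel.gkdim_eq_six [CharZero k] {q p : k} {a b0 b1 b2 b3 b4 : A}
    (hq : q ^ 2 + q + 1 = 0) (hp : p ≠ 0) (h : RootRel q p a b0 b1 b2 b3 b4)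
    (hgen : Algebra.adjoin k {a, b0} = ⊤)
    (hli : LinearIndependent k fun v : Fin 6 → ℕ =>
      pbw a b0 b1 b2 b3 b4 (v 0) (v 1) (v 2) (v 3) (v 4) (v 5)) :
    GKdim k A = 6 := by
  classical
  set V : Submodule k A := Submodule.span k {1, a, b0} with hV
  have h1 : 1 ≤ V := Submodule.one_le.2 (Submodule.subset_span (by simp))
  have ha : a ∈ V := Submodule.subset_span (by simp)
  have hb0 : b0 ∈ V := Submodule.subset_span (by simp)
  have hfin : ∀ N, Module.Finite k (V ^ N : Submodule k A) := fun N =>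
    haveI := (finrank_pbwSpan_le (k := k) (a := a) (b0 := b0) (b1 := b1) (b2 := b2) (b3 := b3)
      (b4 := b4) N).1
    Submodule.finiteDimensional_of_le (h.span_pow_le hq hp N)
  have hrank : ∀ N, Module.finrank k (V ^ N : Submodule k A) ≤ (N + 1) ^ 6 := fun N =>
    have hF := finrank_pbwSpan_le (k := k) (a := a) (b0 := b0) (b1 := b1) (b2 := b2) (b3 := b3)
      (b4 := b4) N
    haveI := hF.1
    (Submodule.finrank_mono (h.span_pow_le hq hp N)).trans hF.2
  have hmem : ∀ x : A, ∃ m, x ∈ V ^ m := by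
    intro x
    have hx : x ∈ Algebra.adjoin k {a, b0} := hgen ▸ Algebra.mem_top
    induction hx using Algebra.adjoin_induction with
    | mem x hx =>
      refine ⟨1, ?_⟩
      rw [pow_one]
      rcases hx with rfl | rfl <;> assumption
    | algebraMap r => exact ⟨0, by rw [pow_zero]; exact Submodule.algebraMap_mem r⟩
    | add x y _ _ hx hy =>
      obtain ⟨m, hm⟩ := hx
      obtain ⟨n, hn⟩ := hy
      exact ⟨m + n, add_mem (pow_le_pow_right' h1 (by omega) hm)
        (pow_le_pow_right' h1 (by omega) hn)⟩
    | mul x y _ _ hx hy =>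
      obtain ⟨m, hm⟩ := hx
      obtain ⟨n, hn⟩ := hy
      exact ⟨m + n, pow_add V m n ▸ Submodule.mul_mem_mul hm hn⟩
  refine le_antisymm (iSup_le fun S => ?_) ?_
  · obtain ⟨m, hm, hS⟩ := exists_subset_pow h1 hmem S
    refine limsup_logb_le (C := m + 1) (d := 6) (by omega) ?_
    filter_upwards [eventually_ge_atTop 1] with n hn
    have hle : Submodule.span k (insert 1 (S : Set A)) ^ n ≤ V ^ (m * n) := by
      rw [pow_mul]; exact pow_le_pow_left' hS n
    have := hfin (m * n)
    refine (Submodule.finrank_mono hle).trans ((hrank _).trans ?_)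
    exact Nat.pow_le_pow_left (by nlinarith) 6
  · refine le_trans ?_ (le_iSup _ {a, b0})
    have hset : insert (1 : A) ((({a, b0} : Finset A)) : Set A) = {1, a, b0} := by simp
    rw [hset, ← hV]
    refine le_limsup_logb (C := 32) (d := 6) (by norm_num) ?_
    have hVm : ∀ {x y : A} {m n : ℕ}, x ∈ V ^ m → y ∈ V ^ n → x * y ∈ V ^ (m + n) :=
      fun {x y m n} hx hy => pow_add V m n ▸ Submodule.mul_mem_mul hx hy
    have hVp : ∀ {x : A} {m : ℕ}, x ∈ V ^ m → ∀ n, x ^ n ∈ V ^ (m * n) :=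
      fun {x m} hx n => pow_mul V m n ▸ Submodule.pow_mem_pow _ hx n
    have hcomm : ∀ {x y z : A} {c : k} {m n : ℕ}, x * y = z + c • (y * x) → x ∈ V ^ m →
        y ∈ V ^ n → z ∈ V ^ (m + n) := by
      intro x y z c m n e hx hy
      rw [← sub_eq_iff_eq_add] at e
      rw [← e]
      exact sub_mem (hVm hx hy) (Submodule.smul_mem _ _ (add_comm n m ▸ hVm hy hx))
    have ma : a ∈ V ^ 1 := (pow_one V).symm ▸ ha
    have m0 : b0 ∈ V ^ 1 := (pow_one V).symm ▸ hb0
    have m1 : b1 ∈ V ^ 2 := hcomm h.a_b0 ma m0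
    have m2 : b2 ∈ V ^ 3 := hcomm h.a_b1 ma m1
    have m3 : b3 ∈ V ^ 4 := hcomm h.a_b2 ma m2
    have m4 : b4 ∈ V ^ 5 := hcomm ((h.b2_b1 hq hp).trans (add_comm _ _)) m2 m1
    filter_upwards [eventually_ge_atTop 16] with n hn
    set t := n / 16 with ht
    have hvm : ∀ v : Fin 6 → Fin t,
        pbw a b0 b1 b2 b3 b4 (v 0) (v 1) (v 2) (v 3) (v 4) (v 5) ∈ V ^ n := by
      intro v
      refine pow_le_pow_right' h1 ?_ (hVm (hVp m0 _) (hVm (hVp m1 _) (hVm (hVp m4 _)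
        (hVm (hVp m2 _) (hVm (hVp m3 _) (hVp ma _))))))
      omega
    have hinj : Function.Injective fun (v : Fin 6 → Fin t) (i : Fin 6) => (v i : ℕ) :=
      fun v w hvw => funext fun i => Fin.ext (congrFun hvw i)
    have hli' : LinearIndependent k fun v : Fin 6 → Fin t =>
        (⟨_, hvm v⟩ : (V ^ n : Submodule k A)) :=
      LinearIndependent.of_comp (V ^ n).subtype (hli.comp _ hinj)
    have := hfin n
    have hcard := hli'.fintype_card_le_finrank
    simp only [Fintype.card_pi, Fintype.card_fin, Finset.prod_const, Finset.card_univ] at hcard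
    calc n ^ 6 ≤ (32 * t) ^ 6 := Nat.pow_le_pow_left (by omega) 6
      _ = 32 ^ 6 * t ^ 6 := mul_pow _ _ _
      _ ≤ _ := Nat.mul_le_mul_left _ hcard

end Growth

section Presentation

variable {q p : k}

/-- The iterated braided commutator `(ad_c x)^n y`, where `x` has self-braiding `q` and braiding `p`
with `y`. -/
def adPow {A : Type*} [Ring A] [Algebra k A] (q p : k) (x y : A) : ℕ → A
  | 0 => y
  | n + 1 => x * adPow q p x y n - (q ^ n * p) • (adPow q p x y n * x)

theorem adPow_lift {A : Type*} [Ring A] [Algebra k A] {B : Type*} [Ring B] [Algebra k B]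
    (f : A →ₐ[k] B) (x y : A) (n : ℕ) : f (adPow q p x y n) = adPow q p (f x) (f y) n := by
  induction n with
  | zero => rfl
  | succ n ih => simp only [adPow, map_sub, map_mul, map_smul, ih]

theorem brk_gen_zero_gen_one :
    (brk ![![q, p], ![p⁻¹, 1]] (gen 0) (brk ![![q, p], ![p⁻¹, 1]] (gen 0)
      (brk ![![q, p], ![p⁻¹, 1]] (gen 0) (brk ![![q, p], ![p⁻¹, 1]] (gen 0) (gen 1))))).1 =
      adPow q p (FreeAlgebra.ι k 0) (FreeAlgebra.ι k 1) 4 := by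
  simp [brk, gen, qb, ee, Fin.prod_univ_two, adPow]

theorem brk_gen_one_gen_zero :
    (brk ![![q, p], ![p⁻¹, 1]] (gen 1) (brk ![![q, p], ![p⁻¹, 1]] (gen 1) (gen 0))).1 =
      adPow 1 p⁻¹ (FreeAlgebra.ι k 1) (FreeAlgebra.ι k 0) 2 := by
  simp [brk, gen, qb, ee, adPow]

theorem rootRel_adPow [CharZero k] {A : Type*} [Ring A] [Algebra k A] {x y : A} (hq : q ^ 3 = 1)
    (hp : p ≠ 0) (hx : adPow q p x y 4 = 0) (hy : adPow 1 p⁻¹ y x 2 = 0) :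
    RootRel q p x y (adPow q p x y 1) (adPow q p x y 2) (adPow q p x y 3)
      ((2 * p)⁻¹ • (adPow q p x y 3 * y - p ^ 3 • (y * adPow q p x y 3))) where
  a_b0 := by simp [adPow]
  a_b1 := by simp [adPow]
  a_b2 := (sub_add_cancel _ _).symm
  a_b3 := by
    rw [adPow, hq, one_mul, sub_eq_zero] at hx
    exact hx
  b1_b0 := by
    simp only [adPow, one_pow, one_mul, pow_zero, mul_sub, sub_mul, smul_mul_assoc,
      mul_smul_comm, mul_assoc] at hy ⊢
    linear_combination (norm := skip) p ^ 2 • hy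
    match_scalars <;> field_simp <;> ring
  b3_b0 := by
    rw [smul_smul, mul_inv_cancel₀ (mul_ne_zero two_ne_zero hp), one_smul, add_sub_cancel]

theorem RootRel.adPow_eq_zero {A : Type*} [Ring A] [Algebra k A] {a b0 b1 b2 b3 b4 : A}
    (hq : q ^ 3 = 1) (hp : p ≠ 0) (h : RootRel q p a b0 b1 b2 b3 b4) :
    adPow q p a b0 4 = 0 ∧ adPow 1 p⁻¹ b0 a 2 = 0 := by
  constructor
  · simp [adPow, h.a_b0, h.a_b1, h.a_b2, h.a_b3, hq]
  · have e := h.b1_b0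
    rw [← sub_eq_iff_eq_add.2 h.a_b0] at e
    simp only [adPow, one_pow, one_mul, pow_zero, mul_sub, sub_mul, smul_mul_assoc,
      mul_smul_comm, mul_assoc] at e ⊢
    linear_combination (norm := skip) p⁻¹ ^ 2 • e
    match_scalars <;> field_simp <;> ring

theorem RootRel.map {A B : Type*} [Ring A] [Algebra k A] [Ring B] [Algebra k B]
    {a b0 b1 b2 b3 b4 : A} (f : A →ₐ[k] B) (h : RootRel q p a b0 b1 b2 b3 b4) :
    RootRel q p (f a) (f b0) (f b1) (f b2) (f b3) (f b4) where
  a_b0 := by simpa using congrArg f h.a_b0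
  a_b1 := by simpa using congrArg f h.a_b1
  a_b2 := by simpa using congrArg f h.a_b2
  a_b3 := by simpa using congrArg f h.a_b3
  b1_b0 := by simpa using congrArg f h.b1_b0
  b3_b0 := by simpa using congrArg f h.b3_b0

theorem RootRel.unique [CharZero k] {A : Type*} [Ring A] [Algebra k A]
    {a b0 b1 b2 b3 b4 c1 c2 c3 c4 : A} (hp : p ≠ 0) (h : RootRel q p a b0 b1 b2 b3 b4)
    (h' : RootRel q p a b0 c1 c2 c3 c4) : b1 = c1 ∧ b2 = c2 ∧ b3 = c3 ∧ b4 = c4 := by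
  obtain rfl : b1 = c1 := add_right_cancel (h.a_b0.symm.trans h'.a_b0)
  obtain rfl : b2 = c2 := add_right_cancel (h.a_b1.symm.trans h'.a_b1)
  obtain rfl : b3 = c3 := add_right_cancel (h.a_b2.symm.trans h'.a_b2)
  exact ⟨rfl, rfl, rfl, smul_right_injective A (mul_ne_zero two_ne_zero hp)
    (add_left_cancel (h.b3_b0.symm.trans h'.b3_b0))⟩

theorem map_pbw {A B : Type*} [Ring A] [Algebra k A] [Ring B] [Algebra k B] (f : A →ₐ[k] B)
    (a b0 b1 b2 b3 b4 : A) (i j l m n r : ℕ) :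
    f (pbw a b0 b1 b2 b3 b4 i j l m n r) =
      pbw (f a) (f b0) (f b1) (f b2) (f b3) (f b4) i j l m n r := by
  simp only [pbw, map_mul, map_pow]

end Presentation

end Stmt7

/-- Let `q` be a primitive third root of unity and
`B = k⟨x_1,x_2⟩/⟨(ad_c x_1)^4 x_2, (ad_c x_2)^2 x_1⟩` with braiding matrix
`q_11 = q`, `q_22 = 1`, `q_12 q_21 = 1`.  Then the Gelfand–Kirillov dimension of `B`
equals `6`. -/
theorem stmt7 {k : Type*} [Field k] [CharZero k]
    (q q12 : k) (hq3 : q ^ 3 = 1) (hq1 : q ≠ 1) (hq12 : q12 ≠ 0)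
    (Q : Fin 2 → Fin 2 → k) (hQ : Q = ![![q, q12], ![q12⁻¹, 1]])
    (rel : FreeAlgebra k (Fin 2) → FreeAlgebra k (Fin 2) → Prop)
    (hrel : rel = fun a b => b = 0 ∧
      (a = (brk Q (gen 0) (brk Q (gen 0) (brk Q (gen 0) (brk Q (gen 0) (gen 1))))).1
        ∨ a = (brk Q (gen 1) (brk Q (gen 1) (gen 0))).1)) :
    GKdim k (RingQuot rel) = 6 := by
  have hq : q ^ 2 + q + 1 = 0 := by
    have : (q - 1) * (q ^ 2 + q + 1) = 0 := by linear_combination hq3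
    exact (mul_eq_zero.1 this).resolve_left (sub_ne_zero.2 hq1)
  rw [hQ, brk_gen_zero_gen_one, brk_gen_one_gen_zero] at hrel
  set π := RingQuot.mkAlgHom k rel with hπ
  have hx : adPow q q12 (π (FreeAlgebra.ι k 0)) (π (FreeAlgebra.ι k 1)) 4 = 0 := by
    rw [← adPow_lift, ← map_zero π]
    exact RingQuot.mkAlgHom_rel k (by rw [hrel]; exact ⟨rfl, .inl rfl⟩)
  have hy : adPow 1 q12⁻¹ (π (FreeAlgebra.ι k 1)) (π (FreeAlgebra.ι k 0)) 2 = 0 := by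
    rw [← adPow_lift, ← map_zero π]
    exact RingQuot.mkAlgHom_rel k (by rw [hrel]; exact ⟨rfl, .inr rfl⟩)
  have hB := rootRel_adPow hq3 hq12 hx hy
  refine hB.gkdim_eq_six hq hq12 ?_ ?_
  · have hset : ({π (FreeAlgebra.ι k 0), π (FreeAlgebra.ι k 1)} : Set (RingQuot rel)) =
        π '' Set.range (FreeAlgebra.ι k) := by
      rw [← Set.range_comp]
      ext x
      simp [eq_comm]
    rw [hset, ← AlgHom.map_adjoin, FreeAlgebra.adjoin_range_ι, Algebra.map_top,
      AlgHom.range_eq_top]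
    exact RingQuot.mkAlgHom_surjective k rel
  · have hR := PBWModule.rootRel hq12 hq
    set g : Fin 2 → Module.End k (PBWModule k) :=
      ![PBWModule.opA q, PBWModule.op0 * PBWModule.opT q12] with hg
    have hlift : ∀ ⦃x y⦄, rel x y → FreeAlgebra.lift k g x = FreeAlgebra.lift k g y := by
      obtain ⟨h4, h2⟩ := hR.adPow_eq_zero hq3 hq12
      intro x y hxy
      rw [hrel] at hxy
      obtain ⟨rfl, rfl | rfl⟩ := hxy
      · refine (adPow_lift (B := Module.End k (PBWModule k)) _ _ _ 4).trans ?_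
        rw [map_zero, FreeAlgebra.lift_ι_apply, FreeAlgebra.lift_ι_apply]
        exact h4
      · refine (adPow_lift (B := Module.End k (PBWModule k)) _ _ _ 2).trans ?_
        rw [map_zero, FreeAlgebra.lift_ι_apply, FreeAlgebra.lift_ι_apply]
        exact h2
    set φ := RingQuot.liftAlgHom k ⟨FreeAlgebra.lift k g, hlift⟩ with hφ
    have h0 : φ (π (FreeAlgebra.ι k 0)) = PBWModule.opA q := by simp [hφ, hπ, hg]
    have h1 : φ (π (FreeAlgebra.ι k 1)) = PBWModule.op0 * PBWModule.opT q12 := by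
      simp [hφ, hπ, hg]
    have hφB := hB.map (B := Module.End k (PBWModule k)) φ
    rw [h0, h1] at hφB
    obtain ⟨e1, e2, e3, e4⟩ := hφB.unique hq12 hR
    refine LinearIndependent.of_comp φ.toLinearMap ?_
    have hpbw := PBWModule.linearIndependent_pbw hq12 hq
    rw [← h0, ← h1, ← e1, ← e2, ← e3, ← e4] at hpbw
    simp only [← map_pbw] at hpbw
    exact hpbw

end
end

section
/- Let q = (q_ij)_{i,j∈I} satisfy q_ij q_ji = 1 for all i ≠ j (quantum linear space). Suppose i ≠ j with ord(q_ii) + ord(q_jj) > 4 (orders in N ∪ {∞}). Then in any pre-Nichols algebra B of q with finite GK-dimension, x_{ij} := x_i x_j − q_ij x_j x_i = 0. -/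
open scoped TensorProduct ENNReal

noncomputable section

namespace Stmt12

/-- The Gelfand–Kirillov dimension of a `k`-algebra `A`. -/
def GKdim (k A : Type*) [Field k] [Ring A] [Algebra k A] : ℝ≥0∞ :=
  ⨆ S : Finset A,
    Filter.limsup
      (fun n : ℕ => ENNReal.ofReal (Real.logb n
        (Module.finrank k ((Submodule.span k (insert (1 : A) (S : Set A))) ^ n : Submodule k A))))
      Filter.atTop

/-- The `ℤ^θ`-homogeneous component of degree `d` of the free (tensor) algebra:
the span of words in the generators with letter-count vector `d`. -/
def piece (k : Type*) [Field k] (θ : ℕ) (d : Fin θ → ℤ) :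
    Submodule k (FreeAlgebra k (Fin θ)) :=
  Submodule.span k {y | ∃ l : List (Fin θ),
    (∀ i, (l.count i : ℤ) = d i) ∧ y = (l.map (FreeAlgebra.ι k)).prod}

/-- The bicharacter on `ℤ^θ` extending a braiding matrix `Q`. -/
def qb {k : Type*} [Field k] {θ : ℕ} (Q : Fin θ → Fin θ → kˣ) (α β : Fin θ → ℤ) : kˣ :=
  ∏ a, ∏ b, Q a b ^ (α a * β b)

end Stmt12

open Stmt12

section Growth

variable {k A : Type*} [Field k] [Ring A] [Algebra k A]

/-- The span of the products `f i₁ * ⋯ * f iᵣ` with `n ≤ i₁ < ⋯ < iᵣ < n + L`. -/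
def sqfreeSpan (k : Type*) {A : Type*} [Field k] [Ring A] [Algebra k A] (f : ℕ → A) :
    ℕ → ℕ → Submodule k A
  | 0, _ => Submodule.span k {1}
  | L + 1, n => sqfreeSpan k f L (n + 1) ⊔
      (sqfreeSpan k f L (n + 1)).map (LinearMap.mulLeft k (f n))

/-- A sequence `f` lowered by a skew derivation `D` down to `f 0`, which is detected by `E`. -/
structure LoweringData (k : Type*) {A : Type*} [Field k] [Ring A] [Algebra k A]
    (f : ℕ → A) where
  Z : Subalgebra k A
  φ : A →ₐ[k] A
  D : A →ₗ[k] A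
  E : A →ₗ[k] A
  κ : ℕ → k
  c : k
  κ_ne : ∀ n, κ n ≠ 0
  c_ne : c ≠ 0
  D_mul : ∀ x ∈ Z, ∀ y ∈ Z, D (x * y) = D x * y + φ x * D y
  D_one : D 1 = 0
  mem_Z : ∀ n, f (n + 1) ∈ Z
  D_f : ∀ n, D (f (n + 1)) = κ n • f n
  φ_f : ∀ n, ∃ b : k, φ (f n) = b • f n
  E_Z : ∀ z ∈ Z, E z = 0
  E_f : ∀ z ∈ Z, E (f 0 * z) = c • z

namespace LoweringData

variable {f : ℕ → A} (S : LoweringData k f)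

/-- The subalgebra generated by the `f i` with `j ≤ i`. -/
def tail (_ : LoweringData k f) (j : ℕ) : Subalgebra k A :=
  Algebra.adjoin k (f '' Set.Ici j)

lemma f_mem_tail {i j : ℕ} (h : j ≤ i) : f i ∈ S.tail j :=
  Algebra.subset_adjoin ⟨i, h, rfl⟩

lemma tail_anti {i j : ℕ} (h : i ≤ j) : S.tail j ≤ S.tail i :=
  Algebra.adjoin_mono (Set.image_mono (Set.Ici_subset_Ici.2 h))

lemma tail_le_Z {j : ℕ} : S.tail (j + 1) ≤ S.Z := by
  refine Algebra.adjoin_le ?_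
  rintro _ ⟨i, hi, rfl⟩
  obtain ⟨i, rfl⟩ : ∃ i', i = i' + 1 := ⟨i - 1, by have : j + 1 ≤ i := hi; omega⟩
  exact S.mem_Z i

lemma φ_tail {j : ℕ} {x : A} (hx : x ∈ S.tail j) : S.φ x ∈ S.tail j := by
  induction hx using Algebra.adjoin_induction with
  | mem x hx =>
    obtain ⟨i, hi, rfl⟩ := hx
    obtain ⟨b, hb⟩ := S.φ_f i
    rw [hb]
    exact Subalgebra.smul_mem _ (S.f_mem_tail hi) b
  | algebraMap r => rw [AlgHom.commutes]; exact Subalgebra.algebraMap_mem _ r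
  | add x y _ _ hx hy => rw [map_add]; exact add_mem hx hy
  | mul x y _ _ hx hy => rw [map_mul]; exact mul_mem hx hy

lemma D_tail {j : ℕ} {x : A} (hx : x ∈ S.tail (j + 1)) : S.D x ∈ S.tail j := by
  induction hx using Algebra.adjoin_induction with
  | mem x hx =>
    obtain ⟨i, hi, rfl⟩ := hx
    have hi' : j + 1 ≤ i := hi
    obtain ⟨i, rfl⟩ : ∃ i', i = i' + 1 := ⟨i - 1, by omega⟩
    rw [S.D_f]
    exact Subalgebra.smul_mem _ (S.f_mem_tail (by omega)) _
  | algebraMap r =>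
    rw [Algebra.algebraMap_eq_smul_one, map_smul, S.D_one, smul_zero]
    exact zero_mem _
  | add x y _ _ hx hy => rw [map_add]; exact add_mem hx hy
  | mul x y hx' hy' hx hy =>
    rw [S.D_mul _ (S.tail_le_Z hx') _ (S.tail_le_Z hy')]
    exact add_mem (mul_mem hx (S.tail_anti (Nat.le_succ j) hy'))
      (mul_mem (S.tail_anti (Nat.le_succ j) (S.φ_tail hx')) hy)

lemma D_pow_tail (n : ℕ) {j : ℕ} {x : A} (hx : x ∈ S.tail (j + n)) :
    (S.D ^ n) x ∈ S.tail j := by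
  induction n generalizing x with
  | zero => simpa using hx
  | succ n ih =>
    rw [pow_succ, Module.End.mul_apply]
    exact ih (S.D_tail hx)

lemma D_pow_f_mul (n : ℕ) : ∃ b : k, b ≠ 0 ∧ ∀ x ∈ S.tail (n + 1),
    (S.D ^ n) (f n * x) - b • (f 0 * x) ∈ S.tail 1 := by
  induction n with
  | zero => exact ⟨1, one_ne_zero, fun x _ => by simp⟩
  | succ n ih =>
    obtain ⟨b, hb, h⟩ := ih
    refine ⟨S.κ n * b, mul_ne_zero (S.κ_ne n) hb, fun x hx => ?_⟩
    rw [pow_succ, Module.End.mul_apply, S.D_mul _ (S.mem_Z n) _ (S.tail_le_Z hx), S.D_f,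
      map_add, smul_mul_assoc, map_smul, add_sub_right_comm, mul_smul, ← smul_sub]
    refine add_mem (Subalgebra.smul_mem _ (h x (S.tail_anti (Nat.le_succ _) hx)) _) ?_
    refine S.D_pow_tail n ?_
    rw [add_comm 1 n]
    exact mul_mem (S.φ_tail (S.f_mem_tail le_rfl)) (S.D_tail hx)

lemma detect (n : ℕ) : ∃ b : k, b ≠ 0 ∧ ∀ x ∈ S.tail (n + 1), ∀ y ∈ S.tail (n + 1),
    S.E ((S.D ^ n) (f n * x + y)) = b • x := by
  obtain ⟨b, hb, h⟩ := S.D_pow_f_mul n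
  refine ⟨b * S.c, mul_ne_zero hb S.c_ne, fun x hx y hy => ?_⟩
  have h1 := S.E_Z _ (S.tail_le_Z (j := 0) (h x hx))
  have h2 := S.E_Z _ (S.tail_le_Z (j := 0) (S.D_pow_tail n (j := 1) (x := y)
    (by rwa [add_comm])))
  rw [map_sub, map_smul, S.E_f x (S.tail_le_Z hx), sub_eq_zero, smul_smul] at h1
  rw [map_add, map_add, h1, h2, add_zero]

lemma sqfreeSpan_le_tail (L n : ℕ) :
    sqfreeSpan k f L n ≤ Subalgebra.toSubmodule (S.tail n) := by
  induction L generalizing n with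
  | zero =>
    rw [sqfreeSpan, Submodule.span_singleton_le_iff_mem]
    exact one_mem (S.tail n)
  | succ L ih =>
    have h := (ih (n + 1)).trans
      (Subalgebra.toSubmodule.monotone (S.tail_anti (Nat.le_succ n)))
    refine sup_le h ?_
    rintro _ ⟨x, hx, rfl⟩
    exact (S.tail n).mul_mem (S.f_mem_tail le_rfl) (h hx)

/-- The square-free products remain independent modulo any subspace stable under `D` and `E`
not containing `1`. -/
lemma sqfreeSpan_inf (N : Submodule k A) (hD : ∀ x ∈ N, S.D x ∈ N) (hE : ∀ x ∈ N, S.E x ∈ N)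
    (h1 : (1 : A) ∉ N) (L n : ℕ) {x : A} (hx : x ∈ sqfreeSpan k f L n) (hN : x ∈ N) :
    x = 0 := by
  have hDn : ∀ (m : ℕ) (y : A), y ∈ N → (S.D ^ m) y ∈ N := fun m => by
    induction m with
    | zero => exact fun y hy => by simpa using hy
    | succ m ih =>
      intro y hy
      rw [pow_succ, Module.End.mul_apply]
      exact ih _ (hD y hy)
  induction L generalizing n x with
  | zero =>
    obtain ⟨a, rfl⟩ := Submodule.mem_span_singleton.1 hx
    by_contra hne
    have ha : a ≠ 0 := by rintro rfl; exact hne (zero_smul _ _)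
    exact h1 (by simpa [smul_smul, inv_mul_cancel₀ ha] using N.smul_mem a⁻¹ hN)
  | succ L ih =>
    obtain ⟨y, hy, _, ⟨z, hz, rfl⟩, rfl⟩ := Submodule.mem_sup.1 hx
    obtain ⟨b, hb, h⟩ := S.detect n
    have hd := h z (S.sqfreeSpan_le_tail L _ hz) y (S.sqfreeSpan_le_tail L _ hy)
    rw [LinearMap.mulLeft_apply, add_comm] at hN ⊢
    have hz0 : z = 0 := ih (n + 1) hz (by
      have := N.smul_mem b⁻¹ (hd ▸ hE _ (hDn n _ hN))
      rwa [smul_smul, inv_mul_cancel₀ hb, one_smul] at this)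
    rw [hz0, mul_zero, zero_add] at hN ⊢
    exact ih (n + 1) hy hN

instance (L n : ℕ) : FiniteDimensional k (sqfreeSpan k f L n) := by
  induction L generalizing n with
  | zero => rw [sqfreeSpan]; infer_instance
  | succ L ih => rw [sqfreeSpan]; have := ih (n + 1); infer_instance

lemma finrank_sqfreeSpan [Nontrivial A] (S : LoweringData k f) (L n : ℕ) :
    Module.finrank k (sqfreeSpan k f L n) = 2 ^ L := by
  induction L generalizing n with
  | zero => rw [sqfreeSpan, finrank_span_singleton one_ne_zero, pow_zero]
  | succ L ih =>
    obtain ⟨b, hb, h⟩ := S.detect n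
    have key : ∀ z ∈ sqfreeSpan k f L (n + 1), ∀ y ∈ sqfreeSpan k f L (n + 1),
        f n * z + y = 0 → z = 0 := fun z hz y hy h0 => by
      have hd := h z (S.sqfreeSpan_le_tail L _ hz) y (S.sqfreeSpan_le_tail L _ hy)
      rw [h0, map_zero, map_zero] at hd
      exact (smul_eq_zero.1 hd.symm).resolve_left hb
    have hinf : sqfreeSpan k f L (n + 1) ⊓
        (sqfreeSpan k f L (n + 1)).map (LinearMap.mulLeft k (f n)) = ⊥ := by
      rw [eq_bot_iff]
      rintro _ ⟨hy, ⟨z, hz, rfl⟩⟩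
      have := key z hz (-(f n * z)) (neg_mem hy) (add_neg_cancel _)
      simp [this]
    have hmap : Module.finrank k ((sqfreeSpan k f L (n + 1)).map (LinearMap.mulLeft k (f n)))
        = 2 ^ L := by
      rw [← ih (n + 1)]
      have hinj : Function.Injective
          ((LinearMap.mulLeft k (f n)).domRestrict (sqfreeSpan k f L (n + 1))) := by
        rw [injective_iff_map_eq_zero]
        intro z hz
        exact Subtype.ext (key z z.2 0 (zero_mem _) (by simpa using hz))
      rw [← LinearMap.range_domRestrict]
      exact LinearMap.finrank_range_of_inj hinj
    have := Submodule.finrank_sup_add_finrank_inf_eq (sqfreeSpan k f L (n + 1))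
      ((sqfreeSpan k f L (n + 1)).map (LinearMap.mulLeft k (f n)))
    rw [hinf, finrank_bot, add_zero, ih, hmap] at this
    rw [sqfreeSpan, this, pow_succ]
    ring

end LoweringData

lemma sqfreeSpan_le_pow {f : ℕ → A} {X : Submodule k A} (hX : 1 ≤ X) {c : ℕ}
    (hf : ∀ n, f n ∈ X ^ (c * (n + 1))) (L n : ℕ) :
    sqfreeSpan k f L n ≤ X ^ (c * ((n + L) * L)) := by
  induction L generalizing n with
  | zero =>
    rw [sqfreeSpan, mul_zero, mul_zero, pow_zero, Submodule.span_singleton_le_iff_mem]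
    exact Submodule.one_le.1 le_rfl
  | succ L ih =>
    refine sup_le ((ih (n + 1)).trans (pow_le_pow_right₀ hX ?_)) ?_
    · exact Nat.mul_le_mul_left _ (Nat.mul_le_mul (by omega) (by omega))
    · rintro _ ⟨x, hx, rfl⟩
      have := Submodule.mul_mem_mul (hf n) (ih (n + 1) hx)
      rw [← pow_add] at this
      refine pow_le_pow_right₀ hX ?_ this
      nlinarith

end Growth

section SkewDerivations

variable {k ι : Type*} [Field k] [DecidableEq ι] (P : ι → ι → k)

local notation "𝔽" => FreeAlgebra k ι
local notation "𝔵" => FreeAlgebra.ι k (X := ι)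

/-- The algebra map rescaling the letter `s` by `P t s`. -/
def sigma (t : ι) : 𝔽 →ₐ[k] 𝔽 := FreeAlgebra.lift k fun s => P t s • 𝔵 s

/-- The algebra map rescaling the letter `s` by `P s t`. -/
def tau (t : ι) : 𝔽 →ₐ[k] 𝔽 := FreeAlgebra.lift k fun s => P s t • 𝔵 s

/-- The representation by triangular matrices whose corner entry is `skewDer`. -/
def skewRep (t : ι) : 𝔽 →ₐ[k] Matrix (Fin 2) (Fin 2) 𝔽 :=
  FreeAlgebra.lift k fun s => !![P t s • 𝔵 s, if s = t then 1 else 0; 0, 𝔵 s]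

/-- The skew derivation of the free algebra with `skewDer t (x s) = δ s t`. -/
def skewDer (t : ι) : 𝔽 →ₗ[k] 𝔽 :=
  (Matrix.entryLinearMap k 𝔽 (0 : Fin 2) (1 : Fin 2)).comp (skewRep P t).toLinearMap

local notation "σ" => sigma P
local notation "τ" => tau P
local notation "∂" => skewDer P

omit [DecidableEq ι] in
@[simp] lemma sigma_ι (t s : ι) : σ t (𝔵 s) = P t s • 𝔵 s := FreeAlgebra.lift_ι_apply _ _

omit [DecidableEq ι] in
@[simp] lemma tau_ι (t s : ι) : τ t (𝔵 s) = P s t • 𝔵 s := FreeAlgebra.lift_ι_apply _ _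

lemma skewRep_entries (t : ι) (x : 𝔽) :
    skewRep P t x 0 0 = σ t x ∧ skewRep P t x 1 0 = 0 ∧ skewRep P t x 1 1 = x := by
  induction x using FreeAlgebra.induction with
  | grade0 r => simp [Matrix.algebraMap_matrix_apply]
  | grade1 s => simp [skewRep]
  | mul x y hx hy => simp [Matrix.mul_apply, Fin.sum_univ_two, hx, hy]
  | add x y hx hy => simp [hx, hy]

lemma skewDer_mul (t : ι) (x y : 𝔽) : ∂ t (x * y) = ∂ t x * y + σ t x * ∂ t y := by
  have hx := skewRep_entries P t x
  have hy := skewRep_entries P t y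
  simp [skewDer, Matrix.mul_apply, Fin.sum_univ_two, hx, hy, add_comm]

@[simp] lemma skewDer_one (t : ι) : ∂ t 1 = 0 := by simp [skewDer]

@[simp] lemma skewDer_algebraMap (t : ι) (r : k) : ∂ t (algebraMap k 𝔽 r) = 0 := by
  rw [Algebra.algebraMap_eq_smul_one, map_smul, skewDer_one, smul_zero]

lemma skewDer_ι (t s : ι) : ∂ t (𝔵 s) = if s = t then 1 else 0 := by simp [skewDer, skewRep]

omit [DecidableEq ι] in
lemma sigma_comm (s t : ι) (x : 𝔽) : σ s (σ t x) = σ t (σ s x) := by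
  have : (σ s).comp (σ t) = (σ t).comp (σ s) := by
    ext r; simp [smul_smul, mul_comm]
  exact DFunLike.congr_fun this x

lemma skewDer_sigma (t s : ι) (x : 𝔽) : ∂ t (σ s x) = P s t • σ s (∂ t x) := by
  induction x using FreeAlgebra.induction with
  | grade0 r => simp
  | grade1 r =>
    simp only [sigma_ι, map_smul, skewDer_ι]
    split_ifs with h <;> simp [h]
  | mul x y hx hy =>
    rw [map_mul, skewDer_mul, hx, hy, skewDer_mul, map_add, map_mul, map_mul, sigma_comm P t s,
      smul_add, smul_mul_assoc, mul_smul_comm]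
  | add x y hx hy => simp only [map_add, hx, hy, smul_add]

lemma skewDer_sigma_pow (t s : ι) (n : ℕ) (x : 𝔽) :
    ∂ t ((σ s ^ n) x) = P s t ^ n • (σ s ^ n) (∂ t x) := by
  induction n with
  | zero => simp
  | succ n ih =>
    rw [pow_succ', AlgHom.mul_apply, skewDer_sigma, ih, map_smul, smul_smul, AlgHom.mul_apply,
      ← pow_succ']

/-- Gaussian binomial coefficients. -/
def gaussBinom (q : k) : ℕ → ℕ → k
  | _, 0 => 1
  | 0, _ + 1 => 0
  | n + 1, r + 1 => q ^ (n - r) * gaussBinom q n r + gaussBinom q n (r + 1)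

/-- The `q`-integer `1 + q + ⋯ + q ^ (n - 1)`. -/
def qInt (q : k) (n : ℕ) : k := ∑ i ∈ Finset.range n, q ^ i

lemma qInt_succ (q : k) (n : ℕ) : qInt q (n + 1) = qInt q n + q ^ n :=
  Finset.sum_range_succ _ _

lemma qInt_mul (q : k) (n : ℕ) : qInt q n * (1 - q) = 1 - q ^ n := by
  induction n with
  | zero => simp [qInt]
  | succ n ih => rw [qInt_succ, add_mul, ih]; ring

lemma qInt_succ' (q : k) (n : ℕ) : qInt q (n + 1) = 1 + q * qInt q n := by
  rw [qInt, Finset.sum_range_succ', qInt, Finset.mul_sum, add_comm]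
  simp [pow_succ']

@[simp] lemma gaussBinom_zero (q : k) (n : ℕ) : gaussBinom q n 0 = 1 := by
  cases n <;> rfl

lemma gaussBinom_eq_zero (q : k) {n r : ℕ} (h : n < r) : gaussBinom q n r = 0 := by
  induction n generalizing r with
  | zero => obtain ⟨r, rfl⟩ : ∃ r', r = r' + 1 := ⟨r - 1, by omega⟩; rfl
  | succ n ih =>
    obtain ⟨r, rfl⟩ : ∃ r', r = r' + 1 := ⟨r - 1, by omega⟩
    rw [gaussBinom, ih (by omega), ih (by omega), mul_zero, add_zero]

@[simp] lemma gaussBinom_self (q : k) (n : ℕ) : gaussBinom q n n = 1 := by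
  induction n with
  | zero => rfl
  | succ n ih => rw [gaussBinom, ih, gaussBinom_eq_zero q (Nat.lt_succ_self n)]; simp

lemma gaussBinom_one (q : k) (n : ℕ) : gaussBinom q n 1 = qInt q n := by
  induction n with
  | zero => simp [gaussBinom, qInt]
  | succ n ih => rw [gaussBinom, zero_add, ih, qInt_succ]; simp [add_comm]

lemma gaussBinom_succ_self (q : k) (n : ℕ) : gaussBinom q (n + 1) n = qInt q (n + 1) := by
  induction n with
  | zero => simp [qInt]
  | succ n ih =>
    rw [gaussBinom, ih, gaussBinom_self, qInt_succ' q (n + 1)]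
    simp [add_comm]

/-- The `q`-Leibniz rule. -/
lemma skewDer_pow_mul (v : ι) (n : ℕ) (x y : 𝔽) :
    (∂ v ^ n) (x * y) = ∑ r ∈ Finset.range (n + 1), gaussBinom (P v v) n r •
      ((σ v ^ (n - r)) ((∂ v ^ r) x) * (∂ v ^ (n - r)) y) := by
  induction n with
  | zero => simp
  | succ n ih =>
    have hstep : ∀ r ∈ Finset.range (n + 1),
        ∂ v (gaussBinom (P v v) n r • ((σ v ^ (n - r)) ((∂ v ^ r) x) * (∂ v ^ (n - r)) y))
        = (P v v ^ (n - r) * gaussBinom (P v v) n r) •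
          ((σ v ^ (n + 1 - (r + 1))) ((∂ v ^ (r + 1)) x) * (∂ v ^ (n + 1 - (r + 1))) y)
        + gaussBinom (P v v) n r •
          ((σ v ^ (n + 1 - r)) ((∂ v ^ r) x) * (∂ v ^ (n + 1 - r)) y) := by
      intro r hr
      have hr' : r ≤ n := Nat.lt_succ_iff.1 (Finset.mem_range.1 hr)
      rw [Nat.succ_sub_succ, Nat.succ_sub hr', map_smul, skewDer_mul, skewDer_sigma_pow,
        pow_succ' (∂ v), pow_succ' (σ v), pow_succ' (∂ v), Module.End.mul_apply,
        Module.End.mul_apply, AlgHom.mul_apply, smul_mul_assoc, smul_add, smul_smul, mul_comm]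
    rw [pow_succ', Module.End.mul_apply, ih, map_sum, Finset.sum_congr rfl hstep,
      Finset.sum_add_distrib, Finset.sum_range_succ' _ (n + 1),
      Finset.sum_range_succ' (fun r => gaussBinom (P v v) n r •
        ((σ v ^ (n + 1 - r)) ((∂ v ^ r) x) * (∂ v ^ (n + 1 - r)) y)) n]
    simp only [gaussBinom, add_smul, Finset.sum_add_distrib, gaussBinom_zero]
    rw [Finset.sum_range_succ (fun r => gaussBinom (P v v) n (r + 1) •
        ((σ v ^ (n + 1 - (r + 1))) ((∂ v ^ (r + 1)) x) * (∂ v ^ (n + 1 - (r + 1))) y)) n,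
      gaussBinom_eq_zero _ (Nat.lt_succ_self n), zero_smul, add_zero, add_assoc]

omit [DecidableEq ι] in
lemma sigma_pow_ι (t s : ι) (n : ℕ) : (σ t ^ n) (𝔵 s) = P t s ^ n • 𝔵 s := by
  induction n with
  | zero => simp
  | succ n ih => rw [pow_succ', AlgHom.mul_apply, ih, map_smul, sigma_ι, smul_smul, ← pow_succ]

variable (u v : ι)

/-- The iterated braided commutators `(ad x_v) ^ n (x_u)`. -/
def rootVec : ℕ → 𝔽
  | 0 => 𝔵 u
  | n + 1 => 𝔵 v * rootVec n - (P u v * P v v ^ n) • (rootVec n * 𝔵 v)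

local notation "𝔢" => rootVec P u v

/-- `∂_v` maps `(ad x_v) ^ (n + 1) (x_u)` to this multiple of `(ad x_v) ^ n (x_u)`. -/
def strCoef (q ω : k) (n : ℕ) : k := qInt q (n + 1) * (1 - ω * q ^ n)

local notation "ℓ" => strCoef (P v v) (P u v * P v u)

lemma strCoef_succ (q ω : k) (n : ℕ) :
    strCoef q ω (n + 1) = 1 - ω * q ^ (2 * n + 2) + q * strCoef q ω n := by
  have h1 := qInt_succ q (n + 1)
  have h2 := qInt_succ' q (n + 1)
  simp only [strCoef]
  linear_combination h2 - ω * q ^ (n + 1) * h1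

variable {P u v}

omit [DecidableEq ι] in
lemma map_rootVec (φ : 𝔽 →ₐ[k] 𝔽) {a b : k} (hu : φ (𝔵 u) = a • 𝔵 u) (hv : φ (𝔵 v) = b • 𝔵 v)
    (n : ℕ) : φ (𝔢 n) = (a * b ^ n) • 𝔢 n := by
  induction n with
  | zero => simpa [rootVec] using hu
  | succ n ih =>
    rw [rootVec, map_sub, map_smul, map_mul, map_mul, ih, hv]
    simp only [smul_mul_assoc, mul_smul_comm, smul_sub, smul_smul]
    congr 2 <;> ring

lemma skewDer_rootVec_succ_left (huv : u ≠ v) (n : ℕ) : ∂ u (𝔢 (n + 1)) = 0 := by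
  induction n with
  | zero => simp [rootVec, skewDer_mul, skewDer_ι, huv.symm]
  | succ n ih =>
    rw [rootVec, map_sub, map_smul, skewDer_mul, skewDer_mul, ih]
    simp [skewDer_ι, huv.symm]

lemma skewDer_rootVec_zero (huv : u ≠ v) : ∂ v (𝔢 0) = 0 := by
  simp [rootVec, skewDer_ι, huv]

lemma skewDer_rootVec_succ (huv : u ≠ v) (n : ℕ) : ∂ v (𝔢 (n + 1)) = ℓ n • 𝔢 n := by
  have hw (n : ℕ) : σ v (𝔢 n) = (P v u * P v v ^ n) • 𝔢 n :=
    map_rootVec _ (sigma_ι ..) (sigma_ι ..) n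
  have key (n : ℕ) : ∂ v (𝔢 (n + 1)) = 𝔢 n + P v v • (𝔵 v * ∂ v (𝔢 n))
      - (P u v * P v v ^ n) • (∂ v (𝔢 n) * 𝔵 v)
      - ((P u v * P v u) * P v v ^ (2 * n)) • 𝔢 n := by
    rw [rootVec, map_sub, map_smul, skewDer_mul, skewDer_mul, hw, sigma_ι]
    simp only [skewDer_ι, if_true, one_mul, mul_one, smul_add, smul_smul, smul_mul_assoc,
      sub_sub]
    congr 3
    ring
  induction n with
  | zero =>
    rw [key, skewDer_rootVec_zero huv]
    simp [strCoef, qInt, sub_smul]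
  | succ n ih =>
    have hr : (P v v * ℓ n) • 𝔢 (n + 1) = P v v • (𝔵 v * ℓ n • 𝔢 n)
        - (P u v * P v v ^ (n + 1)) • (ℓ n • 𝔢 n * 𝔵 v) := by
      rw [rootVec]
      simp only [smul_sub, mul_smul_comm, smul_mul_assoc, smul_smul]
      congr 2
      ring
    rw [key, ih, strCoef_succ, add_smul, sub_smul, one_smul, hr,
      show (2 * (n + 1)) = 2 * n + 2 by ring]
    abel

omit [DecidableEq ι] in
lemma rootVec_mem_pow {X : Submodule k 𝔽} (hX : ∀ s, 𝔵 s ∈ X) (n : ℕ) : 𝔢 n ∈ X ^ (n + 1) := by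
  induction n with
  | zero => simpa [rootVec] using hX u
  | succ n ih =>
    refine sub_mem ?_ (Submodule.smul_mem _ _ ?_)
    · rw [pow_succ']; exact Submodule.mul_mem_mul (hX v) ih
    · rw [pow_succ]; exact Submodule.mul_mem_mul ih (hX v)

/-- If no coefficient of the infinite string vanishes, `∂_v` lowers it. -/
def LoweringData.ofString (huv : u ≠ v) (h : ∀ n, ℓ n ≠ 0) : LoweringData k 𝔢 where
  Z :=
    { carrier := {z | ∂ u z = 0}
      mul_mem' := fun {x y} (hx : _ = _) (hy : _ = _) => by
        simp [skewDer_mul, hx, hy]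
      add_mem' := fun {x y} (hx : _ = _) (hy : _ = _) => by simp [hx, hy]
      algebraMap_mem' := fun r => skewDer_algebraMap P u r }
  φ := σ v
  D := ∂ v
  E := ∂ u
  κ := ℓ
  c := 1
  κ_ne := h
  c_ne := one_ne_zero
  D_mul _ _ _ _ := skewDer_mul P v _ _
  D_one := skewDer_one P v
  mem_Z n := skewDer_rootVec_succ_left huv n
  D_f := skewDer_rootVec_succ huv
  φ_f n := ⟨_, map_rootVec _ (sigma_ι ..) (sigma_ι ..) n⟩
  E_Z _ hz := hz
  E_f z hz := by
    have hz' : ∂ u z = 0 := hz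
    simp [rootVec, skewDer_mul, skewDer_ι, hz']

lemma skewDer_pow_rootVec (huv : u ≠ v) (r n : ℕ) :
    (∂ v ^ r) (𝔢 (n + r)) = (∏ i ∈ Finset.range r, ℓ (n + i)) • 𝔢 n := by
  induction r with
  | zero => simp
  | succ r ih =>
    rw [pow_succ, Module.End.mul_apply, ← add_assoc, skewDer_rootVec_succ huv, map_smul, ih,
      smul_smul, Finset.prod_range_succ, mul_comm]

lemma skewDer_pow_rootVec_eq_zero (huv : u ≠ v) {r n : ℕ} (h : n < r) :
    (∂ v ^ r) (𝔢 n) = 0 := by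
  obtain ⟨s, rfl⟩ : ∃ s, r = s + 1 + n := ⟨r - n - 1, by omega⟩
  have := skewDer_pow_rootVec (P := P) huv n 0
  rw [zero_add] at this
  rw [pow_add, Module.End.mul_apply, this, pow_succ, Module.End.mul_apply, map_smul,
    skewDer_rootVec_zero huv, smul_zero, map_zero]

lemma corner_rootVec_self (huv : u ≠ v) (n : ℕ) :
    ∂ u ((∂ v ^ n) (𝔢 n)) = algebraMap k 𝔽 (∏ i ∈ Finset.range n, ℓ i) := by
  have := skewDer_pow_rootVec (P := P) huv n 0
  simp only [zero_add] at this
  rw [this, map_smul, rootVec, skewDer_ι, if_pos rfl, ← Algebra.algebraMap_eq_smul_one]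

lemma corner_rootVec_ne (huv : u ≠ v) {r n : ℕ} (h : r ≠ n) :
    ∂ u ((∂ v ^ r) (𝔢 n)) = 0 := by
  rcases lt_or_gt_of_ne h with h | h
  · obtain ⟨s, rfl⟩ : ∃ s, n = s + 1 + r := ⟨n - r - 1, by omega⟩
    rw [skewDer_pow_rootVec huv, map_smul, skewDer_rootVec_succ_left huv, smul_zero]
  · rw [skewDer_pow_rootVec_eq_zero huv h, map_zero]

lemma corner_mul (n : ℕ) (x y : 𝔽) : ∂ u ((∂ v ^ n) (x * y)) =
    ∑ r ∈ Finset.range (n + 1), (gaussBinom (P v v) n r * P v u ^ (n - r)) •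
      ((σ v ^ (n - r)) (∂ u ((∂ v ^ r) x)) * (∂ v ^ (n - r)) y)
    + ∑ r ∈ Finset.range (n + 1), gaussBinom (P v v) n r •
      (σ u ((σ v ^ (n - r)) ((∂ v ^ r) x)) * ∂ u ((∂ v ^ (n - r)) y)) := by
  rw [skewDer_pow_mul, map_sum, ← Finset.sum_add_distrib]
  refine Finset.sum_congr rfl fun r _ => ?_
  rw [map_smul, skewDer_mul, skewDer_sigma_pow, smul_add, smul_mul_assoc, smul_smul]

variable (P u v)

/-- The elements killed by `∂_u ∂_v ^ i` for all `i ≤ n`. -/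
def cornerFree (n : ℕ) : Subalgebra k 𝔽 where
  carrier := {z | ∀ i ≤ n, ∂ u ((∂ v ^ i) z) = 0}
  mul_mem' := fun {x y} hx hy i hi => by
    rw [corner_mul, Finset.sum_eq_zero, Finset.sum_eq_zero, add_zero]
    · intro r _
      rw [hy _ ((Nat.sub_le _ _).trans hi), mul_zero, smul_zero]
    · intro r hr
      rw [hx r ((Nat.lt_succ_iff.1 (Finset.mem_range.1 hr)).trans hi), map_zero, zero_mul,
        smul_zero]
  add_mem' := fun {x y} hx hy i hi => by rw [map_add, map_add, hx i hi, hy i hi, add_zero]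
  algebraMap_mem' := fun r i _ => by
    cases i with
    | zero => simp
    | succ i => rw [pow_succ, Module.End.mul_apply, skewDer_algebraMap, map_zero, map_zero]

variable {P u v}

lemma rootVec_mem_cornerFree (huv : u ≠ v) (n : ℕ) : 𝔢 (n + 1) ∈ cornerFree P u v n :=
  fun _ hi => corner_rootVec_ne huv (by omega)

lemma corner_mul_of_mem {n : ℕ} {x y : 𝔽} (hx : x ∈ cornerFree P u v n)
    (hy : y ∈ cornerFree P u v n) : ∂ u ((∂ v ^ (n + 1)) (x * y)) =
      ∂ u ((∂ v ^ (n + 1)) x) * y + σ u ((σ v ^ (n + 1)) x) * ∂ u ((∂ v ^ (n + 1)) y) := by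
  rw [corner_mul, Finset.sum_eq_single (n + 1), Finset.sum_eq_single 0]
  · simp
  · intro r hr hr0
    rw [hy _ (by omega), mul_zero, smul_zero]
  · simp
  · intro r hr hrn
    rw [hx r (by have := Finset.mem_range.1 hr; omega), map_zero, zero_mul, smul_zero]
  · simp

variable (P u v)

/-- The braided commutators of `(ad x_v) ^ n (x_u)` with `(ad x_v) ^ (n + 1) (x_u)`. -/
def stringVec (n : ℕ) : ℕ → 𝔽
  | 0 => 𝔢 n
  | j + 1 => 𝔢 (n + 1) * stringVec n j
      - (P u u * P u v ^ (n + 1) * (P v u * P v v ^ (n + 1)) ^ n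
        * (P u u * P u v ^ (n + 1) * (P v u * P v v ^ (n + 1)) ^ (n + 1)) ^ j) •
        (stringVec n j * 𝔢 (n + 1))

variable {P u v}

lemma stringVec_one_mem (huv : u ≠ v) (n : ℕ) : stringVec P u v n 1 ∈ cornerFree P u v n := by
  intro i hi
  rw [stringVec, stringVec, map_sub, map_sub, map_smul, map_smul]
  rcases hi.lt_or_eq with hi | rfl
  · have h1 : ∂ u ((∂ v ^ i) (𝔢 (n + 1) * 𝔢 n)) = 0 := by
      rw [corner_mul, Finset.sum_eq_zero, Finset.sum_eq_zero, add_zero]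
      · intro r _
        rw [corner_rootVec_ne huv (by omega), mul_zero, smul_zero]
      · intro r hr
        rw [corner_rootVec_ne huv (by have := Finset.mem_range.1 hr; omega), map_zero, zero_mul,
          smul_zero]
    have h2 : ∂ u ((∂ v ^ i) (𝔢 n * 𝔢 (n + 1))) = 0 := by
      rw [corner_mul, Finset.sum_eq_zero, Finset.sum_eq_zero, add_zero]
      · intro r _
        rw [corner_rootVec_ne huv (by omega), mul_zero, smul_zero]
      · intro r hr
        rw [corner_rootVec_ne huv (by have := Finset.mem_range.1 hr; omega), map_zero, zero_mul,
          smul_zero]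
    rw [h1, h2, smul_zero, sub_zero]
  · have h1 : ∂ u ((∂ v ^ i) (𝔢 (i + 1) * 𝔢 i)) = (∏ j ∈ Finset.range i, ℓ j) •
        σ u ((σ v ^ i) (𝔢 (i + 1))) := by
      rw [corner_mul, Finset.sum_eq_zero, Finset.sum_eq_single 0, zero_add]
      · rw [Nat.sub_zero, corner_rootVec_self huv, gaussBinom_zero, one_smul,
          Algebra.algebraMap_eq_smul_one, mul_smul_comm, mul_one, pow_zero, Module.End.one_apply]
      · intro r hm hr
        rw [corner_rootVec_ne huv (by have := Finset.mem_range.1 hm; omega), mul_zero, smul_zero]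
      · simp
      · intro r hr
        rw [corner_rootVec_ne huv (by have := Finset.mem_range.1 hr; omega), map_zero, zero_mul,
          smul_zero]
    have h2 : ∂ u ((∂ v ^ i) (𝔢 i * 𝔢 (i + 1))) = (∏ j ∈ Finset.range i, ℓ j) •
        𝔢 (i + 1) := by
      rw [corner_mul, Finset.sum_eq_single i,
        Finset.sum_eq_zero (f := fun r => gaussBinom (P v v) i r • _), add_zero]
      · rw [Nat.sub_self, corner_rootVec_self huv, gaussBinom_self, AlgHom.commutes,
          ← Algebra.smul_def]
        simp
      · intro r _
        rw [corner_rootVec_ne huv (by omega), mul_zero, smul_zero]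
      · intro r _ hr
        rw [corner_rootVec_ne huv hr, map_zero, zero_mul, smul_zero]
      · simp
    rw [h1, h2, sub_eq_zero, map_rootVec (σ v ^ i) (sigma_pow_ι ..) (sigma_pow_ι ..),
      map_smul, map_rootVec _ (sigma_ι ..) (sigma_ι ..)]
    simp only [smul_smul]
    congr 1
    ring

lemma corner_stringVec_one (huv : u ≠ v) (n : ℕ)
    (h1 : P u u ^ 2 * (P u v * P v u) ^ (n + 1) = 1)
    (h2 : P u v * P v u * P v v ^ (2 * (n + 1)) = 1) :
    ∂ u ((∂ v ^ (n + 1)) (stringVec P u v n 1)) =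
      ((∏ j ∈ Finset.range (n + 1), ℓ j) * (P u u * P v u ^ n * (P u v * P v v ^ n) ^ n)
        * ℓ n) • stringVec P u v n 0 := by
  have e1 : ∂ u ((∂ v ^ (n + 1)) (𝔢 (n + 1) * 𝔢 n)) =
      (∏ j ∈ Finset.range (n + 1), ℓ j) • 𝔢 n + (qInt (P v v) (n + 1) *
        (∏ j ∈ Finset.range (n + 1), ℓ j)) • σ u ((σ v ^ n) (𝔢 n)) := by
    rw [corner_mul, Finset.sum_eq_single (n + 1),
        Finset.sum_eq_single (f := fun r => gaussBinom (P v v) (n + 1) r • _) 1]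
    · rw [Nat.sub_self, corner_rootVec_self huv, gaussBinom_self, AlgHom.commutes,
        ← Algebra.smul_def, Nat.add_sub_cancel, corner_rootVec_self huv, pow_one, pow_zero,
        pow_zero, mul_one, one_smul, gaussBinom_one, skewDer_rootVec_succ huv,
        Algebra.algebraMap_eq_smul_one, mul_smul_comm, mul_one, map_smul, map_smul, smul_smul,
        smul_smul, Finset.prod_range_succ]
      simp [mul_assoc]
    · intro r hr hr1
      have := Finset.mem_range.1 hr
      rw [corner_rootVec_ne huv (by omega), mul_zero, smul_zero]
    · simp
    · intro r _ hr
      rw [corner_rootVec_ne huv hr, map_zero, zero_mul, smul_zero]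
    · simp
  have e2 : ∂ u ((∂ v ^ (n + 1)) (𝔢 n * 𝔢 (n + 1))) =
      (qInt (P v v) (n + 1) * P v u * (∏ j ∈ Finset.range (n + 1), ℓ j)) • 𝔢 n
        + (∏ j ∈ Finset.range (n + 1), ℓ j) • σ u ((σ v ^ (n + 1)) (𝔢 n)) := by
    rw [corner_mul, Finset.sum_eq_single n,
        Finset.sum_eq_single (f := fun r => gaussBinom (P v v) (n + 1) r • _) 0]
    · rw [Nat.add_sub_cancel_left, corner_rootVec_self huv, gaussBinom_zero, AlgHom.commutes,
        ← Algebra.smul_def, Nat.sub_zero, corner_rootVec_self huv, pow_one, pow_one, pow_zero,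
        one_smul, gaussBinom_succ_self, skewDer_rootVec_succ huv,
        Algebra.algebraMap_eq_smul_one, mul_smul_comm, mul_one, smul_smul,
        smul_smul, Finset.prod_range_succ, mul_assoc (qInt (P v v) (n + 1) * P v u)]
      simp
    · intro r hm hr
      rw [corner_rootVec_ne huv (by have := Finset.mem_range.1 hm; omega), mul_zero, smul_zero]
    · simp
    · intro r _ hr
      rw [corner_rootVec_ne huv hr, map_zero, zero_mul, smul_zero]
    · simp
  simp only [stringVec, map_sub, map_smul]
  rw [e1, e2,
    map_rootVec (σ v ^ (n + 1)) (sigma_pow_ι ..) (sigma_pow_ι ..),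
    map_rootVec (σ v ^ n) (sigma_pow_ι ..) (sigma_pow_ι ..), map_smul, map_smul,
    map_rootVec _ (sigma_ι ..) (sigma_ι ..)]
  simp only [smul_smul, ← add_smul, ← sub_smul]
  congr 1
  have h3 : (P u u ^ 2 * (P u v * P v u) ^ (n + 1))
      * (P u v * P v u * P v v ^ (2 * (n + 1))) ^ n = 1 := by rw [h1, h2, one_pow, one_mul]
  rw [strCoef]
  linear_combination (- ∏ j ∈ Finset.range (n + 1), ℓ j) * h3

lemma stringVec_mem (huv : u ≠ v) (n j : ℕ) :
    stringVec P u v n (j + 1) ∈ cornerFree P u v n := by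
  induction j with
  | zero => exact stringVec_one_mem huv n
  | succ j ih =>
    rw [stringVec]
    exact sub_mem (mul_mem (rootVec_mem_cornerFree huv n) ih)
      (Subalgebra.smul_mem _ (mul_mem ih (rootVec_mem_cornerFree huv n)) _)

omit [DecidableEq ι] in
lemma map_stringVec (φ : 𝔽 →ₐ[k] 𝔽) {a b : k} (hu : φ (𝔵 u) = a • 𝔵 u)
    (hv : φ (𝔵 v) = b • 𝔵 v) (n j : ℕ) :
    φ (stringVec P u v n j) = (a * b ^ n * (a * b ^ (n + 1)) ^ j) • stringVec P u v n j := by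
  induction j with
  | zero => simpa [stringVec] using map_rootVec φ hu hv n
  | succ j ih =>
    rw [stringVec, map_sub, map_smul, map_mul, map_mul, ih, map_rootVec φ hu hv]
    simp only [smul_mul_assoc, mul_smul_comm, smul_sub, smul_smul]
    congr 2 <;> ring

lemma corner_stringVec (huv : u ≠ v) (n : ℕ)
    (h1 : P u u ^ 2 * (P u v * P v u) ^ (n + 1) = 1)
    (h2 : P u v * P v u * P v v ^ (2 * (n + 1)) = 1) (j : ℕ) :
    ∂ u ((∂ v ^ (n + 1)) (stringVec P u v n (j + 1))) =
      ((P u u * P u v ^ (n + 1) * (P v u * P v v ^ (n + 1)) ^ (n + 1)) ^ j *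
      ((∏ j ∈ Finset.range (n + 1), ℓ j) * (P u u * P v u ^ n * (P u v * P v v ^ n) ^ n)
        * ℓ n)) • stringVec P u v n j := by
  induction j with
  | zero => rw [zero_add, corner_stringVec_one huv n h1 h2, pow_zero, one_mul]
  | succ j ih =>
    have hu : ((σ u).comp (σ v ^ (n + 1))) (𝔵 u) = (P u u * P v u ^ (n + 1)) • 𝔵 u := by
      rw [AlgHom.comp_apply, sigma_pow_ι, map_smul, sigma_ι, smul_smul, mul_comm]
    have hv : ((σ u).comp (σ v ^ (n + 1))) (𝔵 v) = (P u v * P v v ^ (n + 1)) • 𝔵 v := by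
      rw [AlgHom.comp_apply, sigma_pow_ι, map_smul, sigma_ι, smul_smul, mul_comm]
    have he := map_rootVec (P := P) _ hu hv (n + 1)
    have hf := map_stringVec (P := P) _ hu hv n (j + 1)
    rw [AlgHom.comp_apply] at he hf
    have hd := rootVec_mem_cornerFree (P := P) huv n
    have hj := stringVec_mem (P := P) huv n j
    rw [stringVec, map_sub, map_sub, map_smul, map_smul, corner_mul_of_mem hd hj,
      corner_mul_of_mem hj hd, ih, he, hf, corner_rootVec_self huv]
    have h3 : (P u u ^ 2 * (P u v * P v u) ^ (n + 1))
      * (P u v * P v u * P v v ^ (2 * (n + 1))) ^ n = 1 := by rw [h1, h2, one_pow, one_mul]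
    have h4 : (P u u ^ 2 * (P u v * P v u) ^ (n + 1))
      * (P u v * P v u * P v v ^ (2 * (n + 1))) ^ (n + 1) = 1 := by
      rw [h1, h2, one_pow, one_mul]
    have h5 : (P u u * P u v ^ (n + 1) * (P v u * P v v ^ (n + 1)) ^ n
        * (P u u * P u v ^ (n + 1) * (P v u * P v v ^ (n + 1)) ^ (n + 1)) ^ (j + 1)) *
        (P u u * P v u ^ (n + 1) * (P u v * P v v ^ (n + 1)) ^ n
        * (P u u * P v u ^ (n + 1) * (P u v * P v v ^ (n + 1)) ^ (n + 1)) ^ (j + 1)) = 1 := by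
      calc _ = ((P u u ^ 2 * (P u v * P v u) ^ (n + 1))
              * (P u v * P v u * P v v ^ (2 * (n + 1))) ^ n)
            * ((P u u ^ 2 * (P u v * P v u) ^ (n + 1))
              * (P u v * P v u * P v v ^ (2 * (n + 1))) ^ (n + 1)) ^ (j + 1) := by ring
        _ = 1 := by rw [h3, h4, one_pow, one_mul]
    rw [smul_add, smul_mul_assoc _ (stringVec P u v n (j + 1)), smul_smul, h5, one_smul,
      ← Algebra.smul_def, ← Algebra.commutes, ← Algebra.smul_def, add_comm,
      add_sub_add_right_eq_sub]
    conv_rhs => rw [stringVec]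
    simp only [smul_sub, smul_mul_assoc, mul_smul_comm, smul_smul]
    congr 2 <;> ring

omit [DecidableEq ι] in
lemma stringVec_mem_pow {X : Submodule k 𝔽} (hX1 : 1 ≤ X) (hX : ∀ s, 𝔵 s ∈ X) (n j : ℕ) :
    stringVec P u v n j ∈ X ^ ((n + 2) * (j + 1)) := by
  induction j with
  | zero => exact pow_le_pow_right₀ hX1 (by omega) (rootVec_mem_pow hX n)
  | succ j ih =>
    have e : (n + 2) * (j + 1 + 1) = (n + 2) + (n + 2) * (j + 1) := by ring
    refine sub_mem ?_ (Submodule.smul_mem _ _ ?_)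
    · rw [e, pow_add]; exact Submodule.mul_mem_mul (rootVec_mem_pow hX _) ih
    · rw [e, add_comm, pow_add]; exact Submodule.mul_mem_mul ih (rootVec_mem_pow hX _)

/-- Lowering along an isotropic combination `x_u + m x_v` with `m = n + 1`. -/
def LoweringData.ofIsotropic (huv : u ≠ v) (hP : ∀ s t, P s t ≠ 0) (n : ℕ)
    (h1 : P u u ^ 2 * (P u v * P v u) ^ (n + 1) = 1)
    (h2 : P u v * P v u * P v v ^ (2 * (n + 1)) = 1) (h : ∀ j ≤ n, ℓ j ≠ 0) :
    LoweringData k (stringVec P u v n) where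
  Z := cornerFree P u v n
  φ := (σ u).comp (σ v ^ (n + 1))
  D := (∂ u).comp (∂ v ^ (n + 1))
  E := (∂ u).comp (∂ v ^ n)
  κ j := (P u u * P u v ^ (n + 1) * (P v u * P v v ^ (n + 1)) ^ (n + 1)) ^ j *
      ((∏ j ∈ Finset.range (n + 1), ℓ j) * (P u u * P v u ^ n * (P u v * P v v ^ n) ^ n) * ℓ n)
  c := ∏ i ∈ Finset.range n, ℓ i
  κ_ne j := by
    have h3 : ∏ j ∈ Finset.range (n + 1), ℓ j ≠ 0 :=
      Finset.prod_ne_zero_iff.2 fun i hi => h i (by have := Finset.mem_range.1 hi; omega)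
    have := h n le_rfl
    simp [h3, hP, this]
  c_ne := Finset.prod_ne_zero_iff.2 fun i hi => h i (by have := Finset.mem_range.1 hi; omega)
  D_mul _ hx _ hy := corner_mul_of_mem hx hy
  D_one := by rw [LinearMap.comp_apply, pow_succ, Module.End.mul_apply, skewDer_one]; simp
  mem_Z := stringVec_mem huv n
  D_f := corner_stringVec huv n h1 h2
  φ_f j := ⟨_, map_stringVec _
    (by rw [AlgHom.comp_apply, sigma_pow_ι, map_smul, sigma_ι, smul_smul])
    (by rw [AlgHom.comp_apply, sigma_pow_ι, map_smul, sigma_ι, smul_smul]) n j⟩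
  E_Z _ hz := hz n le_rfl
  E_f z hz := by
    rw [LinearMap.comp_apply, stringVec, corner_mul, Finset.sum_eq_single n,
      Finset.sum_eq_zero (f := fun r => gaussBinom (P v v) n r • _), add_zero]
    · rw [Nat.sub_self, corner_rootVec_self huv, gaussBinom_self, AlgHom.commutes,
        ← Algebra.smul_def]
      simp
    · intro r _
      rw [hz _ (Nat.sub_le _ _), mul_zero, smul_zero]
    · intro r _ hr
      rw [corner_rootVec_ne huv hr, map_zero, zero_mul, smul_zero]
    · simp

end SkewDerivations

section Realization

variable {k ι M : Type*} [Field k] [AddCommGroup M] [Module k M]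

/-- The operators that raise the filtration `𝓕` by a bounded amount. -/
def filteredOps {𝓕 : ℕ → Submodule k M} (h𝓕 : Monotone 𝓕) :
    Subalgebra k (Module.End k M) where
  carrier := {T | ∃ K, ∀ n, ∀ m ∈ 𝓕 n, T m ∈ 𝓕 (n + K)}
  mul_mem' := by
    rintro S T ⟨K, hK⟩ ⟨K', hK'⟩
    refine ⟨K' + K, fun n m hm => ?_⟩
    rw [← add_assoc]
    exact hK _ _ (hK' n m hm)
  add_mem' := by
    rintro S T ⟨K, hK⟩ ⟨K', hK'⟩
    exact ⟨K + K', fun n m hm => add_mem (h𝓕 (by omega) (hK n m hm))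
      (h𝓕 (by omega) (hK' n m hm))⟩
  algebraMap_mem' r := ⟨0, fun n m hm => by
    simpa [Module.algebraMap_end_apply] using Submodule.smul_mem _ r hm⟩

/-- Subexponential lower bound for the dimensions of a filtration. -/
def HasLargeGrowth (𝓕 : ℕ → Submodule k M) : Prop :=
  ∃ C, ∀ L, 2 ^ L ≤ Module.finrank k (𝓕 (C * (L * L)))

variable [DecidableEq ι]

/-- Raising operators `L` acting on a vacuum vector, with lowering operators `R` satisfying
skew commutation relations on a subspace stable under `L`. -/
structure Realization (P : ι → ι → k) (L R : ι → Module.End k M) (vac : M) where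
  S : Submodule k M
  vac_mem : vac ∈ S
  L_mem : ∀ t, ∀ m ∈ S, L t m ∈ S
  comm : ∀ s t, ∀ m ∈ S, R s (L t m) = (if t = s then m else 0) + P s t • L t (R s m)
  R_vac : ∀ s, R s vac = 0
  vac_ne : vac ≠ 0

namespace Realization

variable {P : ι → ι → k} {L R : ι → Module.End k M} {vac : M} (A : Realization P L R vac)

/-- The action of the free algebra on the vacuum. -/
def act (_ : Realization P L R vac) : FreeAlgebra k ι →ₗ[k] M :=
  (LinearMap.applyₗ vac).comp (FreeAlgebra.lift k L).toLinearMap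

lemma act_mul_aux (x y : FreeAlgebra k ι)
    (hy : A.act y ∈ A.S ∧ ∀ s, A.act (skewDer P s y) = R s (A.act y)) :
    A.act (x * y) ∈ A.S ∧ ∀ s, A.act (skewDer P s (x * y)) = R s (A.act (x * y)) := by
  induction x using FreeAlgebra.induction generalizing y with
  | grade0 r =>
    rw [← Algebra.smul_def, map_smul]
    exact ⟨A.S.smul_mem _ hy.1, fun s => by rw [map_smul, map_smul, map_smul, hy.2]⟩
  | grade1 t =>
    have h (z : FreeAlgebra k ι) : A.act (FreeAlgebra.ι k t * z) = L t (A.act z) := by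
      simp [act]
    refine ⟨h y ▸ A.L_mem t _ hy.1, fun s => ?_⟩
    rw [h, A.comm s t _ hy.1, skewDer_mul, skewDer_ι, sigma_ι, map_add, smul_mul_assoc, map_smul,
      h, hy.2]
    split_ifs <;> simp
  | mul x x' hx hx' => rw [mul_assoc]; exact hx _ (hx' y hy)
  | add x x' hx hx' =>
    rw [add_mul, map_add]
    refine ⟨add_mem (hx y hy).1 (hx' y hy).1, fun s => ?_⟩
    rw [map_add, map_add, map_add, (hx y hy).2, (hx' y hy).2]

lemma act_one : A.act 1 = vac := by simp [act]

lemma act_skewDer (s : ι) (x : FreeAlgebra k ι) : A.act (skewDer P s x) = R s (A.act x) := by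
  have := (A.act_mul_aux x 1 ⟨by rw [act_one]; exact A.vac_mem, fun s => by
    rw [act_one, A.R_vac, skewDer_one, map_zero]⟩).2 s
  rwa [mul_one] at this

lemma skewDer_mem_ker {s : ι} {x : FreeAlgebra k ι} (hx : x ∈ LinearMap.ker A.act) :
    skewDer P s x ∈ LinearMap.ker A.act := by
  rw [LinearMap.mem_ker] at hx ⊢
  rw [act_skewDer, hx, map_zero]

lemma skewDer_pow_mem_ker {s : ι} {x : FreeAlgebra k ι} (n : ℕ)
    (hx : x ∈ LinearMap.ker A.act) : (skewDer P s ^ n) x ∈ LinearMap.ker A.act := by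
  induction n with
  | zero => simpa using hx
  | succ n ih => rw [pow_succ', Module.End.mul_apply]; exact A.skewDer_mem_ker ih

variable [Fintype ι] {𝓕 : ℕ → Submodule k M} (h𝓕 : Monotone 𝓕) [∀ n, FiniteDimensional k (𝓕 n)]
  (hvac : vac ∈ 𝓕 0) (hL : ∀ t, L t ∈ filteredOps h𝓕)

include hvac hL in
lemma hasLargeGrowth {f : ℕ → FreeAlgebra k ι} (D : LoweringData k f)
    (hD : ∀ x ∈ LinearMap.ker A.act, D.D x ∈ LinearMap.ker A.act)
    (hE : ∀ x ∈ LinearMap.ker A.act, D.E x ∈ LinearMap.ker A.act) {c : ℕ}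
    (hf : ∀ X : Submodule k (FreeAlgebra k ι), 1 ≤ X → (∀ s, FreeAlgebra.ι k s ∈ X) →
      ∀ n, f n ∈ X ^ (c * (n + 1))) : HasLargeGrowth 𝓕 := by
  choose K hK using hL
  set X : Submodule k (FreeAlgebra k ι) :=
    Submodule.span k (insert 1 (Set.range (FreeAlgebra.ι k))) with hX
  have hX1 : 1 ≤ X := Submodule.one_le.2 (Submodule.subset_span (Set.mem_insert _ _))
  have hXι (s : ι) : FreeAlgebra.ι k s ∈ X :=
    Submodule.subset_span (Set.mem_insert_of_mem _ ⟨s, rfl⟩)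
  have hpow : ∀ n, ∀ x ∈ X ^ n, A.act x ∈ 𝓕 ((∑ t, K t) * n) := by
    intro n
    induction n with
    | zero =>
      intro x hx
      obtain ⟨r, rfl⟩ := Submodule.mem_one.1 (by simpa using hx)
      rw [Algebra.algebraMap_eq_smul_one, map_smul, act_one]
      exact Submodule.smul_mem _ _ (by simpa using hvac)
    | succ n ih =>
      intro x hx
      rw [pow_succ'] at hx
      induction hx using Submodule.mul_induction_on' with
      | mem_mul_mem x hx y hy =>
        induction hx using Submodule.span_induction with
        | mem x hx =>
          rcases hx with rfl | ⟨t, rfl⟩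
          · rw [one_mul]
            exact h𝓕 (Nat.mul_le_mul_left _ (Nat.le_succ n)) (ih y hy)
          · have h : A.act (FreeAlgebra.ι k t * y) = L t (A.act y) := by simp [act]
            rw [h]
            refine h𝓕 ?_ (hK t _ _ (ih y hy))
            rw [mul_add, mul_one]
            exact Nat.add_le_add_left
              (Finset.single_le_sum (fun _ _ => Nat.zero_le _) (Finset.mem_univ t)) _
        | zero => rw [zero_mul, map_zero]; exact zero_mem _
        | add a b _ _ ha hb => rw [add_mul, map_add]; exact add_mem ha hb
        | smul r a _ ha => rw [smul_mul_assoc, map_smul]; exact Submodule.smul_mem _ r ha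
      | add a _ b _ ha hb => rw [map_add]; exact add_mem ha hb
  refine ⟨(∑ t, K t) * c, fun N => ?_⟩
  rw [← D.finrank_sqfreeSpan N 0, mul_assoc]
  have hle := sqfreeSpan_le_pow hX1 (hf X hX1 hXι) N 0
  rw [zero_add] at hle
  refine LinearMap.finrank_le_finrank_of_injective
    (f := (A.act.restrict (fun x hx => hpow _ x (hle hx)))) ?_
  rw [injective_iff_map_eq_zero]
  intro x hx
  refine Subtype.ext (D.sqfreeSpan_inf (LinearMap.ker A.act) hD hE ?_ N 0 x.2 ?_)
  · rw [LinearMap.mem_ker, act_one]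
    exact A.vac_ne
  · exact congrArg Subtype.val hx

variable {u v : ι} (huv : u ≠ v)

include A hvac hL huv in
lemma hasLargeGrowth_of_string (h : ∀ n, strCoef (P v v) (P u v * P v u) n ≠ 0) :
    HasLargeGrowth 𝓕 :=
  A.hasLargeGrowth h𝓕 hvac hL (LoweringData.ofString huv h)
    (fun _ hx => A.skewDer_mem_ker hx) (fun _ hx => A.skewDer_mem_ker hx) (c := 1)
    (fun X _ hX n => by rw [one_mul]; exact rootVec_mem_pow hX n)

include A hvac hL huv in
lemma hasLargeGrowth_of_isotropic (hP : ∀ s t, P s t ≠ 0) (n : ℕ)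
    (h1 : P u u ^ 2 * (P u v * P v u) ^ (n + 1) = 1)
    (h2 : P u v * P v u * P v v ^ (2 * (n + 1)) = 1)
    (h : ∀ j ≤ n, strCoef (P v v) (P u v * P v u) j ≠ 0) : HasLargeGrowth 𝓕 :=
  A.hasLargeGrowth h𝓕 hvac hL (LoweringData.ofIsotropic huv hP n h1 h2 h)
    (fun _ hx => A.skewDer_mem_ker (A.skewDer_pow_mem_ker _ hx))
    (fun _ hx => A.skewDer_mem_ker (A.skewDer_pow_mem_ker _ hx)) (c := n + 2)
    (fun _ hX1 hX j => stringVec_mem_pow hX1 hX n j)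

end Realization

end Realization

section RankTwo

variable {k M : Type*} [Field k] [AddCommGroup M] [Module k M]

/-- Raising operators for two letters `a`, `b` and for their normalised braided commutator `c`,
with the skew derivations `Ra`, `Rb`. -/
structure HSystem (q p s s' : k) (La Lb Lc Ra Rb : Module.End k M) (vac : M) : Prop where
  aa : ∀ m, Ra (La m) = m + q • La (Ra m)
  ab : ∀ m, Ra (Lb m) = s • Lb (Ra m)
  ba : ∀ m, Rb (La m) = s' • La (Rb m)
  bb : ∀ m, Rb (Lb m) = m + p • Lb (Rb m)
  ac : ∀ m, Ra (Lc m) = (s * q) • Lc (Ra m)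
  bc : ∀ m, Rb (Lc m) = La m + (s' * p) • Lc (Rb m)
  comm : ∀ m, Lb (La m) = s • La (Lb m) + (1 - s * s') • Lc m
  Ra_vac : Ra vac = 0
  Rb_vac : Rb vac = 0
  vac_ne : vac ≠ 0

/-- The braiding matrix of a pair of letters. -/
def pairMatrix (tt tf ft ff : k) (x y : Bool) : k := cond x (cond y tt tf) (cond y ft ff)

namespace HSystem

variable {q p s s' : k} {La Lb Lc Ra Rb : Module.End k M} {vac : M}

/-- The braided commutators `(ad Lb) ^ j (La)`, normalised so that the first one is `Lc`. -/
def zOp (p s : k) (La Lb Lc : Module.End k M) : ℕ → Module.End k M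
  | 0 => La
  | 1 => Lc
  | j + 2 => Lb * zOp p s La Lb Lc (j + 1) - (s * p ^ (j + 1)) • (zOp p s La Lb Lc (j + 1) * Lb)

/-- The coefficients with which `Rb` lowers `zOp`. -/
def zCoef (p : k) : ℕ → k
  | 0 => 0
  | 1 => 1
  | j + 2 => strCoef p (p ^ 2) j

local notation "Z" => zOp p s La Lb Lc

lemma zOp_mem {𝓕 : ℕ → Submodule k M} (h𝓕 : Monotone 𝓕) (ha : La ∈ filteredOps h𝓕)
    (hb : Lb ∈ filteredOps h𝓕) (hc : Lc ∈ filteredOps h𝓕) (j : ℕ) : Z j ∈ filteredOps h𝓕 := by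
  induction j using zOp.induct with
  | case1 => exact ha
  | case2 => exact hc
  | case3 j ih => exact sub_mem (mul_mem hb ih) (Subalgebra.smul_mem _ (mul_mem ih hb) _)

variable (H : HSystem q p s s' La Lb Lc Ra Rb vac)
include H

lemma Ra_zOp_succ (j : ℕ) (m : M) : Ra (Z (j + 1) m) = (s ^ (j + 1) * q) • Z (j + 1) (Ra m) := by
  induction j generalizing m with
  | zero => rw [zOp, H.ac, zero_add, pow_one]
  | succ j ih =>
    simp only [zOp, LinearMap.sub_apply, LinearMap.smul_apply, Module.End.mul_apply, map_sub,
      map_smul, H.ab, ih]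
    module

lemma Rb_commutator {z ρ : Module.End k M} {c d t : k}
    (hz : ∀ m, Rb (z m) = ρ m + c • z (Rb m)) (hρ : ∀ m, p • Lb (ρ m) = d • ρ (Lb m) + t • z m)
    (m : M) : Rb ((Lb * z - d • (z * Lb)) m) =
      (1 - d * c + t) • z m + (p * c) • (Lb * z - d • (z * Lb)) (Rb m) := by
  have h := hρ m
  simp only [LinearMap.sub_apply, LinearMap.smul_apply, Module.End.mul_apply, map_sub,
    map_smul, H.bb, hz, map_add, smul_add, h]
  module

lemma Rb_zOp (hs : s * s' = 1) (j : ℕ) (m : M) :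
    Rb (Z j m) = zCoef p j • Z (j - 1) m + (s' * p ^ j) • Z j (Rb m) := by
  induction j using zOp.induct generalizing m with
  | case1 => simp [zOp, zCoef, H.ba]
  | case2 => simp [zOp, zCoef, H.bc]
  | case3 j ih =>
    have ih' : ∀ m, Rb (Z (j + 1) m) = (zCoef p (j + 1) • Z j) m
      + (s' * p ^ (j + 1)) • Z (j + 1) (Rb m) := ih
    have h : ∀ m, p • Lb ((zCoef p (j + 1) • Z j) m) =
        (s * p ^ (j + 1)) • (zCoef p (j + 1) • Z j) (Lb m)
          + (zCoef p (j + 2) - 1 + p ^ (2 * (j + 1))) • Z (j + 1) m := by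
      intro m
      cases j with
      | zero =>
        simp [zOp, zCoef, H.comm, hs, strCoef, qInt, smul_smul, mul_comm p s]
      | succ j =>
        rw [zCoef, zCoef, strCoef_succ, zOp.eq_3]
        simp only [LinearMap.sub_apply, LinearMap.smul_apply, Module.End.mul_apply, map_smul]
        module
    rw [zOp, H.Rb_commutator ih' h]
    congr 2
    · linear_combination (-p ^ (2 * (j + 1))) * hs
    · rw [Nat.succ_eq_add_one]
      ring

omit H in
/-- The coefficients of `Rb ^ l` applied to `zOp j`. -/
def powCoef (p s' : k) (j : ℕ) : ℕ → ℕ → k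
  | 0, 0 => 1
  | 0, _ + 1 => 0
  | l + 1, 0 => s' * p ^ j * powCoef p s' j l 0
  | l + 1, r + 1 => zCoef p (j - r) * powCoef p s' j l r
      + s' * p ^ (j - (r + 1)) * powCoef p s' j l (r + 1)

omit H in
lemma powCoef_zero (j l : ℕ) : powCoef p s' j l 0 = (s' * p ^ j) ^ l := by
  induction l with
  | zero => simp [powCoef]
  | succ l ih => rw [powCoef, ih, pow_succ']

omit H in
lemma powCoef_eq_zero {j l r : ℕ} (h : l < r) : powCoef p s' j l r = 0 := by
  induction l generalizing r with
  | zero => obtain ⟨r, rfl⟩ : ∃ r', r = r' + 1 := ⟨r - 1, by omega⟩; rfl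
  | succ l ih =>
    obtain ⟨r, rfl⟩ : ∃ r', r = r' + 1 := ⟨r - 1, by omega⟩
    rw [powCoef, ih (by omega), ih (by omega), mul_zero, mul_zero, add_zero]

omit H in
lemma powCoef_self_ne_zero {j : ℕ} (h : ∀ i, 0 < i → i ≤ j → zCoef p i ≠ 0) {l : ℕ}
    (hl : l ≤ j) : powCoef p s' j l l ≠ 0 := by
  induction l with
  | zero => simp [powCoef]
  | succ l ih =>
    rw [powCoef, powCoef_eq_zero (Nat.lt_succ_self l), mul_zero, add_zero]
    exact mul_ne_zero (h _ (by omega) (by omega)) (ih (by omega))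

lemma Rb_pow_zOp (hs : s * s' = 1) (j l : ℕ) (m : M) :
    (Rb ^ l) (Z j m) = ∑ r ∈ Finset.range (l + 1),
      powCoef p s' j l r • Z (j - r) ((Rb ^ (l - r)) m) := by
  induction l with
  | zero => simp [powCoef]
  | succ l ih =>
    have hstep : ∀ r ∈ Finset.range (l + 1),
        Rb (powCoef p s' j l r • Z (j - r) ((Rb ^ (l - r)) m)) =
        (zCoef p (j - r) * powCoef p s' j l r) • Z (j - (r + 1)) ((Rb ^ (l + 1 - (r + 1))) m)
        + (s' * p ^ (j - r) * powCoef p s' j l r) • Z (j - r) ((Rb ^ (l + 1 - r)) m) := by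
      intro r hr
      rw [map_smul, H.Rb_zOp hs, Nat.succ_sub (Nat.lt_succ_iff.1 (Finset.mem_range.1 hr)),
        pow_succ' Rb, Module.End.mul_apply, Nat.sub_sub, Nat.add_sub_add_right]
      module
    rw [pow_succ', Module.End.mul_apply, ih, map_sum, Finset.sum_congr rfl hstep,
      Finset.sum_add_distrib, Finset.sum_range_succ' _ (l + 1),
      Finset.sum_range_succ' (fun r => (s' * p ^ (j - r) * powCoef p s' j l r) •
        Z (j - r) ((Rb ^ (l + 1 - r)) m)) l]
    simp only [powCoef, add_smul, Finset.sum_add_distrib]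
    rw [Finset.sum_range_succ (fun r => (s' * p ^ (j - (r + 1)) * powCoef p s' j l (r + 1)) •
        Z (j - (r + 1)) ((Rb ^ (l + 1 - (r + 1))) m)) l,
      powCoef_eq_zero (Nat.lt_succ_self l), mul_zero, zero_smul, add_zero, add_assoc, Nat.sub_zero]

omit H in
/-- The iterated twisted commutators of the lowering operators. -/
def lowComm (s' : k) (Ra Rb : Module.End k M) (l : ℕ) : Module.End k M :=
  Ra * Rb ^ l - s' ^ l • (Rb ^ l * Ra)

local notation "C" => lowComm s' Ra Rb

lemma Rb_pow_La (l : ℕ) (m : M) : (Rb ^ l) (La m) = s' ^ l • La ((Rb ^ l) m) := by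
  induction l generalizing m with
  | zero => simp
  | succ l ih =>
    rw [pow_succ, Module.End.mul_apply, H.ba, map_smul, ih, smul_smul, Module.End.mul_apply,
      ← pow_succ']

lemma lowComm_La (l : ℕ) (m : M) : C l (La m) = (q * s' ^ l) • La (C l m) := by
  simp only [lowComm, LinearMap.sub_apply, LinearMap.smul_apply, Module.End.mul_apply,
    H.Rb_pow_La, map_smul, H.aa, map_add, map_sub]
  module

lemma lowComm_zOp (hs : s * s' = 1) (j l : ℕ) (hl : l ≤ j + 1) (m : M) :
    C l (Z (j + 1) m) = (if l = j + 1 then powCoef p s' (j + 1) l l • m else 0) +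
      ∑ r ∈ Finset.range (l + 1), (powCoef p s' (j + 1) l r * q * s ^ (j + 1 - r)) •
        Z (j + 1 - r) (C (l - r) m) := by
  have hss (r : ℕ) (hr : r ≤ l) : s' ^ l * s ^ (j + 1) = s ^ (j + 1 - r) * s' ^ (l - r) := by
    obtain ⟨t, rfl⟩ := Nat.exists_eq_add_of_le hr
    obtain ⟨t', ht⟩ := Nat.exists_eq_add_of_le hl
    rw [ht, Nat.add_sub_cancel_left, show r + t + t' - r = t + t' by omega]
    calc _ = (s * s') ^ r * (s ^ (t + t') * s' ^ t) := by ring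
      _ = _ := by rw [hs, one_pow, one_mul]
  have hterm : ∀ r ∈ Finset.range (l + 1),
      powCoef p s' (j + 1) l r • Ra (Z (j + 1 - r) ((Rb ^ (l - r)) m))
        - (s' ^ l * (s ^ (j + 1) * q)) • powCoef p s' (j + 1) l r •
          Z (j + 1 - r) ((Rb ^ (l - r)) (Ra m)) =
      (if r = j + 1 then powCoef p s' (j + 1) l r • m else 0) +
      (powCoef p s' (j + 1) l r * q * s ^ (j + 1 - r)) • Z (j + 1 - r) (C (l - r) m) := by
    intro r hr
    have hrl : r ≤ l := Nat.lt_succ_iff.1 (Finset.mem_range.1 hr)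
    have h := hss r hrl
    rw [← mul_assoc, h]
    rcases (hrl.trans hl).eq_or_lt with rfl | hlt
    · obtain rfl : l = j + 1 := le_antisymm hl hrl
      simp [lowComm, zOp, H.aa, smul_smul, mul_comm q]
    · obtain ⟨i, hi⟩ : ∃ i, j + 1 - r = i + 1 := ⟨j - r, by omega⟩
      rw [if_neg hlt.ne, zero_add, hi, H.Ra_zOp_succ]
      simp only [lowComm, LinearMap.sub_apply, LinearMap.smul_apply, Module.End.mul_apply,
        map_sub, map_smul]
      module
  rw [lowComm, LinearMap.sub_apply, LinearMap.smul_apply, Module.End.mul_apply,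
    Module.End.mul_apply, H.Ra_zOp_succ, map_smul, H.Rb_pow_zOp hs, H.Rb_pow_zOp hs, map_sum,
    smul_smul, Finset.smul_sum, ← Finset.sum_sub_distrib]
  simp only [map_smul]
  rw [Finset.sum_congr rfl hterm, Finset.sum_add_distrib, Finset.sum_ite_eq']
  congr 1
  by_cases h : l = j + 1
  · subst h; simp
  · rw [if_neg h, if_neg (by rw [Finset.mem_range]; omega)]

/-- The realization given by `La` and `zOp (j + 1)`. -/
def realizationZ (hs : s * s' = 1) (j : ℕ) (hj : ∀ i, 0 < i → i ≤ j + 1 → zCoef p i ≠ 0) :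
    Realization (pairMatrix q (s ^ (j + 1) * q) (q * s' ^ (j + 1)) (q * p ^ (j + 1) ^ 2))
      (fun t => cond t La (Z (j + 1)))
      (fun t => cond t Ra ((powCoef p s' (j + 1) (j + 1) (j + 1))⁻¹ • C (j + 1))) vac where
  S := ⨅ l : Fin (j + 1), LinearMap.ker (C l)
  vac_mem := by
    refine (Submodule.mem_iInf _).2 fun l => ?_
    rw [LinearMap.mem_ker]
    obtain ⟨l, hl⟩ := l
    cases l with
    | zero => simp [lowComm]
    | succ l => simp [lowComm, pow_succ, H.Ra_vac, H.Rb_vac]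
  L_mem t m hm := by
    simp only [Submodule.mem_iInf, LinearMap.mem_ker] at hm ⊢
    intro l
    cases t
    · rw [cond_false, H.lowComm_zOp hs j l l.2.le, if_neg l.2.ne, Finset.sum_eq_zero, add_zero]
      intro r _
      rw [hm ⟨l - r, by omega⟩, map_zero, smul_zero]
    · rw [cond_true, H.lowComm_La, hm, map_zero, smul_zero]
  comm x y m hm := by
    simp only [Submodule.mem_iInf, LinearMap.mem_ker] at hm
    have hne := powCoef_self_ne_zero (s' := s') hj le_rfl
    cases x <;> cases y
    · simp only [cond_false, if_true, LinearMap.smul_apply, pairMatrix]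
      rw [H.lowComm_zOp hs j (j + 1) le_rfl, if_pos rfl, Finset.sum_eq_single 0]
      · rw [smul_add, inv_smul_smul₀ hne, powCoef_zero, map_smul, Nat.sub_zero]
        congr 1
        rw [smul_smul, smul_smul]
        congr 1
        have h1 : s ^ (j + 1) * s' ^ (j + 1) = 1 := by rw [← mul_pow, hs, one_pow]
        rw [mul_pow, ← pow_mul, ← sq, mul_comm]
        linear_combination (powCoef p s' (j + 1) (j + 1) (j + 1))⁻¹ * q * p ^ (j + 1) ^ 2 * h1
      · intro r hr hr0
        rw [hm ⟨j + 1 - r, by omega⟩, map_zero, smul_zero]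
      · simp
    · simp [H.lowComm_La, pairMatrix, smul_smul, mul_comm]
    · simp [H.Ra_zOp_succ, pairMatrix]
    · simp [H.aa, pairMatrix]
  R_vac x := by
    cases x
    · simp [lowComm, pow_succ, H.Ra_vac, H.Rb_vac]
    · simp [H.Ra_vac]
  vac_ne := H.vac_ne

end HSystem

end RankTwo

section SwappedPair

variable {k M : Type*} [Field k] [AddCommGroup M] [Module k M]

namespace HSystem

variable {q p s s' : k} {La Lb Lc Ra Rb : Module.End k M} {vac : M}

local notation "Z" => zOp p s La Lb Lc

lemma zOp_two (m : M) : Z 2 m = Lb (Lc m) - (s * p) • Lc (Lb m) := by simp [zOp]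

variable (H : HSystem q p s s' La Lb Lc Ra Rb vac)
include H

lemma Rb_zOp_two (m : M) :
    Rb (Z 2 m) = ((1 + p) * (1 - s * s' * p)) • Lc m + (s' * p ^ 2) • Z 2 (Rb m) := by
  simp only [zOp_two, map_sub, map_smul, H.bb, H.bc, H.comm, map_add]
  module

lemma Ra_uv (m : M) : Ra (Lc (La m) - (s * q) • La (Lc m)) =
    (s * q ^ 2) • (Lc (La (Ra m)) - (s * q) • La (Lc (Ra m))) := by
  simp only [map_sub, map_smul, H.aa, H.ac, map_add]
  module

omit H in
/-- The second raising operator of the pair starting with `Lc`; here `η` stands for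
`(1 + s * s' * (p * q))⁻¹`. -/
def vOp (q p s s' η : k) (La Lb Lc : Module.End k M) : Module.End k M :=
  zOp p s La Lb Lc 2 * La - (s ^ 2 * q) • (La * zOp p s La Lb Lc 2) -
    ((1 + p) * (1 - s * s' * p) * (1 - s * s') * s * q * η) • (Lc * Lc)

variable {η : k}

local notation "V" => vOp q p s s' η La Lb Lc

lemma Ra_vOp (m : M) : Ra (V m) = (s ^ 2 * q ^ 2) • V (Ra m) := by
  simp only [vOp, LinearMap.sub_apply, LinearMap.smul_apply, Module.End.mul_apply, map_sub,
    map_smul, H.aa, H.ac, map_add, H.Ra_zOp_succ 1]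
  module

lemma Rb_vOp (hη : η * (1 + s * s' * (p * q)) = 1) (m : M) :
    Rb (V m) = ((1 + p) * (1 - s * s' * p) * (1 + (s * s') ^ 2 * (p * q)) * η) •
      (Lc (La m) - (s * q) • La (Lc m)) + (s' ^ 2 * p ^ 2) • V (Rb m) := by
  simp only [vOp, LinearMap.sub_apply, LinearMap.smul_apply, Module.End.mul_apply, map_sub,
    map_smul, H.ba, H.bc, map_add, H.Rb_zOp_two, smul_sub]
  match_scalars
  · linear_combination (-(1 + p) * (1 - s * s' * p)) * hη
  · ring
  · linear_combination (s * q * s * s' * (1 + p) * (1 - s * s' * p)) * hη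
  · ring
  · ring

/-- The realization given by `Lc` and `vOp`. -/
def realizationV (hη : η * (1 + s * s' * (p * q)) = 1) {δ : k}
    (hδ : δ * ((1 + p) * (1 - s * s' * p) * (1 + (s * s') ^ 2 * (p * q)) * (1 - s * s' * q) *
      (1 + q) * η) = 1) :
    Realization (pairMatrix (s * s' * (p * q)) ((s * s' * (p * q)) ^ 2)
        ((s * s' * (p * q)) ^ 2) ((s * s' * (p * q)) ^ 4))
      (fun t => cond t Lc V)
      (fun t => cond t (Ra * Rb) (δ • (Ra * Ra * Rb * Rb -
        (s' * (1 + p) * (1 + q) * η) • (Ra * Rb * Ra * Rb)))) vac where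
  S := LinearMap.ker Ra ⊓ LinearMap.ker (Ra * Ra * Rb)
  vac_mem := by simp [H.Ra_vac, H.Rb_vac]
  L_mem t m hm := by
    simp only [Submodule.mem_inf, LinearMap.mem_ker, Module.End.mul_apply] at hm ⊢
    obtain ⟨h1, h2⟩ := hm
    cases t
    · simp only [cond_false, H.Ra_vOp, H.Rb_vOp hη, h1, h2, map_add, map_smul, H.Ra_uv]
      simp
    · simp only [cond_true, H.ac, H.bc, H.aa, h1, h2, map_add, map_smul]
      simp
  comm x y m hm := by
    simp only [Submodule.mem_inf, LinearMap.mem_ker, Module.End.mul_apply] at hm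
    obtain ⟨h1, h2⟩ := hm
    cases x <;> cases y
    · simp only [cond_false, if_true, LinearMap.smul_apply, LinearMap.sub_apply,
        Module.End.mul_apply, pairMatrix, H.Ra_vOp, H.Rb_vOp hη, h2, map_add, map_smul,
        H.ac, H.bc, H.ba, H.aa, map_sub, h1, smul_zero, map_zero, add_zero]
      match_scalars
      · linear_combination hδ
      all_goals ring
    · simp only [cond_false, cond_true, LinearMap.smul_apply, LinearMap.sub_apply,
        Module.End.mul_apply, pairMatrix, h1, h2, map_add, map_smul,
        H.ac, H.bc, H.ba, H.aa, map_sub, smul_zero, map_zero, add_zero, reduceCtorEq,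
        if_false]
      match_scalars
      · linear_combination (-δ * s' * (1 + p) * (1 + q)) * hη
      all_goals ring
    · simp only [cond_false, cond_true,
        Module.End.mul_apply, pairMatrix, H.Ra_vOp, H.Rb_vOp hη, h1, map_add, map_smul,
        H.Ra_uv, smul_zero, map_zero, sub_zero, zero_add, reduceCtorEq, if_false]
      module
    · simp only [cond_true, if_true, Module.End.mul_apply, pairMatrix, h1, map_add, map_smul,
        H.ac, H.bc, H.aa, smul_zero, map_zero, add_zero]
      module
  R_vac x := by cases x <;> simp [H.Rb_vac]
  vac_ne := H.vac_ne

/-- The system with `La` and `Lc` as letters, when `p = 1`; here `γ` stands for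
`(1 - q ^ 2)⁻¹`. -/
lemma swapped (hs : s * s' = 1) (hp : p = 1) {γ : k} (hγ : γ * (1 - q ^ 2) = 1) :
    HSystem q q (q * s') (s * q) Lc La (γ • (La * Lc - (q * s') • (Lc * La)))
      (Ra * Rb - s' • (Rb * Ra)) Ra vac where
  aa m := by
    subst hp
    simp only [LinearMap.sub_apply, LinearMap.smul_apply, Module.End.mul_apply, map_add, map_smul,
        H.ac, H.bc, H.aa, map_sub]
    match_scalars
    · ring
    · linear_combination (-q) * hs
    · linear_combination q * hs
    · linear_combination (-q * s') * hs
  ab m := by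
    simp only [LinearMap.smul_apply, LinearMap.sub_apply, Module.End.mul_apply, map_add, map_smul,
        H.ba, H.aa, map_sub]
    module
  ba := H.ac
  bb := H.aa
  ac m := by
    subst hp
    simp only [LinearMap.smul_apply, LinearMap.sub_apply, Module.End.mul_apply, map_add, map_smul,
        H.ac, H.bc, H.aa, H.ba, map_sub]
    match_scalars
    · linear_combination γ * q ^ 2 * s' * hs
    · linear_combination (-γ * q ^ 2 * s' * (1 - q)) * hs
    · ring
    · linear_combination γ * q ^ 2 * s' * hs
    · linear_combination (-γ * q ^ 2 * s' ^ 2) * hs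
    · linear_combination (-γ * q ^ 3 * s' ^ 2) * hs
    · linear_combination γ * q ^ 3 * s' ^ 3 * hs
  bc m := by
    simp only [LinearMap.smul_apply, LinearMap.sub_apply, Module.End.mul_apply, map_add, map_smul,
        H.ac, H.aa, map_sub]
    match_scalars
    · linear_combination hγ - γ * q ^ 2 * hs
    all_goals ring
  comm m := by
    simp only [LinearMap.smul_apply, LinearMap.sub_apply, Module.End.mul_apply]
    match_scalars
    · linear_combination -hγ + γ * q ^ 2 * hs
    · linear_combination q * s' * hγ - γ * q ^ 3 * s' * hs
  Ra_vac := by simp [H.Ra_vac, H.Rb_vac]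
  Rb_vac := H.Ra_vac
  vac_ne := H.vac_ne

end HSystem

end SwappedPair

section CaseAnalysis

variable {k : Type*} [Field k]

lemma qInt_ne_zero {q : k} {n : ℕ} (h : q ^ n ≠ 1) : qInt q n ≠ 0 := fun h0 =>
  h (sub_eq_zero.1 (by rw [← qInt_mul, h0, zero_mul])).symm

lemma strCoef_ne_zero {q ω : k} {n : ℕ} (h : q ^ (n + 1) ≠ 1) (h' : ω * q ^ n ≠ 1) :
    strCoef q ω n ≠ 0 :=
  mul_ne_zero (qInt_ne_zero h) (sub_ne_zero.2 h'.symm)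

lemma HSystem.zCoef_ne_zero {p : k} {i : ℕ} (hi : 0 < i) (h : i = 1 ∨ i < orderOf p) :
    HSystem.zCoef p i ≠ 0 := by
  obtain ⟨i, rfl⟩ : ∃ i', i = i' + 1 := ⟨i - 1, by omega⟩
  cases i with
  | zero => exact one_ne_zero
  | succ i =>
    refine strCoef_ne_zero (pow_ne_one_of_lt_orderOf (by omega) (by omega)) ?_
    rw [← pow_add]
    exact pow_ne_one_of_lt_orderOf (by omega) (by omega)

lemma one_add_pow_ne_zero [CharZero k] {q : k} (hq : Odd (orderOf q)) (n : ℕ) :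
    1 + q ^ n ≠ 0 := by
  intro h
  have h1 : q ^ n = -1 := by linear_combination h
  have h2 : (q ^ n) ^ orderOf q = 1 := by rw [← pow_mul, mul_comm, pow_mul, pow_orderOf_eq_one,
    one_pow]
  rw [h1, hq.neg_one_pow] at h2
  exact (by norm_num : (-1 : k) ≠ 1) h2

lemma exists_isotropic_length {q π : k} {e : ℕ} (hq : Odd (orderOf q)) (hq1 : orderOf q ≠ 1)
    (hπ : orderOf π = 2 ^ (e + 1)) : ∃ n, q ^ (2 * (n + 2)) = 1 ∧ π ^ (2 * (n + 1)) = 1 ∧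
      ∀ j ≤ n, strCoef (q * π) (q ^ 2) j ≠ 0 := by
  set N := orderOf q with hN
  have hN0 : 0 < N := hq.pos
  have hco (f : ℕ) : N.Coprime (2 ^ f) := (Nat.coprime_two_right.2 hq).pow_right f
  have hlt := Nat.chineseRemainder_lt_mul (hco e) (N - 1) 0 hN0.ne' (by positivity)
  obtain ⟨hm1, hm2⟩ := (Nat.chineseRemainder (hco e) (N - 1) 0).2
  generalize (Nat.chineseRemainder (hco e) (N - 1) 0 : ℕ) = m at hlt hm1 hm2
  have hNm : N ∣ m + 1 := by
    refine (Nat.modEq_zero_iff_dvd).1 ((hm1.add_right 1).trans ?_)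
    rw [Nat.sub_add_cancel hN0]
    exact Nat.modEq_zero_iff_dvd.2 dvd_rfl
  have hem : 2 ^ e ∣ m := Nat.modEq_zero_iff_dvd.1 hm2
  obtain ⟨n, rfl⟩ : ∃ n, m = n + 1 := by
    refine ⟨m - 1, (Nat.sub_add_cancel (Nat.pos_of_ne_zero ?_)).symm⟩
    rintro rfl
    exact hq1 (Nat.dvd_one.1 hNm)
  have hord : orderOf (q * π) = N * 2 ^ (e + 1) := by
    rw [← hπ]
    exact (Commute.all q π).orderOf_mul_eq_mul_orderOf_of_coprime (by rw [hπ]; exact hco _)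
  have hπdvd (x : ℕ) : π ^ (2 * x) = 1 ↔ 2 ^ e ∣ x := by
    rw [← orderOf_dvd_iff_pow_eq_one, hπ, pow_succ', Nat.mul_dvd_mul_iff_left two_pos]
  refine ⟨n, orderOf_dvd_iff_pow_eq_one.1 (hNm.mul_left 2), (hπdvd _).2 hem, fun j hj =>
    strCoef_ne_zero (pow_ne_one_of_lt_orderOf (by omega) ?_) fun h => ?_⟩
  · rw [hord, pow_succ]
    nlinarith
  · have h' : q ^ (j + 2) * π ^ j = 1 := by rw [← h]; ring
    have hπj : 2 ^ (e + 1) ∣ j := by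
      refine Nat.Coprime.dvd_of_dvd_mul_right (hco (e + 1)).symm (n := N) ?_
      rw [← hπ, orderOf_dvd_iff_pow_eq_one]
      have h2 : (q ^ (j + 2) * π ^ j) ^ N = 1 := by rw [h', one_pow]
      rwa [mul_pow, ← pow_mul, ← pow_mul, mul_comm (j + 2) N, pow_mul q, hN, pow_orderOf_eq_one,
        one_pow, one_mul, ← hN] at h2
    obtain ⟨r, rfl⟩ : 2 ∣ j := (dvd_pow_self 2 e.succ_ne_zero).trans hπj
    have her : 2 ^ e ∣ r := by rwa [pow_succ', Nat.mul_dvd_mul_iff_left two_pos] at hπj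
    rw [(hπdvd r).2 her, mul_one, ← orderOf_dvd_iff_pow_eq_one, ← hN] at h'
    have hNr : N ∣ r + 1 := by
      refine Nat.Coprime.dvd_of_dvd_mul_left (Nat.coprime_two_right.2 hq) (m := 2) ?_
      rwa [mul_add]
    have hdvd : N * 2 ^ e ∣ n + 1 - r := by
      refine (hco e).mul_dvd_of_dvd_of_dvd ?_ (Nat.dvd_sub hem her)
      have := Nat.dvd_sub hNm hNr
      rwa [Nat.add_sub_add_right] at this
    have := Nat.le_of_dvd (by omega) hdvd
    omega

variable {M : Type*} [AddCommGroup M] [Module k M]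

namespace HSystem

variable {q p s s' : k} {La Lb Lc Ra Rb : Module.End k M} {vac : M}
  {𝓕 : ℕ → Submodule k M} (h𝓕 : Monotone 𝓕) [∀ n, FiniteDimensional k (𝓕 n)]
  (hvac : vac ∈ 𝓕 0) (ha : La ∈ filteredOps h𝓕) (hb : Lb ∈ filteredOps h𝓕)
  (hc : Lc ∈ filteredOps h𝓕) (H : HSystem q p s s' La Lb Lc Ra Rb vac)
include hvac ha hb hc H

lemma hasLargeGrowth_of_zOp (hs : s * s' = 1) (j : ℕ) (hj : j = 0 ∨ j + 1 < orderOf p) {u v : Bool}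
    (huv : u ≠ v)
    (h : ∀ n, strCoef (cond v q (q * p ^ (j + 1) ^ 2)) (q ^ 2) n ≠ 0) : HasLargeGrowth 𝓕 := by
  have h1 : s ^ (j + 1) * s' ^ (j + 1) = 1 := by rw [← mul_pow, hs, one_pow]
  refine (H.realizationZ hs j fun i hi hij => zCoef_ne_zero hi (by omega)).hasLargeGrowth_of_string
    h𝓕 hvac (fun t => ?_) huv fun n => ?_
  · cases t
    exacts [zOp_mem h𝓕 ha hb hc _, ha]
  · convert h n using 2
    · cases v <;> rfl
    · cases u <;> cases v <;> simp only [ne_eq, not_true_eq_false, pairMatrix, cond] at huv ⊢ <;>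
        linear_combination q ^ 2 * h1

lemma hasLargeGrowth_of_zOp_isotropic (hs : s * s' = 1) (hq0 : q ≠ 0) (hp0 : p ≠ 0) (j : ℕ)
    (hj : j = 0 ∨ j + 1 < orderOf p) {u v : Bool} (huv : u ≠ v) (n : ℕ)
    (h1 : (cond u q (q * p ^ (j + 1) ^ 2)) ^ 2 * (q ^ 2) ^ (n + 1) = 1)
    (h2 : q ^ 2 * (cond v q (q * p ^ (j + 1) ^ 2)) ^ (2 * (n + 1)) = 1)
    (h : ∀ i ≤ n, strCoef (cond v q (q * p ^ (j + 1) ^ 2)) (q ^ 2) i ≠ 0) :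
    HasLargeGrowth 𝓕 := by
  have hss : s ^ (j + 1) * s' ^ (j + 1) = 1 := by rw [← mul_pow, hs, one_pow]
  have hs0 : s ≠ 0 := left_ne_zero_of_mul_eq_one hs
  have hs0' : s' ≠ 0 := right_ne_zero_of_mul_eq_one hs
  have hω (x y : Bool) (hxy : x ≠ y) : pairMatrix q (s ^ (j + 1) * q) (q * s' ^ (j + 1))
      (q * p ^ (j + 1) ^ 2) x y * pairMatrix q (s ^ (j + 1) * q) (q * s' ^ (j + 1))
      (q * p ^ (j + 1) ^ 2) y x = q ^ 2 := by
    cases x <;> cases y <;> simp only [ne_eq, not_true_eq_false, pairMatrix, cond] at hxy ⊢ <;>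
      linear_combination q ^ 2 * hss
  have hd (x : Bool) : pairMatrix q (s ^ (j + 1) * q) (q * s' ^ (j + 1)) (q * p ^ (j + 1) ^ 2) x x
      = cond x q (q * p ^ (j + 1) ^ 2) := by cases x <;> rfl
  refine (H.realizationZ hs j fun i hi hij =>
    zCoef_ne_zero hi (by omega)).hasLargeGrowth_of_isotropic h𝓕 hvac (fun t => ?_) huv
    (fun x y => ?_) n ?_ ?_ fun i hi => ?_
  · cases t
    exacts [zOp_mem h𝓕 ha hb hc _, ha]
  · cases x <;> cases y <;> simp [pairMatrix, hs0, hs0', hq0, hp0]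
  · rw [hd, hω _ _ huv, h1]
  · rw [hd, hω _ _ huv, h2]
  · rw [hd, hω _ _ huv]
    exact h i hi

lemma hasLargeGrowth_of_orderOf_eq_zero (hs : s * s' = 1) (hq : orderOf q = 0) :
    HasLargeGrowth 𝓕 := by
  have hpow (n : ℕ) (hn : 0 < n) : q ^ n ≠ 1 := fun h =>
    hn.ne' (Nat.eq_zero_of_zero_dvd (hq ▸ orderOf_dvd_of_pow_eq_one h))
  refine H.hasLargeGrowth_of_zOp h𝓕 hvac ha hb hc hs 0 (.inl rfl) (u := false) (v := true) (by simp)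
    fun n => strCoef_ne_zero (hpow _ n.succ_pos) ?_
  rw [cond_true, ← pow_add]
  exact hpow _ (by omega)

lemma hasLargeGrowth_of_even_of_pow (hs : s * s' = 1) (hq0 : q ≠ 0) (hp0 : p ≠ 0)
    (hq : Even (orderOf q)) (hq2 : 2 < orderOf q) (j : ℕ) (hj : j = 0 ∨ j + 1 < orderOf p)
    (hπ : p ^ (2 * (j + 1)) = 1) : HasLargeGrowth 𝓕 := by
  obtain ⟨N, hN⟩ := hq
  obtain ⟨n, rfl⟩ : ∃ n, N = n + 2 := ⟨N - 2, by omega⟩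
  have hqN : q ^ (2 * (n + 2)) = 1 := by
    rw [← orderOf_dvd_iff_pow_eq_one, hN, two_mul]
  refine H.hasLargeGrowth_of_zOp_isotropic h𝓕 hvac ha hb hc hs hq0 hp0 j hj (u := false)
    (v := true) (by simp) n ?_ ?_ fun i hi => strCoef_ne_zero
      (pow_ne_one_of_lt_orderOf (by omega) (by rw [cond_true]; omega)) ?_
  · calc _ = q ^ (2 * (n + 2)) * (p ^ (2 * (j + 1))) ^ (j + 1) := by rw [cond_false]; ring
      _ = 1 := by rw [hqN, hπ, one_pow, one_mul]
  · rw [cond_true, ← hqN]; ring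
  · rw [cond_true, ← pow_add]
    exact pow_ne_one_of_lt_orderOf (by omega) (by omega)

lemma hasLargeGrowth_of_even (hs : s * s' = 1) (hq0 : q ≠ 0) (hp0 : p ≠ 0)
    (hq : Even (orderOf q)) (hq2 : 2 < orderOf q) (hp1 : 0 < orderOf p)
    (hp : orderOf p = 1 ∨ Even (orderOf p)) : HasLargeGrowth 𝓕 := by
  rcases hp with hp | ⟨J, hJ⟩
  · exact H.hasLargeGrowth_of_even_of_pow h𝓕 hvac ha hb hc hs hq0 hp0 hq hq2 0 (.inl rfl)
      (by rw [orderOf_eq_one_iff.1 hp, one_pow])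
  · obtain ⟨j, rfl⟩ : ∃ j, J = j + 1 := ⟨J - 1, by omega⟩
    exact H.hasLargeGrowth_of_even_of_pow h𝓕 hvac ha hb hc hs hq0 hp0 hq hq2 j (by omega)
      (by rw [← orderOf_dvd_iff_pow_eq_one, hJ, two_mul])

lemma hasLargeGrowth_of_odd_of_even (hs : s * s' = 1) (hq0 : q ≠ 0) (hp0 : p ≠ 0)
    (hq : Odd (orderOf q)) (hq1 : orderOf q ≠ 1) (hp1 : 0 < orderOf p) (hp : Even (orderOf p)) :
    HasLargeGrowth 𝓕 := by
  obtain ⟨e, J, hJ, hM⟩ := Nat.exists_eq_two_pow_mul_odd hp1.ne'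
  obtain ⟨e, rfl⟩ : ∃ e', e = e' + 1 := by
    refine ⟨e - 1, (Nat.sub_add_cancel (Nat.pos_of_ne_zero ?_)).symm⟩
    rintro rfl
    rw [hM, pow_zero, one_mul] at hp
    exact Nat.not_even_iff_odd.2 hJ hp
  obtain ⟨j, rfl⟩ : ∃ j, J = j + 1 := ⟨J - 1, (Nat.sub_add_cancel hJ.pos).symm⟩
  have hπ : orderOf (p ^ (j + 1) ^ 2) = 2 ^ (e + 1) := by
    have hJ2 : (2 ^ (e + 1)).gcd (j + 1) = 1 := (Nat.coprime_two_left.2 hJ).pow_left _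
    rw [orderOf_pow' p (by positivity), hM, sq, Nat.gcd_mul_right, hJ2, one_mul,
      Nat.mul_div_cancel _ j.succ_pos]
  obtain ⟨n, h1, h2, h3⟩ := exists_isotropic_length hq hq1 hπ
  refine H.hasLargeGrowth_of_zOp_isotropic h𝓕 hvac ha hb hc hs hq0 hp0 j ?_ (u := true)
    (v := false) (by simp) n ?_ ?_ h3
  · rw [hM, pow_succ]
    have : 1 ≤ 2 ^ e := Nat.one_le_two_pow
    right; nlinarith
  · rw [cond_true, ← h1]; ring
  · rw [cond_false, mul_pow, h2, mul_one, ← h1]; ring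

lemma hasLargeGrowth_of_vOp [CharZero k] (hs0 : s ≠ 0) (hs0' : s' ≠ 0) (hq0 : q ≠ 0) (hp0 : p ≠ 0)
    (hQ : Odd (orderOf (s * s' * (p * q)))) (hQ1 : orderOf (s * s' * (p * q)) ≠ 1)
    (h : (1 + p) * (1 - s * s' * p) * (1 + (s * s') ^ 2 * (p * q)) * (1 - s * s' * q) * (1 + q)
      ≠ 0) : HasLargeGrowth 𝓕 := by
  set W := s * s' * (p * q) with hW
  have hW0 : W ≠ 0 := by simp [hW, hs0, hs0', hp0, hq0]
  have hη : (1 + W)⁻¹ * (1 + W) = 1 :=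
    inv_mul_cancel₀ (by simpa using one_add_pow_ne_zero hQ 1)
  have hδ := inv_mul_cancel₀ (mul_ne_zero h (left_ne_zero_of_mul_eq_one hη))
  obtain ⟨n, hn⟩ : ∃ n, orderOf W = 2 * (n + 1) + 1 := by
    obtain ⟨t, ht⟩ := hQ
    exact ⟨t - 1, by omega⟩
  have hWt : W ^ (2 * (n + 1) + 1) = 1 := by rw [← hn, pow_orderOf_eq_one]
  have hW4 (i : ℕ) (hi : i ≤ n) : (W ^ 4) ^ (i + 1) ≠ 1 := by
    rw [← pow_mul, Ne, ← orderOf_dvd_iff_pow_eq_one]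
    intro hd
    have := Nat.le_of_dvd i.succ_pos (Nat.Coprime.dvd_of_dvd_mul_left
      ((Nat.coprime_two_right.2 hQ).pow_right 2) hd)
    omega
  refine (H.realizationV hη hδ).hasLargeGrowth_of_isotropic h𝓕 hvac (fun t => ?_) (u := true)
    (v := false) (by simp) (fun x y => ?_) n ?_ ?_ fun i hi => strCoef_ne_zero (hW4 i hi) ?_
  · cases t
    · exact sub_mem (sub_mem (mul_mem (zOp_mem h𝓕 ha hb hc 2) ha)
        (Subalgebra.smul_mem _ (mul_mem ha (zOp_mem h𝓕 ha hb hc 2)) _))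
        (Subalgebra.smul_mem _ (mul_mem hc hc) _)
    · exact hc
  · cases x <;> cases y <;> simp [pairMatrix, ← hW, hW0]
  · calc W ^ 2 * (W ^ 2 * W ^ 2) ^ (n + 1) = (W ^ (2 * (n + 1) + 1)) ^ 2 := by ring
      _ = 1 := by rw [hWt, one_pow]
  · calc W ^ 2 * W ^ 2 * (W ^ 4) ^ (2 * (n + 1)) = (W ^ (2 * (n + 1) + 1)) ^ 4 := by ring
      _ = 1 := by rw [hWt, one_pow]
  · convert hW4 i hi using 1
    change W ^ 2 * W ^ 2 * (W ^ 4) ^ i = _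
    ring

omit hb in
lemma hasLargeGrowth_of_odd_of_eq_one [CharZero k] (hs : s * s' = 1) (hq0 : q ≠ 0) (hp : p = 1)
    (hq : Odd (orderOf q)) (hq3 : 3 < orderOf q) : HasLargeGrowth 𝓕 := by
  have h1 (n : ℕ) (h0 : n ≠ 0) (hn : n < 4) : 1 - q ^ n ≠ 0 :=
    sub_ne_zero.2 (pow_ne_one_of_lt_orderOf h0 (by omega)).symm
  have hγ := inv_mul_cancel₀ (h1 2 two_ne_zero (by omega))
  have hs0 : s ≠ 0 := left_ne_zero_of_mul_eq_one hs
  have hs0' : s' ≠ 0 := right_ne_zero_of_mul_eq_one hs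
  have hω : q * s' * (s * q) = q ^ 2 := by linear_combination q ^ 2 * hs
  have hW : q * s' * (s * q) * (q * q) = q ^ 4 := by rw [hω]; ring
  have hord : orderOf (q ^ 4) = orderOf q :=
    Nat.Coprime.orderOf_pow ((Nat.coprime_two_right.2 hq).pow_right 2)
  refine (H.swapped hs hp hγ).hasLargeGrowth_of_vOp h𝓕 hvac hc ha (Subalgebra.smul_mem _
    (sub_mem (mul_mem ha hc) (Subalgebra.smul_mem _ (mul_mem hc ha) _)) _) (by simp [*])
    (by simp [*]) hq0 hq0 ?_ ?_ ?_
  · rwa [hW, hord]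
  · rw [hW, hord]; omega
  · rw [hω]
    have h2 := one_add_pow_ne_zero hq 1
    have h3 := h1 3 (by omega) (by omega)
    have h6 := one_add_pow_ne_zero hq 6
    rw [pow_one] at h2
    refine mul_ne_zero (mul_ne_zero (mul_ne_zero (mul_ne_zero h2 ?_) ?_) ?_) h2
    · convert h3 using 1; ring
    · convert h6 using 1; ring
    · convert h3 using 1; ring

lemma hasLargeGrowth_of_odd_of_odd [CharZero k] (hs : s * s' = 1) (hq0 : q ≠ 0) (hp0 : p ≠ 0)
    (hq : Odd (orderOf q)) (hq1 : orderOf q ≠ 1) (hp : Odd (orderOf p)) (hp1 : orderOf p ≠ 1) :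
    HasLargeGrowth 𝓕 := by
  by_cases hpq : p * q = 1
  · have hq2 : q ^ 2 ≠ 1 := by
      rw [Ne, ← orderOf_dvd_iff_pow_eq_one]
      exact fun h => hq1 (Nat.Coprime.eq_one_of_dvd (Nat.coprime_two_right.2 hq) h)
    refine H.hasLargeGrowth_of_zOp h𝓕 hvac ha hb hc hs 0 (.inl rfl) (u := true) (v := false)
      (by simp) fun n => ?_
    have h1 : q * p ^ (0 + 1) ^ 2 = 1 := by linear_combination hpq
    rw [cond_false, h1, strCoef, one_pow, mul_one]
    refine mul_ne_zero ?_ (sub_ne_zero.2 hq2.symm)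
    simpa [qInt] using (Nat.cast_add_one_ne_zero n : (n : k) + 1 ≠ 0)
  · have hodd : Odd (orderOf (p * q)) :=
      (hp.mul hq).of_dvd_nat ((Commute.all p q).orderOf_mul_dvd_mul_orderOf)
    have hW : s * s' * (p * q) = p * q := by rw [hs, one_mul]
    have hne (x : k) (hx : orderOf x ≠ 1) : 1 - x ≠ 0 :=
      sub_ne_zero.2 fun h => hx (orderOf_eq_one_iff.2 h.symm)
    have hpos (x : k) (hx : Odd (orderOf x)) : 1 + x ≠ 0 := by
      simpa using one_add_pow_ne_zero hx 1
    refine H.hasLargeGrowth_of_vOp h𝓕 hvac ha hb hc (left_ne_zero_of_mul_eq_one hs)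
      (right_ne_zero_of_mul_eq_one hs) hq0 hp0 (by rwa [hW])
      (by rwa [hW, Ne, orderOf_eq_one_iff]) ?_
    rw [hs, one_pow, one_mul, one_mul, one_mul]
    exact mul_ne_zero (mul_ne_zero (mul_ne_zero (mul_ne_zero (hpos p hp) (hne p hp1))
      (hpos _ hodd)) (hne q hq1)) (hpos q hq)

/-- A rank two system whose diagonal braiding has orders summing to more than `4`, and which is
symmetric in its two letters, forces superpolynomial growth. -/
theorem hasLargeGrowth [CharZero k] {Lc' : Module.End k M} (hc' : Lc' ∈ filteredOps h𝓕)
    (H' : HSystem p q s' s Lb La Lc' Rb Ra vac) (hs : s * s' = 1) (hq0 : q ≠ 0) (hp0 : p ≠ 0)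
    (hord : orderOf q = 0 ∨ orderOf p = 0 ∨ 4 < orderOf q + orderOf p) : HasLargeGrowth 𝓕 := by
  have hs' : s' * s = 1 := by rw [mul_comm, hs]
  by_cases hq : orderOf q = 0
  · exact H.hasLargeGrowth_of_orderOf_eq_zero h𝓕 hvac ha hb hc hs hq
  by_cases hp : orderOf p = 0
  · exact H'.hasLargeGrowth_of_orderOf_eq_zero h𝓕 hvac hb ha hc' hs' hp
  have hord : 4 < orderOf q + orderOf p := by tauto
  rcases (orderOf q).even_or_odd with hqe | hqo <;> rcases (orderOf p).even_or_odd with hpe | hpo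
  · by_cases h2 : 2 < orderOf q
    · exact H.hasLargeGrowth_of_even h𝓕 hvac ha hb hc hs hq0 hp0 hqe h2 (by omega) (.inr hpe)
    · exact H'.hasLargeGrowth_of_even h𝓕 hvac hb ha hc' hs' hp0 hq0 hpe (by omega) (by omega)
        (.inr hqe)
  · by_cases h1 : orderOf p = 1
    · exact H.hasLargeGrowth_of_even h𝓕 hvac ha hb hc hs hq0 hp0 hqe (by omega) (by omega) (.inl h1)
    · exact H'.hasLargeGrowth_of_odd_of_even h𝓕 hvac hb ha hc' hs' hp0 hq0 hpo h1 (by omega) hqe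
  · by_cases h1 : orderOf q = 1
    · exact H'.hasLargeGrowth_of_even h𝓕 hvac hb ha hc' hs' hp0 hq0 hpe (by omega) (by omega)
        (.inl h1)
    · exact H.hasLargeGrowth_of_odd_of_even h𝓕 hvac ha hb hc hs hq0 hp0 hqo h1 (by omega) hpe
  · by_cases h1 : orderOf p = 1
    · exact H.hasLargeGrowth_of_odd_of_eq_one h𝓕 hvac ha hc hs hq0 (orderOf_eq_one_iff.1 h1)
        hqo (by omega)
    by_cases h2 : orderOf q = 1
    · exact H'.hasLargeGrowth_of_odd_of_eq_one h𝓕 hvac hb hc' hs' hp0 (orderOf_eq_one_iff.1 h2)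
        hpo (by omega)
    · exact H.hasLargeGrowth_of_odd_of_odd h𝓕 hvac ha hb hc hs hq0 hp0 hqo h2 hpo h1

end HSystem

end CaseAnalysis

section Words

open TensorProduct (dualDistrib)

variable {k : Type*} [Field k] {θ : ℕ}

local notation "𝕋" => FreeAlgebra k (Fin θ)

local notation "𝕏" => FreeAlgebra.ι k (X := Fin θ)

/-- The monomial of the free algebra given by a list of letters. -/
def word (k : Type*) [Field k] {θ : ℕ} (l : List (Fin θ)) : FreeAlgebra k (Fin θ) :=
  (l.map (FreeAlgebra.ι k)).prod

lemma word_nil : word k ([] : List (Fin θ)) = 1 := rfl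

lemma word_cons (t : Fin θ) (l : List (Fin θ)) : word k (t :: l) = 𝕏 t * word k l :=
  List.prod_cons

lemma basisFreeMonoid_ofList (l : List (Fin θ)) :
    FreeAlgebra.basisFreeMonoid k (Fin θ) (FreeMonoid.ofList l) = word k l := by
  change FreeAlgebra.equivMonoidAlgebraFreeMonoid.symm (MonoidAlgebra.single _ 1) = _
  simp [FreeAlgebra.equivMonoidAlgebraFreeMonoid, FreeMonoid.lift_apply, word]

/-- The functional on the free algebra that reads off the coefficient of a word. -/
def coef (k : Type*) [Field k] {θ : ℕ} (w : List (Fin θ)) :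
    Module.Dual k (FreeAlgebra k (Fin θ)) :=
  (FreeAlgebra.basisFreeMonoid k (Fin θ)).coord (FreeMonoid.ofList w)

lemma coef_word (w l : List (Fin θ)) : coef k w (word k l) = if l = w then 1 else 0 := by
  classical
  rw [coef, ← basisFreeMonoid_ofList, Module.Basis.coord_apply, Module.Basis.repr_self,
    Finsupp.single_apply]
  exact if_congr FreeMonoid.ofList.injective.eq_iff rfl rfl

lemma dual_ext {α β : Module.Dual k 𝕋} (h : ∀ l, α (word k l) = β (word k l)) : α = β :=
  (FreeAlgebra.basisFreeMonoid k (Fin θ)).ext fun l => by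
    rw [← FreeMonoid.ofList_toList l, basisFreeMonoid_ofList]
    exact h _

/-- The transpose of left multiplication by a letter. -/
def letterDer (t : Fin θ) : Module.End k (Module.Dual k 𝕋) :=
  (LinearMap.mulLeft k (𝕏 t)).dualMap

lemma letterDer_apply (t : Fin θ) (β : Module.Dual k 𝕋) (x : 𝕋) :
    letterDer t β x = β (𝕏 t * x) := rfl

lemma letterDer_word (t : Fin θ) (β : Module.Dual k 𝕋) (l : List (Fin θ)) :
    letterDer t β (word k l) = β (word k (t :: l)) := by
  rw [letterDer_apply, word_cons]

lemma letterDer_coef_nil (t : Fin θ) : letterDer t (coef k []) = 0 :=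
  dual_ext fun l => by simp [letterDer_word, coef_word]

lemma letterDer_coef_cons (t t' : Fin θ) (w : List (Fin θ)) :
    letterDer t (coef k (t' :: w)) = if t = t' then coef k w else 0 := by
  refine dual_ext fun l => ?_
  rw [letterDer_word, coef_word]
  split_ifs <;> simp_all [coef_word]

/-- The bicharacter evaluated at a letter and a word. -/
def wordChar (Q : Fin θ → Fin θ → kˣ) (t : Fin θ) (w : List (Fin θ)) : k :=
  (w.map fun b => (Q t b : k)).prod

/-- A comultiplication on the free algebra given on products by the braided Leibniz rule. -/
structure IsBraidedComul (Q : Fin θ → Fin θ → kˣ) (Δ : 𝕋 →ₗ[k] 𝕋 ⊗[k] 𝕋) : Prop where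
  one : Δ 1 = 1 ⊗ₜ 1
  letter_mul : ∀ t w β x, dualDistrib k 𝕋 𝕋 (coef k w ⊗ₜ β) (Δ (𝕏 t * x)) =
    dualDistrib k 𝕋 𝕋 (letterDer t (coef k w) ⊗ₜ β) (Δ x) +
      wordChar Q t w * dualDistrib k 𝕋 𝕋 (coef k w ⊗ₜ letterDer t β) (Δ x)

/-- Left convolution by the coefficient functional of a word. -/
def leftConv (Δ : 𝕋 →ₗ[k] 𝕋 ⊗[k] 𝕋) (w : List (Fin θ)) : Module.End k (Module.Dual k 𝕋) :=
  Δ.dualMap ∘ₗ dualDistrib k 𝕋 𝕋 ∘ₗ TensorProduct.mk k _ _ (coef k w)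

lemma leftConv_apply (Δ : 𝕋 →ₗ[k] 𝕋 ⊗[k] 𝕋) (w : List (Fin θ)) (β : Module.Dual k 𝕋) (x : 𝕋) :
    leftConv Δ w β x = dualDistrib k 𝕋 𝕋 (coef k w ⊗ₜ β) (Δ x) := rfl

namespace IsBraidedComul

variable {Q : Fin θ → Fin θ → kˣ}
  {Δ : FreeAlgebra k (Fin θ) →ₗ[k] FreeAlgebra k (Fin θ) ⊗[k] FreeAlgebra k (Fin θ)}
  (hΔ : IsBraidedComul Q Δ)
include hΔ

lemma letterDer_leftConv_nil (t : Fin θ) (β : Module.Dual k 𝕋) :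
    letterDer t (leftConv Δ [] β) = leftConv Δ [] (letterDer t β) := by
  ext1 x
  rw [letterDer_apply, leftConv_apply, hΔ.letter_mul, letterDer_coef_nil]
  simp [wordChar, leftConv_apply]

lemma letterDer_leftConv_cons (t t' : Fin θ) (w : List (Fin θ)) (β : Module.Dual k 𝕋) :
    letterDer t (leftConv Δ (t' :: w) β) = (if t = t' then leftConv Δ w β else 0) +
      wordChar Q t (t' :: w) • leftConv Δ (t' :: w) (letterDer t β) := by
  ext1 x
  rw [letterDer_apply, leftConv_apply, hΔ.letter_mul, letterDer_coef_cons]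
  split_ifs <;> simp [leftConv_apply]

lemma leftConv_one (w : List (Fin θ)) (β : Module.Dual k 𝕋) :
    leftConv Δ w β 1 = if w = [] then β 1 else 0 := by
  rw [leftConv_apply, hΔ.one, TensorProduct.dualDistrib_apply, ← word_nil, coef_word]
  simp [eq_comm]

lemma leftConv_nil (β : Module.Dual k 𝕋) : leftConv Δ [] β = β := by
  refine dual_ext fun l => ?_
  induction l generalizing β with
  | nil => rw [word_nil, hΔ.leftConv_one, if_pos rfl]
  | cons t l ih => rw [← letterDer_word, hΔ.letterDer_leftConv_nil, ih, letterDer_word]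

lemma leftConv_word_eq_zero {w : List (Fin θ)} {β : Module.Dual k 𝕋} {l : List (Fin θ)}
    (h : ∀ l', l.length ≤ l'.length + w.length → β (word k l') = 0) :
    leftConv Δ w β (word k l) = 0 := by
  induction l generalizing w β with
  | nil =>
    rw [word_nil, hΔ.leftConv_one, ← word_nil, h [] (by simp), ite_self]
  | cons t l ih =>
    cases w with
    | nil =>
      rw [hΔ.leftConv_nil]
      exact h _ (by simp)
    | cons t' w =>
      have h1 : leftConv Δ (t' :: w) (letterDer t β) (word k l) = 0 := ih fun l' hl' => by
        rw [letterDer_word]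
        exact h _ (by simp only [List.length_cons] at hl' ⊢; omega)
      rw [← letterDer_word, hΔ.letterDer_leftConv_cons, LinearMap.add_apply, LinearMap.smul_apply,
        h1, smul_zero, add_zero]
      split_ifs
      · exact ih fun l' hl' => h _ (by simp only [List.length_cons]; omega)
      · rfl

omit hΔ in
lemma eq_zero_of_letterDer_comm {ν : Module.End k (Module.Dual k 𝕋)} {c : Fin θ → k}
    (hone : ∀ β, ν β 1 = 0) (h : ∀ t β, letterDer t (ν β) = c t • ν (letterDer t β))
    (β : Module.Dual k 𝕋) : ν β = 0 := by
  refine dual_ext fun l => ?_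
  induction l generalizing β with
  | nil => rw [word_nil, hone]; rfl
  | cons t l ih => rw [← letterDer_word, h, LinearMap.smul_apply, ih]; simp

/-- The rank two system given by two letters with `Q i j * Q j i = 1`. -/
lemma hSystem {i j : Fin θ} (hij : i ≠ j) (hQ : Q i j * Q j i = 1) :
    HSystem (Q i i : k) (Q j j) (Q i j) (Q j i) (leftConv Δ [i]) (leftConv Δ [j])
      (leftConv Δ [j, i]) (letterDer i) (letterDer j) (coef k []) := by
  have hs : (Q i j : k) * Q j i = 1 := by rw [← Units.val_mul, hQ, Units.val_one]
  have hone (t t' : Fin θ) (β : Module.Dual k 𝕋) : letterDer t (leftConv Δ [t'] β) =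
      (if t = t' then β else 0) + (Q t t' : k) • leftConv Δ [t'] (letterDer t β) := by
    rw [hΔ.letterDer_leftConv_cons, hΔ.leftConv_nil]
    simp [wordChar]
  refine
    { aa := fun m => by rw [hone, if_pos rfl]
      ab := fun m => by rw [hone, if_neg hij, zero_add]
      ba := fun m => by rw [hone, if_neg hij.symm, zero_add]
      bb := fun m => by rw [hone, if_pos rfl]
      ac := fun m => by
        rw [hΔ.letterDer_leftConv_cons, if_neg hij, zero_add]
        simp [wordChar]
      bc := fun m => by
        rw [hΔ.letterDer_leftConv_cons, if_pos rfl]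
        simp [wordChar, mul_comm]
      comm := fun m => ?_
      Ra_vac := letterDer_coef_nil i
      Rb_vac := letterDer_coef_nil j
      vac_ne := fun h => by simpa [coef_word] using congrArg (fun f => f (word k [])) h }
  rw [hs, sub_self, zero_smul, add_zero, ← sub_eq_zero]
  refine eq_zero_of_letterDer_comm (ν := leftConv Δ [j] * leftConv Δ [i] -
    (Q i j : k) • (leftConv Δ [i] * leftConv Δ [j])) (c := fun t => (Q t i : k) * Q t j)
    (fun β => ?_) (fun t β => ?_) m
  · simp [hΔ.leftConv_one]
  · simp only [LinearMap.sub_apply, LinearMap.smul_apply, Module.End.mul_apply, map_sub, map_smul,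
      hone, map_add]
    by_cases hti : t = i
    · subst hti
      simp only [if_true, if_neg hij, map_zero]
      module
    by_cases htj : t = j
    · subst htj
      simp only [if_true, if_neg hti, map_zero]
      match_scalars
      · linear_combination -hs
      all_goals ring
    · simp only [if_neg hti, if_neg htj, map_zero]
      module

end IsBraidedComul

end Words

section Comultiplication

open TensorProduct (dualDistrib)

variable {k : Type*} [Field k] {θ : ℕ}

local notation "𝕋" => FreeAlgebra k (Fin θ)

local notation "𝕏" => FreeAlgebra.ι k (X := Fin θ)

lemma tensor_word_ext {f g : 𝕋 ⊗[k] 𝕋 →ₗ[k] k}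
    (h : ∀ l d, f (word k l ⊗ₜ d) = g (word k l ⊗ₜ d)) : f = g := by
  refine TensorProduct.ext ((FreeAlgebra.basisFreeMonoid k (Fin θ)).ext fun l =>
    LinearMap.ext fun d => ?_)
  rw [← FreeMonoid.ofList_toList l, basisFreeMonoid_ofList]
  exact h _ d

lemma word_mem_piece (l : List (Fin θ)) : word k l ∈ piece k θ (fun a => l.count a) :=
  Submodule.subset_span ⟨l, fun _ => rfl, rfl⟩

lemma one_mem_piece : (1 : 𝕋) ∈ piece k θ 0 := by
  rw [← word_nil]
  convert word_mem_piece (k := k) (θ := θ) [] using 2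
  exact funext fun a => by simp

lemma letter_mem_piece (t : Fin θ) : 𝕏 t ∈ piece k θ (Pi.single t 1) := by
  refine Submodule.subset_span ⟨[t], fun a => ?_, by simp⟩
  rcases eq_or_ne t a with rfl | h
  · simp
  · simp [h, h.symm]

lemma qb_zero_left (Q : Fin θ → Fin θ → kˣ) (γ : Fin θ → ℤ) : qb Q 0 γ = 1 := by
  simp [qb]

lemma qb_single_count (Q : Fin θ → Fin θ → kˣ) (t : Fin θ) (l : List (Fin θ)) :
    (qb Q (Pi.single t 1) (fun a => l.count a) : k) = wordChar Q t l := by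
  have h1 : qb Q (Pi.single t 1) (fun a => l.count a) = ∏ b, Q t b ^ l.count b := by
    rw [qb, Finset.prod_eq_single t (fun a _ ha => by simp [ha]) (by simp)]
    simp
  rw [h1]
  clear h1
  induction l with
  | nil => simp [wordChar]
  | cons b l ih =>
    simp only [List.count_cons, pow_add, Finset.prod_mul_distrib, Units.val_mul, ih]
    simp [wordChar, mul_comm]

lemma isBraidedComul_of_mul {Q : Fin θ → Fin θ → kˣ}
    {m2 : (𝕋 ⊗[k] 𝕋) →ₗ[k] (𝕋 ⊗[k] 𝕋) →ₗ[k] (𝕋 ⊗[k] 𝕋)}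
    (hm2 : ∀ (a b c d : 𝕋) (β γ : Fin θ → ℤ), b ∈ piece k θ β → c ∈ piece k θ γ →
      m2 (a ⊗ₜ b) (c ⊗ₜ d) = (qb Q β γ : k) • ((a * c) ⊗ₜ[k] (b * d)))
    {Δ : FreeAlgebra k (Fin θ) →ₗ[k] FreeAlgebra k (Fin θ) ⊗[k] FreeAlgebra k (Fin θ)}
    (hΔmul : ∀ x y, Δ (x * y) = m2 (Δ x) (Δ y)) (hΔone : Δ 1 = 1 ⊗ₜ 1)
    (hΔgen : ∀ a : Fin θ, Δ (𝕏 a) = 𝕏 a ⊗ₜ 1 + 1 ⊗ₜ 𝕏 a) : IsBraidedComul Q Δ where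
  one := hΔone
  letter_mul t w β x := by
    rw [hΔmul, hΔgen, map_add, LinearMap.add_apply, map_add]
    congr 1
    · refine LinearMap.congr_fun (f := dualDistrib k 𝕋 𝕋 (coef k w ⊗ₜ β) ∘ₗ m2 (𝕏 t ⊗ₜ 1))
        (tensor_word_ext fun l d => ?_) (Δ x)
      rw [LinearMap.comp_apply, hm2 _ _ _ _ _ _ one_mem_piece (word_mem_piece l), qb_zero_left]
      simp [letterDer_apply]
    · refine LinearMap.congr_fun (f := dualDistrib k 𝕋 𝕋 (coef k w ⊗ₜ β) ∘ₗ m2 (1 ⊗ₜ 𝕏 t))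
        (g := wordChar Q t w • dualDistrib k 𝕋 𝕋 (coef k w ⊗ₜ letterDer t β))
        (tensor_word_ext fun l d => ?_) (Δ x)
      rw [LinearMap.comp_apply, hm2 _ _ _ _ _ _ (letter_mem_piece t) (word_mem_piece l),
        qb_single_count]
      simp only [map_smul, one_mul, TensorProduct.dualDistrib_apply, LinearMap.smul_apply,
        smul_eq_mul, letterDer_apply, coef_word]
      split_ifs with h
      · rw [h]
      · simp

end Comultiplication

section Annihilator

open TensorProduct (dualDistrib)

variable {k : Type*} [Field k] {θ : ℕ} {B : Type*} [Ring B] [Algebra k B]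

local notation "𝕋" => FreeAlgebra k (Fin θ)

local notation "𝕏" => FreeAlgebra.ι k (X := Fin θ)

variable (π : FreeAlgebra k (Fin θ) →ₐ[k] B)

/-- The functionals on the free algebra that factor through a quotient. -/
def quotDual : Submodule k (Module.Dual k 𝕋) :=
  (LinearMap.ker π.toLinearMap).dualAnnihilator

variable {π}

lemma mem_quotDual {α : Module.Dual k 𝕋} : α ∈ quotDual π ↔ ∀ x, π x = 0 → α x = 0 := by
  simp [quotDual, Submodule.mem_dualAnnihilator]

lemma exists_factor_of_mem_quotDual {α : Module.Dual k 𝕋} (h : α ∈ quotDual π) :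
    ∃ f : Module.Dual k B, α = f ∘ₗ π.toLinearMap := by
  rw [quotDual, ← LinearMap.range_dualMap_eq_dualAnnihilator_ker] at h
  obtain ⟨f, rfl⟩ := h
  exact ⟨f, rfl⟩

variable {Δ : FreeAlgebra k (Fin θ) →ₗ[k] FreeAlgebra k (Fin θ) ⊗[k] FreeAlgebra k (Fin θ)}

lemma leftConv_mem_quotDual
    (hhopf : ∀ x, π x = 0 → TensorProduct.map π.toLinearMap π.toLinearMap (Δ x) = 0)
    {w : List (Fin θ)} (hw : coef k w ∈ quotDual π) {β : Module.Dual k 𝕋}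
    (hβ : β ∈ quotDual π) : leftConv Δ w β ∈ quotDual π := by
  obtain ⟨f, hf⟩ := exists_factor_of_mem_quotDual hw
  obtain ⟨g, rfl⟩ := exists_factor_of_mem_quotDual hβ
  refine mem_quotDual.2 fun x hx => ?_
  have h : dualDistrib k 𝕋 𝕋 ((f ∘ₗ π.toLinearMap) ⊗ₜ (g ∘ₗ π.toLinearMap)) =
      dualDistrib k B B (f ⊗ₜ g) ∘ₗ TensorProduct.map π.toLinearMap π.toLinearMap :=
    TensorProduct.ext' fun a b => by simp
  rw [leftConv_apply, hf, h, LinearMap.comp_apply, hhopf x hx, map_zero]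

lemma coef_eq_zero_of_mem_piece {w : List (Fin θ)} {d : Fin θ → ℤ}
    (hd : d ≠ fun a => (w.count a : ℤ)) {y : 𝕋} (hy : y ∈ piece k θ d) : coef k w y = 0 := by
  refine LinearMap.mem_ker.1 ((Submodule.span_le.2 ?_ : piece k θ d ≤ _) hy)
  rintro _ ⟨l, hl, rfl⟩
  refine (coef_word w l).trans (if_neg ?_)
  rintro rfl
  exact hd (funext fun a => (hl a).symm)

lemma piece_count_le (w : List (Fin θ)) :
    piece k θ (fun a => w.count a) ≤ Submodule.span k (word k '' {l | l.Perm w}) := by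
  refine Submodule.span_mono ?_
  rintro _ ⟨l, hl, rfl⟩
  exact ⟨l, List.perm_iff_count.2 fun a => by exact Int.ofNat_inj.1 (hl a), rfl⟩

lemma coef_mem_quotDual
    (hhom : ∀ x, π x = 0 → x ∈ Submodule.span k {y | π y = 0 ∧ ∃ d, y ∈ piece k θ d})
    {w : List (Fin θ)}
    (h : ∀ y ∈ Submodule.span k (word k '' {l | l.Perm w}), π y = 0 → coef k w y = 0) :
    coef k w ∈ quotDual π := by
  refine mem_quotDual.2 fun x hx => LinearMap.mem_ker.1 (Submodule.span_le.2 ?_ (hhom x hx))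
  rintro y ⟨hy, d, hd⟩
  by_cases hdw : d = fun a => (w.count a : ℤ)
  · exact h y (piece_count_le w (hdw ▸ hd)) hy
  · exact coef_eq_zero_of_mem_piece hdw hd

section Trivial

variable (hhom : ∀ x, π x = 0 → x ∈ Submodule.span k {y | π y = 0 ∧ ∃ d, y ∈ piece k θ d})
  (htriv : ∀ (a : k) (v : Fin θ → k),
    π (algebraMap k (FreeAlgebra k (Fin θ)) a + ∑ s, v s • FreeAlgebra.ι k s) = 0 → a = 0 ∧ v = 0)

include hhom htriv

lemma coef_nil_mem_quotDual : coef k [] ∈ quotDual π := by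
  refine coef_mem_quotDual hhom fun y hy hπy => ?_
  simp only [List.perm_nil, Set.ofPred_eq_eq_singleton, Set.image_singleton] at hy
  obtain ⟨c, rfl⟩ := Submodule.mem_span_singleton.1 hy
  have hc : c = 0 := (htriv c 0 (by
    rw [word_nil] at hπy
    simpa [Algebra.algebraMap_eq_smul_one] using hπy)).1
  rw [hc, zero_smul, map_zero]

lemma coef_singleton_mem_quotDual (t : Fin θ) : coef k [t] ∈ quotDual π := by
  refine coef_mem_quotDual hhom fun y hy hπy => ?_
  simp only [List.perm_singleton, Set.ofPred_eq_eq_singleton, Set.image_singleton] at hy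
  obtain ⟨c, rfl⟩ := Submodule.mem_span_singleton.1 hy
  have hc := (htriv 0 (Pi.single t c) (by
    rw [word_cons, word_nil, mul_one] at hπy
    simpa [Pi.single_apply, ite_smul] using hπy)).2
  rw [Pi.single_eq_zero_iff] at hc
  rw [hc, zero_smul, map_zero]

lemma coef_pair_mem_quotDual {Q : Fin θ → Fin θ → kˣ} (hΔ : IsBraidedComul Q Δ)
    (hhopf : ∀ x, π x = 0 → TensorProduct.map π.toLinearMap π.toLinearMap (Δ x) = 0)
    {a b : Fin θ} (hab : a ≠ b) (hne : π (𝕏 a * 𝕏 b - (Q a b : k) • (𝕏 b * 𝕏 a)) ≠ 0) :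
    coef k [b, a] ∈ quotDual π := by
  refine coef_mem_quotDual hhom fun y hy hπy => ?_
  have hperm : {l : List (Fin θ) | l.Perm [b, a]} ⊆ {[a, b], [b, a]} := by
    intro l (hl : l.Perm [b, a])
    obtain ⟨c, d, rfl⟩ := List.length_eq_two.1 hl.length_eq
    have hc : c = b ∨ c = a := by simpa using hl.subset (List.mem_cons_self ..)
    rcases hc with rfl | rfl
    · have hd := List.perm_singleton.1 ((List.perm_cons _).1 hl)
      simp_all
    · have hd := List.perm_singleton.1 ((List.perm_cons _).1 (hl.trans (List.Perm.swap ..)))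
      simp_all
  have hy' := Submodule.span_mono (Set.image_mono hperm) hy
  rw [Set.image_pair] at hy'
  obtain ⟨α, β, rfl⟩ := Submodule.mem_span_pair.1 hy'
  have hconv := mem_quotDual.1 (leftConv_mem_quotDual hhopf
    (coef_singleton_mem_quotDual hhom htriv b) (coef_singleton_mem_quotDual hhom htriv a)) _ hπy
  have h1 : leftConv Δ [b] (coef k [a]) (word k [a, b]) = Q a b := by
    rw [← letterDer_word, ← letterDer_word, hΔ.letterDer_leftConv_cons, if_neg hab, zero_add,
      letterDer_coef_cons, if_pos rfl, map_smul, hΔ.letterDer_leftConv_cons, if_pos rfl,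
      letterDer_coef_nil, hΔ.leftConv_nil]
    simp [coef_word, wordChar]
  have h2 : leftConv Δ [b] (coef k [a]) (word k [b, a]) = 1 := by
    rw [← letterDer_word, hΔ.letterDer_leftConv_cons, if_pos rfl, letterDer_coef_cons,
      if_neg hab.symm, hΔ.leftConv_nil]
    simp [coef_word]
  rw [map_add, map_smul, map_smul, h1, h2, smul_eq_mul, smul_eq_mul, mul_one] at hconv
  have hβ : β = -(α * Q a b) := by linear_combination hconv
  have hα : α • π (𝕏 a * 𝕏 b - (Q a b : k) • (𝕏 b * 𝕏 a)) = 0 := by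
    rw [← map_smul, ← hπy]
    congr 1
    simp only [hβ, word_cons, word_nil, mul_one]
    module
  have hα0 := (smul_eq_zero.1 hα).resolve_right hne
  simp [hβ, hα0]

end Trivial

variable (π)

/-- The functionals that factor through a quotient and vanish on long words. -/
def quotDualFil (n : ℕ) : Submodule k (Module.Dual k 𝕋) where
  carrier := {α | α ∈ quotDual π ∧ ∀ l, n < l.length → α (word k l) = 0}
  add_mem' hα hβ := ⟨add_mem hα.1 hβ.1, fun l hl => by simp [hα.2 l hl, hβ.2 l hl]⟩
  zero_mem' := ⟨zero_mem _, fun _ _ => rfl⟩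
  smul_mem' c _ hα := ⟨Submodule.smul_mem _ c hα.1, fun l hl => by simp [hα.2 l hl]⟩

lemma monotone_quotDualFil : Monotone (quotDualFil π) := fun _ _ h _ hα =>
  ⟨hα.1, fun l hl => hα.2 l (h.trans_lt hl)⟩

variable {π}

lemma leftConv_mem_filteredOps {Q : Fin θ → Fin θ → kˣ} (hΔ : IsBraidedComul Q Δ)
    (hhopf : ∀ x, π x = 0 → TensorProduct.map π.toLinearMap π.toLinearMap (Δ x) = 0)
    {w : List (Fin θ)} (hw : coef k w ∈ quotDual π) :
    leftConv Δ w ∈ filteredOps (monotone_quotDualFil π) :=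
  ⟨w.length, fun _ _ hα => ⟨leftConv_mem_quotDual hhopf hw hα.1, fun _ hl =>
    hΔ.leftConv_word_eq_zero fun l' hl' => hα.2 l' (by omega)⟩⟩

variable (hπ : Function.Surjective π) {U : Submodule k B} (hU1 : 1 ≤ U)
  (hU : ∀ t, π (FreeAlgebra.ι k t) ∈ U)

include hU1 hU in
lemma map_word_mem_pow {l : List (Fin θ)} {n : ℕ} (hl : l.length ≤ n) : π (word k l) ∈ U ^ n := by
  refine pow_le_pow_right' hU1 hl ?_
  induction l generalizing n with
  | nil =>
    rw [word_nil, map_one, List.length_nil, pow_zero]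
    exact Submodule.one_le.1 le_rfl
  | cons t l ih =>
    rw [word_cons, map_mul, List.length_cons, pow_succ']
    exact Submodule.mul_mem_mul (hU t) (ih le_rfl)

include hπ hU1 hU in
lemma exists_injective_quotDualFil (n : ℕ) :
    ∃ f : quotDualFil π n →ₗ[k] Module.Dual k (U ^ n : Submodule k B), Function.Injective f := by
  obtain ⟨σ, hσ⟩ := π.toLinearMap.exists_rightInverse_of_surjective (LinearMap.range_eq_top.2 hπ)
  refine ⟨(σ ∘ₗ (U ^ n).subtype).dualMap ∘ₗ (quotDualFil π n).subtype,
    (injective_iff_map_eq_zero _).2 fun α hα => Subtype.ext (dual_ext fun l => ?_)⟩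
  rcases le_or_gt l.length n with hl | hl
  · have h1 : α.1 (word k l - σ (π (word k l))) = 0 := mem_quotDual.1 α.2.1 _ (by
      rw [map_sub, sub_eq_zero]
      exact (LinearMap.congr_fun hσ _).symm)
    rw [map_sub, sub_eq_zero] at h1
    rw [h1]
    exact LinearMap.congr_fun hα ⟨_, map_word_mem_pow hU1 hU hl⟩
  · rw [α.2.2 l hl]
    rfl

end Annihilator

section GKDimension

variable {k : Type*} [Field k] {B : Type*} [Ring B] [Algebra k B]

lemma eventually_pow_mul_lt_two_pow (C D : ℕ) :
    ∀ᶠ L : ℕ in Filter.atTop, (C * (L * L)) ^ D < 2 ^ L := by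
  have h := (tendsto_pow_const_div_const_pow_of_one_lt (2 * D) (one_lt_two (α := ℝ))).const_mul
    ((C : ℝ) ^ D)
  rw [mul_zero] at h
  filter_upwards [h.eventually_lt_const one_pos] with L hL
  rw [← mul_div_assoc, div_lt_one (by positivity)] at hL
  have hL' : ((C * (L * L) : ℕ) : ℝ) ^ D < 2 ^ L := by
    refine lt_of_eq_of_lt ?_ hL
    push_cast
    ring
  exact_mod_cast hL'

lemma GKdim_eq_top_of_two_pow_le (S : Finset B) {C : ℕ}
    (h : ∀ L, 2 ^ L ≤ Module.finrank k
      ((Submodule.span k (insert (1 : B) (S : Set B))) ^ (C * (L * L)) : Submodule k B)) :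
    GKdim k B = ⊤ := by
  set U : Submodule k B := Submodule.span k (insert (1 : B) (S : Set B)) with hU
  have hU1 : 1 ≤ U := Submodule.one_le.2 (Submodule.subset_span (Set.mem_insert _ _))
  have hfg : U.FG := Submodule.fg_span (S.finite_toSet.insert 1)
  have hmono {m n : ℕ} (hmn : m ≤ n) :
      Module.finrank k (U ^ m : Submodule k B) ≤ Module.finrank k (U ^ n : Submodule k B) := by
    have : Module.Finite k (U ^ n : Submodule k B) := Module.Finite.iff_fg.2 (hfg.pow n)
    exact Submodule.finrank_mono (pow_le_pow_right' hU1 hmn)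
  by_contra hne
  have hlt := (le_iSup (fun S : Finset B => Filter.limsup (fun n : ℕ =>
    ENNReal.ofReal (Real.logb n (Module.finrank k
      ((Submodule.span k (insert (1 : B) (S : Set B))) ^ n : Submodule k B))))
      Filter.atTop) S).trans_lt (lt_top_iff_ne_top.2 hne)
  obtain ⟨D, hD⟩ := ENNReal.exists_nat_gt hlt.ne
  have hev := Filter.eventually_lt_of_limsup_lt hD
  have htend : Filter.Tendsto (fun L : ℕ => (C + 1) * (L * L)) Filter.atTop Filter.atTop :=
    Filter.tendsto_atTop_mono (fun L => (Nat.le_mul_self L).trans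
      (Nat.le_mul_of_pos_left _ C.succ_pos)) Filter.tendsto_id
  obtain ⟨L, hL1, hL2, hL⟩ := ((htend.eventually hev).and
    ((eventually_pow_mul_lt_two_pow (C + 1) D).and (Filter.eventually_ge_atTop 2))).exists
  have hge := (h L).trans (hmono (Nat.mul_le_mul_right (L * L) C.le_succ))
  have hn : 1 < (C + 1) * (L * L) := by nlinarith [Nat.zero_le (C * (L * L))]
  generalize (C + 1) * (L * L) = n at hL1 hL2 hge hn
  rw [ENNReal.ofReal_lt_natCast (by rintro rfl; simp at hL1),
    Real.logb_lt_iff_lt_rpow (by exact_mod_cast hn)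
      (by exact_mod_cast (Nat.two_pow_pos L).trans_le hge), Real.rpow_natCast] at hL1
  have hL1' : Module.finrank k (U ^ n : Submodule k B) < n ^ D := by exact_mod_cast hL1
  omega

end GKDimension

/-- Let `q = (q_ij)` satisfy `q_ij q_ji = 1` for all `i ≠ j`
(a quantum linear space).  Suppose `i ≠ j` are such that `ord(q_ii) + ord(q_jj) > 4`
(orders in `ℕ ∪ {∞}`; `orderOf = 0` encodes infinite order).  Then in any pre-Nichols
algebra `B` of `q` with finite GK-dimension — i.e. any quotient of `T(V)` by a
`ℤ^θ`-homogeneous braided Hopf ideal intersecting `k ⊕ V` trivially, where the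
braided comultiplication `Δ` of `T(V)` is the algebra map for the twisted product
determined by the bicharacter, with primitive generators —
one has `x_ij = x_i x_j − q_ij x_j x_i = 0`. -/
theorem stmt12 {k : Type*} [Field k] [CharZero k] [IsAlgClosed k] {θ : ℕ}
    (Q : Fin θ → Fin θ → kˣ)
    (hqls : ∀ a b, a ≠ b → Q a b * Q b a = 1)
    (i j : Fin θ) (hij : i ≠ j)
    (hord : orderOf (Q i i) = 0 ∨ orderOf (Q j j) = 0
      ∨ 4 < orderOf (Q i i) + orderOf (Q j j))
    (m2 : (FreeAlgebra k (Fin θ) ⊗[k] FreeAlgebra k (Fin θ))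
      →ₗ[k] (FreeAlgebra k (Fin θ) ⊗[k] FreeAlgebra k (Fin θ))
      →ₗ[k] (FreeAlgebra k (Fin θ) ⊗[k] FreeAlgebra k (Fin θ)))
    (hm2 : ∀ (a b c d : FreeAlgebra k (Fin θ)) (β γ : Fin θ → ℤ),
      b ∈ piece k θ β → c ∈ piece k θ γ →
      m2 (a ⊗ₜ b) (c ⊗ₜ d) = (qb Q β γ : k) • ((a * c) ⊗ₜ[k] (b * d)))
    (Δ : FreeAlgebra k (Fin θ) →ₗ[k] FreeAlgebra k (Fin θ) ⊗[k] FreeAlgebra k (Fin θ))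
    (hΔmul : ∀ x y, Δ (x * y) = m2 (Δ x) (Δ y))
    (hΔone : Δ 1 = 1 ⊗ₜ 1)
    (hΔgen : ∀ a : Fin θ, Δ (FreeAlgebra.ι k a)
      = FreeAlgebra.ι k a ⊗ₜ 1 + 1 ⊗ₜ FreeAlgebra.ι k a)
    {B : Type*} [Ring B] [Algebra k B]
    (π : FreeAlgebra k (Fin θ) →ₐ[k] B)
    (hsurj : Function.Surjective π)
    (hhom : ∀ x, π x = 0 →
      x ∈ Submodule.span k {y | π y = 0 ∧ ∃ d, y ∈ piece k θ d})
    (htriv : ∀ (a : k) (v : Fin θ → k),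
      π (algebraMap k (FreeAlgebra k (Fin θ)) a + ∑ s, v s • FreeAlgebra.ι k s) = 0 →
      a = 0 ∧ v = 0)
    (hhopf : ∀ x, π x = 0 →
      TensorProduct.map π.toLinearMap π.toLinearMap (Δ x) = 0)
    (hGK : GKdim k B ≠ ⊤) :
    π (FreeAlgebra.ι k i * FreeAlgebra.ι k j
        - (Q i j : k) • (FreeAlgebra.ι k j * FreeAlgebra.ι k i)) = 0 := by
  classical
  by_contra hne
  have hΔ := isBraidedComul_of_mul hm2 hΔmul hΔone hΔgen
  have hQ := hqls i j hij
  have hs : (Q i j : k) * Q j i = 1 := by rw [← Units.val_mul, hQ, Units.val_one]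
  have hne' : π (FreeAlgebra.ι k j * FreeAlgebra.ι k i
      - (Q j i : k) • (FreeAlgebra.ι k i * FreeAlgebra.ι k j)) ≠ 0 := by
    refine fun h => hne ?_
    have h1 : FreeAlgebra.ι k i * FreeAlgebra.ι k j
        - (Q i j : k) • (FreeAlgebra.ι k j * FreeAlgebra.ι k i) =
        -(Q i j : k) • (FreeAlgebra.ι k j * FreeAlgebra.ι k i
          - (Q j i : k) • (FreeAlgebra.ι k i * FreeAlgebra.ι k j)) := by
      match_scalars
      · linear_combination -hs
      · ring
    rw [h1, map_smul, h, smul_zero]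
  set S : Finset B := Finset.univ.image fun t => π (FreeAlgebra.ι k t) with hS
  set U : Submodule k B := Submodule.span k (insert (1 : B) (S : Set B))
  have hU1 : 1 ≤ U := Submodule.one_le.2 (Submodule.subset_span (Set.mem_insert _ _))
  have hU (t : Fin θ) : π (FreeAlgebra.ι k t) ∈ U :=
    Submodule.subset_span (Set.mem_insert_of_mem _ (by simp [hS]))
  have hfin (n : ℕ) : Module.Finite k (U ^ n : Submodule k B) :=
    Module.Finite.iff_fg.2 ((Submodule.fg_span (S.finite_toSet.insert 1)).pow n)
  have hfil (n : ℕ) : FiniteDimensional k (quotDualFil π n) := by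
    obtain ⟨f, hf⟩ := exists_injective_quotDualFil hsurj hU1 hU n
    exact Module.Finite.of_injective f hf
  have hop {w : List (Fin θ)} (hw : coef k w ∈ quotDual π) :=
    leftConv_mem_filteredOps hΔ hhopf hw
  have hletter (t : Fin θ) := hop (coef_singleton_mem_quotDual hhom htriv t)
  have hvac : coef k [] ∈ quotDualFil π 0 := ⟨coef_nil_mem_quotDual hhom htriv, fun l hl => by
    rw [coef_word, if_neg (List.ne_nil_of_length_pos hl)]⟩
  obtain ⟨C, hC⟩ := (hΔ.hSystem hij hQ).hasLargeGrowth (monotone_quotDualFil π) hvac (hletter i)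
    (hletter j) (hop (coef_pair_mem_quotDual hhom htriv hΔ hhopf hij hne))
    (hop (coef_pair_mem_quotDual hhom htriv hΔ hhopf hij.symm hne'))
    (hΔ.hSystem hij.symm (hqls j i hij.symm)) hs (Units.ne_zero _) (Units.ne_zero _)
    (by simpa only [orderOf_units] using hord)
  refine hGK (GKdim_eq_top_of_two_pow_le S (C := C) fun L => (hC L).trans ?_)
  obtain ⟨f, hf⟩ := exists_injective_quotDualFil hsurj hU1 hU (C * (L * L))
  exact (LinearMap.finrank_le_finrank_of_injective hf).trans_eq Subspace.dual_finrank_eq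

end
end
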